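/- Let K be an algebraically closed field and λ ∈ K \ {0, 1}. Let A_5 be the algebra given by the quiver with two vertices 1, 2, a loop α at vertex 1, an arrow γ: 1 → 2 and an arrow β: 2 → 1, bound by the relations α² = γβ and βαγ = 0. Then A_5 has exactly 8 isomorphism classes of basic support τ-tilting modules. -/

import Mathlib

/- Formalization of statements from
   "Report on the finiteness of silting objects"
   by T. Aihara, T. Honma, K. Miyamoto, Q. Wang. -/

open CategoryTheory CategoryTheory.Limits

universe u v w

noncomputable section
namespace PaperSilting
/-! ### Module-theoretic notions.

We model right `Λ`-modules as left modules over the opposite ring; all the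
definitions below are stated for left modules over a ring `R` and are applied
with `R := Λᵐᵒᵖ`. -/

/-- The category of `R`-modules (in `Type 0`). -/
abbrev ModCat (R : Type) [Ring R] := ModuleCat.{0} R

variable {R : Type} [Ring R]

/-- The module object `M` is finitely generated. -/
def IsFGMod {R : Type} [Ring R] (M : ModCat R) : Prop := Module.Finite R M

/-- Indecomposable module object. -/
def IsIndecMod {R : Type} [Ring R] (M : ModCat R) : Prop :=
  ¬ IsZero M ∧ ∀ A B : ModCat R, Nonempty (M ≅ A ⊞ B) → IsZero A ∨ IsZero B

/-- `N` belongs to `add M`, i.e. `N` is a direct summand of a finite direct sum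
of copies of `M`. -/
def MemAddMod {R : Type} [Ring R] (N M : ModCat R) : Prop :=
  ∃ (k : ℕ) (g : N ⟶ ⨁ (fun _ : Fin k => M)) (h : (⨁ (fun _ : Fin k => M)) ⟶ N),
    g ≫ h = 𝟙 N

/-- A basic module: it has no direct summand of the form `N ⊕ N` with `N ≠ 0`. -/
def IsBasicMod {R : Type} [Ring R] (M : ModCat R) : Prop :=
  ∀ N X : ModCat R, Nonempty (M ≅ (N ⊞ N) ⊞ X) → IsZero N

/-- `M` is τ-rigid, i.e. `Hom(M, τM) = 0`: there is a projective presentation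
`P₁ → P₀ → M → 0` by finitely generated projectives such that
`Hom(P₀, M) → Hom(P₁, M)` is surjective (Adachi–Iyama–Reiten). -/
def IsTauRigidMod {R : Type} [Ring R] (M : ModCat R) : Prop :=
  ∃ (P₁ P₀ : ModCat R) (f : P₁ ⟶ P₀) (g : P₀ ⟶ M),
    Projective P₁ ∧ Projective P₀ ∧ IsFGMod P₁ ∧ IsFGMod P₀ ∧
    Function.Surjective g ∧ Function.Exact f g ∧
    ∀ h : P₁ ⟶ M, ∃ k : P₀ ⟶ M, f ≫ k = h

/-- A τ-rigid pair `(M, P)`: `M` is a τ-rigid module and `P` is a finitely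
generated projective with `Hom(P, M) = 0`. -/
def IsTauRigidPairMod {R : Type} [Ring R] (M P : ModCat R) : Prop :=
  IsFGMod M ∧ IsTauRigidMod M ∧ IsFGMod P ∧ Projective P ∧ ∀ f : P ⟶ M, f = 0

/-- `M` is a support τ-tilting module: `(M, P)` is a maximal τ-rigid pair for
some projective `P` (Adachi–Iyama–Reiten; equivalently, `M` is the `0`-th
cohomology of a two-term silting complex in `K^b(proj)`). -/
def IsSupportTauTiltingMod {R : Type} [Ring R] (M : ModCat R) : Prop :=
  ∃ P : ModCat R, IsTauRigidPairMod M P ∧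
    ∀ N Q : ModCat R, IsTauRigidPairMod (M ⊞ N) (P ⊞ Q) → MemAddMod N M ∧ MemAddMod Q P

/-- The ring `R` admits only finitely many basic support τ-tilting modules up
to isomorphism. -/
def IsTauTiltingFiniteRing (R : Type) [Ring R] : Prop :=
  ∃ (n : ℕ) (f : Fin n → ModCat R),
    ∀ M : ModCat R, IsSupportTauTiltingMod M → IsBasicMod M → ∃ i, Nonempty (M ≅ f i)

/-- The ring `R` admits only finitely many finitely generated indecomposable
modules up to isomorphism. -/
def IsRepFiniteRing (R : Type) [Ring R] : Prop :=
  ∃ (n : ℕ) (f : Fin n → ModCat R),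
    ∀ M : ModCat R, IsFGMod M → IsIndecMod M → ∃ i, Nonempty (M ≅ f i)

/-- `R` has exactly `n` isomorphism classes of basic support τ-tilting modules. -/
def SupportTauTiltingCount (R : Type) [Ring R] (n : ℕ) : Prop :=
  ∃ f : Fin n → ModCat R,
    (∀ i, IsSupportTauTiltingMod (f i) ∧ IsBasicMod (f i)) ∧
    (∀ i j, Nonempty (f i ≅ f j) → i = j) ∧
    (∀ M : ModCat R, IsSupportTauTiltingMod M → IsBasicMod M → ∃ i, Nonempty (M ≅ f i))

/-- An algebra `Λ` is τ-tilting-finite (with respect to right modules,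
i.e. left `Λᵐᵒᵖ`-modules). -/
def IsTauTiltingFinite (Λ : Type) [Ring Λ] : Prop := IsTauTiltingFiniteRing Λᵐᵒᵖ

/-- An algebra `Λ` is representation-finite (with respect to right modules). -/
def IsRepFinite (Λ : Type) [Ring Λ] : Prop := IsRepFiniteRing Λᵐᵒᵖ
/-- The defining relations of the algebra `A₅`, as relations on the free algebra on
the idempotents `e_1, …, e_2` and the arrows of its quiver. -/
def A5Rel (K : Type) [Field K] : FreeAlgebra K (Fin 5) → FreeAlgebra K (Fin 5) → Prop := fun u v =>
  (u, v) ∈ ([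
    (FreeAlgebra.ι K (0 : Fin 5) * FreeAlgebra.ι K (0 : Fin 5), FreeAlgebra.ι K (0 : Fin 5)),
    (FreeAlgebra.ι K (0 : Fin 5) * FreeAlgebra.ι K (1 : Fin 5), (0 : FreeAlgebra K (Fin 5))),
    (FreeAlgebra.ι K (1 : Fin 5) * FreeAlgebra.ι K (0 : Fin 5), (0 : FreeAlgebra K (Fin 5))),
    (FreeAlgebra.ι K (1 : Fin 5) * FreeAlgebra.ι K (1 : Fin 5), FreeAlgebra.ι K (1 : Fin 5)),
    (FreeAlgebra.ι K (0 : Fin 5) + FreeAlgebra.ι K (1 : Fin 5), 1),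
    (FreeAlgebra.ι K (2 : Fin 5), FreeAlgebra.ι K (0 : Fin 5) * FreeAlgebra.ι K (2 : Fin 5) * FreeAlgebra.ι K (0 : Fin 5)),
    (FreeAlgebra.ι K (3 : Fin 5), FreeAlgebra.ι K (0 : Fin 5) * FreeAlgebra.ι K (3 : Fin 5) * FreeAlgebra.ι K (1 : Fin 5)),
    (FreeAlgebra.ι K (4 : Fin 5), FreeAlgebra.ι K (1 : Fin 5) * FreeAlgebra.ι K (4 : Fin 5) * FreeAlgebra.ι K (0 : Fin 5)),
    (FreeAlgebra.ι K (2 : Fin 5) * FreeAlgebra.ι K (2 : Fin 5), FreeAlgebra.ι K (3 : Fin 5) * FreeAlgebra.ι K (4 : Fin 5)),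
    (FreeAlgebra.ι K (4 : Fin 5) * FreeAlgebra.ι K (2 : Fin 5) * FreeAlgebra.ι K (3 : Fin 5), (0 : FreeAlgebra K (Fin 5)))
  ] : List ((FreeAlgebra K (Fin 5)) × (FreeAlgebra K (Fin 5))))

/-- the algebra `A₅`, presented by quiver and relations. -/
def A5 (K : Type) [Field K] : Type := RingQuot (A5Rel K)

instance (K : Type) [Field K] : Ring (A5 K) :=
  inferInstanceAs (Ring (RingQuot (A5Rel K)))

instance (K : Type) [Field K] : Algebra K (A5 K) :=
  inferInstanceAs (Algebra K (RingQuot (A5Rel K)))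
/-- The opposite algebra. -/
abbrev Rg (K : Type) [Field K] : Type := (A5 K)ᵐᵒᵖ

section basics
variable (K : Type) [Field K]

/-- quotient map -/
def qmk : FreeAlgebra K (Fin 5) →ₐ[K] A5 K := RingQuot.mkAlgHom K (A5Rel K)

theorem qmk_surj : Function.Surjective (qmk K) := RingQuot.mkAlgHom_surjective K (A5Rel K)

theorem qmk_rel {x y : FreeAlgebra K (Fin 5)} (h : A5Rel K x y) : qmk K x = qmk K y :=
  RingQuot.mkAlgHom_rel K h

def e1 : Rg K := MulOpposite.op (qmk K (FreeAlgebra.ι K 0))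
def e2 : Rg K := MulOpposite.op (qmk K (FreeAlgebra.ι K 1))
def al : Rg K := MulOpposite.op (qmk K (FreeAlgebra.ι K 2))
def ga : Rg K := MulOpposite.op (qmk K (FreeAlgebra.ι K 3))
def be : Rg K := MulOpposite.op (qmk K (FreeAlgebra.ι K 4))

theorem e1e1 : e1 K * e1 K = e1 K := by
  have := qmk_rel K (x := FreeAlgebra.ι K 0 * FreeAlgebra.ι K 0) (y := FreeAlgebra.ι K 0) (by simp [A5Rel])
  rw [map_mul] at this
  exact congrArg MulOpposite.op this
theorem e2e1 : e2 K * e1 K = 0 := by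
  have := qmk_rel K (x := FreeAlgebra.ι K 0 * FreeAlgebra.ι K 1) (y := 0) (by simp [A5Rel])
  rw [map_mul, map_zero] at this
  exact congrArg MulOpposite.op this
theorem e1e2 : e1 K * e2 K = 0 := by
  have := qmk_rel K (x := FreeAlgebra.ι K 1 * FreeAlgebra.ι K 0) (y := 0) (by simp [A5Rel])
  rw [map_mul, map_zero] at this
  exact congrArg MulOpposite.op this
theorem e2e2 : e2 K * e2 K = e2 K := by
  have := qmk_rel K (x := FreeAlgebra.ι K 1 * FreeAlgebra.ι K 1) (y := FreeAlgebra.ι K 1) (by simp [A5Rel])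
  rw [map_mul] at this
  exact congrArg MulOpposite.op this
theorem e1_add_e2 : e1 K + e2 K = 1 := by
  have := qmk_rel K (x := FreeAlgebra.ι K 0 + FreeAlgebra.ι K 1) (y := 1) (by simp [A5Rel])
  rw [map_add, map_one] at this
  exact congrArg MulOpposite.op this
theorem al_eq : al K = e1 K * (al K * e1 K) := by
  have := qmk_rel K (x := FreeAlgebra.ι K 2) (y := FreeAlgebra.ι K 0 * FreeAlgebra.ι K 2 * FreeAlgebra.ι K 0) (by simp [A5Rel])
  rw [map_mul, map_mul] at this
  exact congrArg MulOpposite.op this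
theorem ga_eq : ga K = e2 K * (ga K * e1 K) := by
  have := qmk_rel K (x := FreeAlgebra.ι K 3) (y := FreeAlgebra.ι K 0 * FreeAlgebra.ι K 3 * FreeAlgebra.ι K 1) (by simp [A5Rel])
  rw [map_mul, map_mul] at this
  exact congrArg MulOpposite.op this
theorem be_eq : be K = e1 K * (be K * e2 K) := by
  have := qmk_rel K (x := FreeAlgebra.ι K 4) (y := FreeAlgebra.ι K 1 * FreeAlgebra.ι K 4 * FreeAlgebra.ι K 0) (by simp [A5Rel])
  rw [map_mul, map_mul] at this
  exact congrArg MulOpposite.op this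
theorem bega : be K * ga K = al K * al K := by
  have := qmk_rel K (x := FreeAlgebra.ι K 2 * FreeAlgebra.ι K 2) (y := FreeAlgebra.ι K 3 * FreeAlgebra.ι K 4) (by simp [A5Rel])
  rw [map_mul, map_mul] at this
  exact (congrArg MulOpposite.op this).symm
theorem gaalbe : ga K * (al K * be K) = 0 := by
  have := qmk_rel K (x := FreeAlgebra.ι K 4 * FreeAlgebra.ι K 2 * FreeAlgebra.ι K 3) (y := 0) (by simp [A5Rel])
  rw [map_mul, map_mul, map_zero] at this
  exact congrArg MulOpposite.op this

/-- induction over the generators -/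
theorem Rg_induction {P : Rg K → Prop} (hc : ∀ c : K, P (algebraMap K (Rg K) c))
    (h1 : P (e1 K)) (h2 : P (e2 K)) (ha : P (al K)) (hg : P (ga K)) (hb : P (be K))
    (hadd : ∀ x y, P x → P y → P (x + y)) (hmul : ∀ x y, P x → P y → P (x * y)) (r : Rg K) : P r := by
  obtain ⟨x, hx⟩ := qmk_surj K r.unop
  have : r = MulOpposite.op (qmk K x) := by rw [hx]; rfl
  rw [this]
  clear this hx
  induction x using FreeAlgebra.induction with
  | grade0 c => rw [AlgHom.commutes]; exact hc c
  | grade1 i => fin_cases i <;> assumption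
  | mul a b h h' => rw [map_mul, MulOpposite.op_mul]; exact hmul _ _ h' h
  | add a b h h' => rw [map_add, MulOpposite.op_add]; exact hadd _ _ h h'

end basics

section acts
variable {K : Type} [Field K] {M : Type} [AddCommGroup M] [Module (Rg K) M] (m : M)

@[simp] theorem s_e1e1 : e1 K • e1 K • m = e1 K • m := by rw [smul_smul, e1e1]
@[simp] theorem s_e2e1 : e2 K • e1 K • m = 0 := by rw [smul_smul, e2e1, zero_smul]
@[simp] theorem s_e1e2 : e1 K • e2 K • m = 0 := by rw [smul_smul, e1e2, zero_smul]
@[simp] theorem s_e2e2 : e2 K • e2 K • m = e2 K • m := by rw [smul_smul, e2e2]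
theorem s_one : e1 K • m + e2 K • m = m := by rw [← add_smul, e1_add_e2, one_smul]
theorem s_al : al K • m = e1 K • al K • e1 K • m := by rw [smul_smul, smul_smul, mul_assoc, ← al_eq]
theorem s_ga : ga K • m = e2 K • ga K • e1 K • m := by rw [smul_smul, smul_smul, mul_assoc, ← ga_eq]
theorem s_be : be K • m = e1 K • be K • e2 K • m := by rw [smul_smul, smul_smul, mul_assoc, ← be_eq]
@[simp] theorem s_e1al : e1 K • al K • m = al K • m := by rw [s_al, s_e1e1]
@[simp] theorem s_ale1 : al K • e1 K • m = al K • m := by rw [s_al, s_e1e1, ← s_al]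
@[simp] theorem s_e2al : e2 K • al K • m = 0 := by rw [s_al, s_e2e1]
@[simp] theorem s_ale2 : al K • e2 K • m = 0 := by rw [s_al, s_e1e2, smul_zero, smul_zero]
@[simp] theorem s_e2ga : e2 K • ga K • m = ga K • m := by rw [s_ga, s_e2e2]
@[simp] theorem s_gae1 : ga K • e1 K • m = ga K • m := by rw [s_ga, s_e1e1, ← s_ga]
@[simp] theorem s_e1ga : e1 K • ga K • m = 0 := by rw [s_ga, s_e1e2]
@[simp] theorem s_gae2 : ga K • e2 K • m = 0 := by rw [s_ga, s_e1e2, smul_zero, smul_zero]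
@[simp] theorem s_e1be : e1 K • be K • m = be K • m := by rw [s_be, s_e1e1]
@[simp] theorem s_bee2 : be K • e2 K • m = be K • m := by rw [s_be, s_e2e2, ← s_be]
@[simp] theorem s_e2be : e2 K • be K • m = 0 := by rw [s_be, s_e2e1]
@[simp] theorem s_bee1 : be K • e1 K • m = 0 := by rw [s_be, s_e2e1, smul_zero, smul_zero]
@[simp] theorem s_alga : al K • ga K • m = 0 := by rw [← s_e2ga, s_ale2]
@[simp] theorem s_gaga : ga K • ga K • m = 0 := by rw [← s_e2ga m, s_gae2]
@[simp] theorem s_bebe : be K • be K • m = 0 := by rw [← s_e1be m, s_bee1]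
@[simp] theorem s_beal : be K • al K • m = 0 := by rw [← s_e1al, s_bee1]
@[simp] theorem s_bega : be K • ga K • m = al K • al K • m := by rw [smul_smul, bega, ← smul_smul]
@[simp] theorem s_gaalbe : ga K • al K • be K • m = 0 := by rw [smul_smul, smul_smul, mul_assoc, gaalbe, zero_smul]
@[simp] theorem s_alalalbe : al K • al K • al K • be K • m = 0 := by
  rw [← s_bega, s_gaalbe, smul_zero]
@[simp] theorem s_gaalalal : ga K • al K • al K • al K • m = 0 := by
  rw [← s_bega (M := M) m, s_gaalbe]
@[simp] theorem s_al5 : al K • al K • al K • al K • al K • m = 0 := by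
  rw [← s_bega (M := M) m, s_alalalbe]

variable (K) in
/-- Nakayama -/
theorem nakayama (h : ∀ m : M, ∃ x y z : M, m = al K • x + ga K • y + be K • z) (m : M) : m = 0 := by
  have h1 : ∀ m : M, ∃ m', e1 K • m = al K • m' := by
    intro m
    obtain ⟨x, y, z, rfl⟩ := h m
    obtain ⟨x', y', z', hz⟩ := h z
    refine ⟨x + al K • y', ?_⟩
    have : be K • z = al K • al K • y' := by
      rw [hz]; simp
    simp [this]
  have h2 : ∀ m : M, e1 K • m = 0 := by
    intro m
    obtain ⟨m1, e⟩ := h1 m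
    obtain ⟨m2, e'⟩ := h1 m1
    obtain ⟨m3, e''⟩ := h1 m2
    obtain ⟨m4, e3⟩ := h1 m3
    obtain ⟨m5, e4⟩ := h1 m4
    rw [e, ← s_ale1, e', ← s_ale1 (M := M) m2, e'', ← s_ale1 (M := M) m3, e3, ← s_ale1 (M := M) m4, e4, s_al5]
  have ha : ∀ x : M, al K • x = 0 := fun x => by rw [← s_ale1, h2, smul_zero]
  have hg : ∀ x : M, ga K • x = 0 := fun x => by rw [← s_gae1, h2, smul_zero]
  obtain ⟨x, y, z, rfl⟩ := h m
  obtain ⟨x', y', z', rfl⟩ := h z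
  simp [ha, hg]

theorem surj_of_top {N : Type} [AddCommGroup N] [Module (Rg K) N] (f : N →ₗ[Rg K] M)
    (h : ∀ m : M, ∃ n : N, ∃ x y z : M, m = f n + (al K • x + ga K • y + be K • z)) :
    Function.Surjective f := by
  rw [← LinearMap.range_eq_top, eq_top_iff]
  intro m _
  rw [← Submodule.Quotient.mk_eq_zero]
  apply nakayama K
  intro q
  obtain ⟨m, rfl⟩ := Submodule.Quotient.mk_surjective _ q
  obtain ⟨n, x, y, z, rfl⟩ := h m
  refine ⟨Submodule.Quotient.mk x, Submodule.Quotient.mk y, Submodule.Quotient.mk z, ?_⟩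
  rw [Submodule.Quotient.mk_add, (Submodule.Quotient.mk_eq_zero _).2 (LinearMap.mem_range_self f n), zero_add]
  rfl

variable [Module K M] [IsScalarTower K (Rg K) M]
  {N : Type} [AddCommGroup N] [Module (Rg K) N] [Module K N] [IsScalarTower K (Rg K) N]

/-- An `Rg K`-linear map from a `K`-linear map commuting with the generators. -/
def mkHom (f : M →ₗ[K] N) (h1 : ∀ m, f (e1 K • m) = e1 K • f m) (ha : ∀ m, f (al K • m) = al K • f m)
    (hg : ∀ m, f (ga K • m) = ga K • f m) (hb : ∀ m, f (be K • m) = be K • f m) : M →ₗ[Rg K] N where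
  toFun := f
  map_add' := map_add f
  map_smul' r := by
    show ∀ m, f (r • m) = r • f m
    induction r using Rg_induction K with
    | hc c => intro m; rw [algebraMap_smul, map_smul, algebraMap_smul]
    | h1 => exact h1
    | h2 =>
      intro m
      have h : ∀ {L : Type} [AddCommGroup L] [Module (Rg K) L] (l : L), e2 K • l = l - e1 K • l := by
        intro L _ _ l
        rw [eq_sub_iff_add_eq, add_comm, s_one]
      rw [h, h, map_sub, h1]
    | ha => exact ha
    | hg => exact hg
    | hb => exact hb
    | hadd x y hx hy => intro m; rw [add_smul, map_add, hx, hy, add_smul]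
    | hmul x y hx hy => intro m; rw [mul_smul, hx, hy, mul_smul]

@[simp] theorem mkHom_apply (f : M →ₗ[K] N) (h1 ha hg hb) (m : M) :
  mkHom (K := K) f h1 ha hg hb m = f m := rfl

theorem hom_K_smul (f : M →ₗ[Rg K] N) (c : K) (m : M) : f (c • m) = c • f m := by
  rw [← algebraMap_smul (Rg K) c m, map_smul, algebraMap_smul]

end acts

/-- A combinatorial basis for a module: vertices and partial maps (written as preimages). -/
structure Shape (n : ℕ) where
  v : Fin n → Bool
  a : Fin n → Option (Fin n)
  g : Fin n → Option (Fin n)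
  b : Fin n → Option (Fin n)
  ha : ∀ i j, a i = some j → v i = true ∧ v j = true
  hg : ∀ i j, g i = some j → v i = false ∧ v j = true
  hb : ∀ i j, b i = some j → v i = true ∧ v j = false
  h1 : ∀ i, (a i).bind a = (b i).bind g
  h2 : ∀ i, ((g i).bind a).bind b = none

/-- The representation with combinatorial basis `S` and multiplicity space `V`. -/
structure Rep {n : ℕ} (S : Shape n) (V : Type) : Type where
  c : Fin n → V

section rep0
variable {n : ℕ} {S : Shape n} {V : Type}

@[ext] theorem Rep.ext' {x y : Rep S V} (h : ∀ i, x.c i = y.c i) : x = y := by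
  cases x; cases y; congr; exact funext h

variable (S V) in
def repEquiv : Rep S V ≃ (Fin n → V) := ⟨fun x => x.c, fun x => ⟨x⟩, fun _ => rfl, fun _ => rfl⟩

end rep0

section rep
variable {n : ℕ} (S : Shape n) (K : Type) [Field K] (V : Type) [AddCommGroup V] [Module K V]

instance : AddCommGroup (Rep S V) := (repEquiv S V).addCommGroup
instance : Module K (Rep S V) := (repEquiv S V).module K

variable {S V}
@[simp] theorem Rep.add_apply (x y : Rep S V) (i : Fin n) : (x + y).c i = x.c i + y.c i := rfl
@[simp] theorem Rep.sub_apply (x y : Rep S V) (i : Fin n) : (x - y).c i = x.c i - y.c i := rfl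
@[simp] theorem Rep.neg_apply (x : Rep S V) (i : Fin n) : (-x).c i = - x.c i := rfl
@[simp] theorem Rep.zero_apply (i : Fin n) : (0 : Rep S V).c i = 0 := rfl
variable {K} in
@[simp] theorem Rep.ksmul_apply (c : K) (x : Rep S V) (i : Fin n) : (c • x).c i = c • x.c i := rfl
variable (S V)

def repKEquiv : Rep S V ≃ₗ[K] (Fin n → V) where
  toFun x := x.c
  invFun x := ⟨x⟩
  map_add' _ _ := rfl
  map_smul' _ _ := rfl
  left_inv _ := rfl
  right_inv _ := rfl

instance [Module.Finite K V] : Module.Finite K (Rep S V) := Module.Finite.equiv (repKEquiv S K V).symm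

/-- pull back coordinates along a partial map -/
def pull (p : Fin n → Option (Fin n)) : Module.End K (Rep S V) where
  toFun x := ⟨fun i => (p i).elim 0 x.c⟩
  map_add' x y := by
    ext i
    show (p i).elim 0 (x + y).c = (p i).elim 0 x.c + (p i).elim 0 y.c
    cases p i <;> simp
  map_smul' c x := by
    ext i
    show (p i).elim 0 (c • x).c = c • (p i).elim 0 x.c
    cases p i <;> simp

@[simp] theorem pull_apply (p : Fin n → Option (Fin n)) (x : Rep S V) (i : Fin n) :
  (pull S K V p x).c i = (p i).elim 0 x.c := rfl

theorem pull_pull (p q : Fin n → Option (Fin n)) (x : Rep S V) :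
    pull S K V p (pull S K V q x) = pull S K V (fun i => (p i).bind q) x := by
  ext i
  simp only [pull_apply]
  cases p i <;> simp

def pe1 : Fin n → Option (Fin n) := fun i => if S.v i then some i else none
def pe2 : Fin n → Option (Fin n) := fun i => if S.v i then none else some i

/-- action of generators -/
def act : Fin 5 → (Module.End K (Rep S V))ᵐᵒᵖ := fun i => MulOpposite.op (pull S K V (![pe1 S, pe2 S, S.a, S.g, S.b] i))

def actHom : A5 K →ₐ[K] (Module.End K (Rep S V))ᵐᵒᵖ :=
  RingQuot.liftAlgHom K (s := A5Rel K) ⟨FreeAlgebra.lift K (act S K V), by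
    intro x y h
    simp only [A5Rel, List.mem_cons, Prod.mk.injEq, List.not_mem_nil, or_false] at h
    have key : ∀ p q : Fin n → Option (Fin n), (∀ i, p i = q i) → pull S K V p = pull S K V q := by
      intro p q h; rw [funext h]
    have key2 : ∀ p q : Fin n → Option (Fin n), pull S K V p * pull S K V q = pull S K V (fun i => (p i).bind q) := by
      intro p q; ext1 x; exact pull_pull S K V p q x
    have key0 : ∀ p : Fin n → Option (Fin n), (∀ i, p i = none) → pull S K V p = 0 := by
      intro p hp; ext x i; simp [hp i]
    rcases h with ⟨rfl, rfl⟩ | ⟨rfl, rfl⟩ | ⟨rfl, rfl⟩ | ⟨rfl, rfl⟩ | ⟨rfl, rfl⟩ | ⟨rfl, rfl⟩ | ⟨rfl, rfl⟩ | ⟨rfl, rfl⟩ | ⟨rfl, rfl⟩ | ⟨rfl, rfl⟩ <;>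
    simp only [map_mul, map_add, map_zero, map_one, FreeAlgebra.lift_ι_apply, act] <;>
    simp only [← MulOpposite.op_mul, ← MulOpposite.op_add, ← MulOpposite.op_zero, ← MulOpposite.op_one, MulOpposite.op_inj, key2,
      Matrix.cons_val]
    · apply key; intro i; cases h : S.v i <;> simp [pe1, h]
    · apply key0; intro i; cases h : S.v i <;> simp [pe1, pe2, h]
    · apply key0; intro i; cases h : S.v i <;> simp [pe1, pe2, h]
    · apply key; intro i; cases h : S.v i <;> simp [pe2, h]
    · ext x i; cases h : S.v i <;> simp [pe1, pe2, h]
    · apply key; intro i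
      cases h : S.v i <;> cases h' : S.a i with
      | none => simp [pe1, h, h']
      | some j => have := S.ha i j h'; simp_all [pe1]
    · apply key; intro i
      cases h : S.v i <;> cases h' : S.g i with
      | none => simp [pe1, pe2, h, h']
      | some j => have := S.hg i j h'; simp_all [pe1, pe2]
    · apply key; intro i
      cases h : S.v i <;> cases h' : S.b i with
      | none => simp [pe1, pe2, h, h']
      | some j => have := S.hb i j h'; simp_all [pe1, pe2]
    · exact key _ _ S.h1
    · apply key0
      intro i
      rw [← S.h2 i, Option.bind_assoc]⟩

def actR : Rg K →ₐ[K] Module.End K (Rep S V) := AlgHom.opComm (actHom S K V)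

instance : Module (Rg K) (Rep S V) := Module.compHom (Rep S V) (actR S K V).toRingHom

theorem smul_def' (r : Rg K) (x : Rep S V) : r • x = actR S K V r x := rfl

instance : IsScalarTower K (Rg K) (Rep S V) where
  smul_assoc c r x := by
    rw [smul_def', smul_def', map_smul]; rfl

theorem actR_gen (i : Fin 5) : actR S K V (MulOpposite.op (qmk K (FreeAlgebra.ι K i))) =
    pull S K V (![pe1 S, pe2 S, S.a, S.g, S.b] i) := by
  have : actHom S K V (qmk K (FreeAlgebra.ι K i)) = act S K V i := by
    refine (RingQuot.liftAlgHom_mkAlgHom_apply K _ _ _).trans ?_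
    simp
  exact congrArg MulOpposite.unop this

variable {S V}
theorem Rep.e1_c (x : Rep S V) (i : Fin n) : (e1 K • x).c i = if S.v i then x.c i else 0 := by
  rw [smul_def', e1, actR_gen]
  cases h : S.v i <;> simp [pe1, h]
theorem Rep.e2_c (x : Rep S V) (i : Fin n) : (e2 K • x).c i = if S.v i then 0 else x.c i := by
  rw [smul_def', e2, actR_gen]
  cases h : S.v i <;> simp [pe2, h]
theorem Rep.al_c (x : Rep S V) (i : Fin n) : (al K • x).c i = (S.a i).elim 0 x.c := by
  rw [smul_def', al, actR_gen]
  simp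
theorem Rep.ga_c (x : Rep S V) (i : Fin n) : (ga K • x).c i = (S.g i).elim 0 x.c := by
  rw [smul_def', ga, actR_gen]
  simp
theorem Rep.be_c (x : Rep S V) (i : Fin n) : (be K • x).c i = (S.b i).elim 0 x.c := by
  rw [smul_def', be, actR_gen]
  simp

variable {K} {V' : Type} [AddCommGroup V'] [Module K V']
variable (S) in
def Rep.map (f : V →ₗ[K] V') : Rep S V →ₗ[Rg K] Rep S V' :=
  mkHom (K := K) { toFun := fun x => ⟨fun i => f (x.c i)⟩
                   map_add' := fun x y => by ext i; simp
                   map_smul' := fun c x => by ext i; simp }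
    (fun m => by ext i; simp only [LinearMap.coe_mk, AddHom.coe_mk, Rep.e1_c]; split <;> simp)
    (fun m => by ext i; simp only [LinearMap.coe_mk, AddHom.coe_mk, Rep.al_c]; cases S.a i <;> simp)
    (fun m => by ext i; simp only [LinearMap.coe_mk, AddHom.coe_mk, Rep.ga_c]; cases S.g i <;> simp)
    (fun m => by ext i; simp only [LinearMap.coe_mk, AddHom.coe_mk, Rep.be_c]; cases S.b i <;> simp)

@[simp] theorem Rep.map_c (f : V →ₗ[K] V') (x : Rep S V) (i : Fin n) : (Rep.map S f x).c i = f (x.c i) := rfl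

variable (S) in
def Rep.congr (f : V ≃ₗ[K] V') : Rep S V ≃ₗ[Rg K] Rep S V' :=
  LinearEquiv.ofLinearMap (Rep.map S f.toLinearMap) (Rep.map S f.symm.toLinearMap)
    (by ext x i; simp) (by ext x i; simp)

end rep

def P1s : Shape 8 where
  v := ![true, true, true, true, true, false, false, false]
  a := ![none, some 0, some 1, some 2, some 3, none, none, none]
  g := ![none, none, none, none, none, some 0, some 1, some 2]
  b := ![none, none, some 5, some 6, some 7, none, none, none]
  ha := by decide
  hg := by decide
  hb := by decide
  h1 := by decide
  h2 := by decide

def P2s : Shape 6 where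
  v := ![false, false, false, true, true, true]
  a := ![none, none, none, none, some 3, some 4]
  g := ![none, some 3, some 5, none, none, none]
  b := ![none, none, none, some 0, none, some 1]
  ha := by decide
  hg := by decide
  hb := by decide
  h1 := by decide
  h2 := by decide

def Xs : Shape 3 where
  v := ![true, true, false]
  a := ![none, some 0, none]
  g := ![none, none, some 1]
  b := ![none, none, none]
  ha := by decide
  hg := by decide
  hb := by decide
  h1 := by decide
  h2 := by decide

def Ys : Shape 2 where
  v := ![true, true]
  a := ![none, some 0]
  g := ![none, none]
  b := ![none, none]
  ha := by decide
  hg := by decide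
  hb := by decide
  h1 := by decide
  h2 := by decide

def Vs : Shape 6 where
  v := ![false, false, false, true, true, true]
  a := ![none, none, none, none, some 3, some 4]
  g := ![none, none, some 3, none, none, none]
  b := ![none, none, none, some 1, some 0, some 2]
  ha := by decide
  hg := by decide
  hb := by decide
  h1 := by decide
  h2 := by decide

def Us : Shape 1 where
  v := ![false]
  a := ![none]
  g := ![none]
  b := ![none]
  ha := by decide
  hg := by decide
  hb := by decide
  h1 := by decide
  h2 := by decide

theorem P1s_v : P1s.v = ![true, true, true, true, true, false, false, false] := rfl
theorem P1s_a : P1s.a = ![none, some 0, some 1, some 2, some 3, none, none, none] := rfl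
theorem P1s_g : P1s.g = ![none, none, none, none, none, some 0, some 1, some 2] := rfl
theorem P1s_b : P1s.b = ![none, none, some 5, some 6, some 7, none, none, none] := rfl
theorem P2s_v : P2s.v = ![false, false, false, true, true, true] := rfl
theorem P2s_a : P2s.a = ![none, none, none, none, some 3, some 4] := rfl
theorem P2s_g : P2s.g = ![none, some 3, some 5, none, none, none] := rfl
theorem P2s_b : P2s.b = ![none, none, none, some 0, none, some 1] := rfl
theorem Xs_v : Xs.v = ![true, true, false] := rfl
theorem Xs_a : Xs.a = ![none, some 0, none] := rfl
theorem Xs_g : Xs.g = ![none, none, some 1] := rfl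
theorem Xs_b : Xs.b = ![none, none, none] := rfl
theorem Ys_v : Ys.v = ![true, true] := rfl
theorem Ys_a : Ys.a = ![none, some 0] := rfl
theorem Ys_g : Ys.g = ![none, none] := rfl
theorem Ys_b : Ys.b = ![none, none] := rfl
theorem Vs_v : Vs.v = ![false, false, false, true, true, true] := rfl
theorem Vs_a : Vs.a = ![none, none, none, none, some 3, some 4] := rfl
theorem Vs_g : Vs.g = ![none, none, some 3, none, none, none] := rfl
theorem Vs_b : Vs.b = ![none, none, none, some 1, some 0, some 2] := rfl
theorem Us_v : Us.v = ![false] := rfl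
theorem Us_a : Us.a = ![none] := rfl
theorem Us_g : Us.g = ![none] := rfl
theorem Us_b : Us.b = ![none] := rfl
attribute [simp] P1s_v P1s_a P1s_g P1s_b P2s_v P2s_a P2s_g P2s_b Xs_v Xs_a Xs_g Xs_b Ys_v Ys_a Ys_g Ys_b Vs_v Vs_a Vs_g Vs_b Us_v Us_a Us_g Us_b

section lifts
variable {K : Type} [Field K] {V W : Type} [AddCommGroup V] [Module K V] [AddCommGroup W] [Module K W]
  {M : Type} [AddCommGroup M] [Module (Rg K) M] [Module K M] [IsScalarTower K (Rg K) M]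

theorem ga_of_e2 {m : M} (h : e2 K • m = m) : ga K • m = 0 := by rw [← h, s_gae2]
theorem al_of_e2 {m : M} (h : e2 K • m = m) : al K • m = 0 := by rw [← h, s_ale2]
theorem e1_of_e2 {m : M} (h : e2 K • m = m) : e1 K • m = 0 := by rw [← h, s_e1e2]
theorem be_of_e1 {m : M} (h : e1 K • m = m) : be K • m = 0 := by rw [← h, s_bee1]
theorem e2_of_e1 {m : M} (h : e1 K • m = m) : e2 K • m = 0 := by rw [← h, s_e2e1]

def lift1 (φ : V →ₗ[K] M) (h : ∀ v, e1 K • φ v = φ v) : Rep P1s V →ₗ[Rg K] M :=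
  mkHom (K := K) { toFun := fun x => φ (x.c 0) + al K • φ (x.c 1) + al K • al K • φ (x.c 2) + al K • al K • al K • φ (x.c 3)
                    + al K • al K • al K • al K • φ (x.c 4) + ga K • φ (x.c 5) + ga K • al K • φ (x.c 6)
                    + ga K • al K • al K • φ (x.c 7)
                   map_add' := fun x y => by simp; abel
                   map_smul' := fun c x => by simp [smul_add, smul_comm c] }
    (fun m => by simp [Rep.e1_c, h])
    (fun m => by simp [Rep.al_c, h])
    (fun m => by simp [Rep.ga_c, h])
    (fun m => by simp [Rep.be_c, h, be_of_e1 (h _)])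

theorem lift1_apply (φ : V →ₗ[K] M) (h : ∀ v, e1 K • φ v = φ v) (x : Rep P1s V) :
  lift1 φ h x = φ (x.c 0) + al K • φ (x.c 1) + al K • al K • φ (x.c 2) + al K • al K • al K • φ (x.c 3)
                    + al K • al K • al K • al K • φ (x.c 4) + ga K • φ (x.c 5) + ga K • al K • φ (x.c 6)
                    + ga K • al K • al K • φ (x.c 7) := rfl

def lift2 (φ : V →ₗ[K] M) (h : ∀ v, e2 K • φ v = φ v) : Rep P2s V →ₗ[Rg K] M :=
  mkHom (K := K) { toFun := fun x => φ (x.c 0) + ga K • be K • φ (x.c 1) + ga K • al K • al K • be K • φ (x.c 2)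
                    + be K • φ (x.c 3) + al K • be K • φ (x.c 4) + al K • al K • be K • φ (x.c 5)
                   map_add' := fun x y => by simp; abel
                   map_smul' := fun c x => by simp [smul_add, smul_comm c] }
    (fun m => by simp [Rep.e1_c, h, e1_of_e2 (h _)])
    (fun m => by simp [Rep.al_c, h, al_of_e2 (h _)])
    (fun m => by simp [Rep.ga_c, h, ga_of_e2 (h _)])
    (fun m => by simp [Rep.be_c, h])

theorem lift2_apply (φ : V →ₗ[K] M) (h : ∀ v, e2 K • φ v = φ v) (x : Rep P2s V) :
  lift2 φ h x = φ (x.c 0) + ga K • be K • φ (x.c 1) + ga K • al K • al K • be K • φ (x.c 2)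
                    + be K • φ (x.c 3) + al K • be K • φ (x.c 4) + al K • al K • be K • φ (x.c 5) := rfl

def liftX (φ : V →ₗ[K] M) (h : ∀ v, e1 K • φ v = φ v) (hg : ∀ v, ga K • φ v = 0) : Rep Xs V →ₗ[Rg K] M :=
  mkHom (K := K) { toFun := fun x => φ (x.c 0) + al K • φ (x.c 1) + ga K • al K • φ (x.c 2)
                   map_add' := fun x y => by simp; abel
                   map_smul' := fun c x => by simp [smul_add, smul_comm c] }
    (fun m => by simp [Rep.e1_c, h])
    (fun m => by simp [Rep.al_c, h]; rw [← s_bega]; simp [hg])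
    (fun m => by simp [Rep.ga_c, h, hg])
    (fun m => by
      have : ∀ v, al K • al K • φ v = 0 := fun v => by rw [← s_bega, hg, smul_zero]
      simp [Rep.be_c, h, be_of_e1 (h _), this])

theorem liftX_apply (φ : V →ₗ[K] M) (h : ∀ v, e1 K • φ v = φ v) (hg : ∀ v, ga K • φ v = 0) (x : Rep Xs V) :
  liftX φ h hg x = φ (x.c 0) + al K • φ (x.c 1) + ga K • al K • φ (x.c 2) := rfl

def liftY (φ : V →ₗ[K] M) (h : ∀ v, e1 K • φ v = φ v) (hg : ∀ v, ga K • φ v = 0)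
    (hga : ∀ v, ga K • al K • φ v = 0) : Rep Ys V →ₗ[Rg K] M :=
  mkHom (K := K) { toFun := fun x => φ (x.c 0) + al K • φ (x.c 1)
                   map_add' := fun x y => by simp; abel
                   map_smul' := fun c x => by simp [smul_add, smul_comm c] }
    (fun m => by simp [Rep.e1_c, h])
    (fun m => by simp [Rep.al_c, h]; rw [← s_bega]; simp [hg])
    (fun m => by simp [Rep.ga_c, h, hg, hga])
    (fun m => by simp [Rep.be_c, h, be_of_e1 (h _)])

theorem liftY_apply (φ : V →ₗ[K] M) (h : ∀ v, e1 K • φ v = φ v) (hg : ∀ v, ga K • φ v = 0)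
    (hga : ∀ v, ga K • al K • φ v = 0) (x : Rep Ys V) :
  liftY φ h hg hga x = φ (x.c 0) + al K • φ (x.c 1) := rfl

def liftU (φ : V →ₗ[K] M) (h : ∀ v, e2 K • φ v = φ v) (hb : ∀ v, be K • φ v = 0) : Rep Us V →ₗ[Rg K] M :=
  mkHom (K := K) { toFun := fun x => φ (x.c 0)
                   map_add' := fun x y => by simp
                   map_smul' := fun c x => by simp }
    (fun m => by simp [Rep.e1_c, h, e1_of_e2 (h _)])
    (fun m => by simp [Rep.al_c, h, al_of_e2 (h _)])
    (fun m => by simp [Rep.ga_c, h, ga_of_e2 (h _)])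
    (fun m => by simp [Rep.be_c, h, hb])

theorem liftU_apply (φ : V →ₗ[K] M) (h : ∀ v, e2 K • φ v = φ v) (hb : ∀ v, be K • φ v = 0) (x : Rep Us V) :
  liftU φ h hb x = φ (x.c 0) := rfl

def liftV (φ ψ : V →ₗ[K] M) (h : ∀ v, e2 K • φ v = φ v) (h' : ∀ v, e2 K • ψ v = ψ v)
    (hb : ∀ v, be K • φ v = al K • be K • ψ v) : Rep Vs V →ₗ[Rg K] M :=
  mkHom (K := K) { toFun := fun x => φ (x.c 0) + ψ (x.c 1) + ga K • be K • ψ (x.c 2)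
                    + be K • ψ (x.c 3) + al K • be K • ψ (x.c 4) + al K • al K • be K • ψ (x.c 5)
                   map_add' := fun x y => by simp; abel
                   map_smul' := fun c x => by simp [smul_add, smul_comm c] }
    (fun m => by simp [Rep.e1_c, h, h', e1_of_e2 (h _), e1_of_e2 (h' _)])
    (fun m => by simp [Rep.al_c, al_of_e2 (h _), al_of_e2 (h' _)])
    (fun m => by
      have : ∀ v, ga K • al K • al K • be K • ψ v = 0 := fun v => by
        rw [← hb, s_gaalbe]
      simp [Rep.ga_c, ga_of_e2 (h _), ga_of_e2 (h' _), this])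
    (fun m => by simp [Rep.be_c, hb]; abel)

theorem liftV_apply (φ ψ : V →ₗ[K] M) (h : ∀ v, e2 K • φ v = φ v) (h' : ∀ v, e2 K • ψ v = ψ v)
    (hb : ∀ v, be K • φ v = al K • be K • ψ v) (x : Rep Vs V) :
  liftV φ ψ h h' hb x = φ (x.c 0) + ψ (x.c 1) + ga K • be K • ψ (x.c 2)
                    + be K • ψ (x.c 3) + al K • be K • ψ (x.c 4) + al K • al K • be K • ψ (x.c 5) := rfl

end lifts

section gens
variable {K : Type} [Field K] {n : ℕ} (S : Shape n) {V W : Type} [AddCommGroup V] [Module K V] [AddCommGroup W] [Module K W]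
  {M : Type} [AddCommGroup M] [Module (Rg K) M] [Module K M] [IsScalarTower K (Rg K) M]
  {N : Type} [AddCommGroup N] [Module (Rg K) N] [Module K N] [IsScalarTower K (Rg K) N]

def sg {n : ℕ} (S : Shape n) (K : Type) [Field K] (V : Type) [AddCommGroup V] [Module K V] (i : Fin n) : V →ₗ[K] Rep S V := (repKEquiv S K V).symm.toLinearMap ∘ₗ LinearMap.single K (fun _ => V) i

@[simp] theorem sg_c (i j : Fin n) (v : V) : (sg S K V i v).c j = if j = i then v else 0 := by
  show (Pi.single i v : Fin n → V) j = _
  rw [Pi.single_apply]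

variable (M) in
/-- action as a `K`-linear map -/
def actK (r : Rg K) : M →ₗ[K] M where
  toFun m := r • m
  map_add' := smul_add r
  map_smul' c m := smul_comm r c m

@[simp] theorem actK_apply (r : Rg K) (m : M) : actK M r m = r • m := rfl

theorem e1_sg1 (v : V) : e1 K • sg P1s K V 0 v = sg P1s K V 0 v := by
  ext i; fin_cases i <;> simp [Rep.e1_c]
theorem e2_sg2 (v : V) : e2 K • sg P2s K V 0 v = sg P2s K V 0 v := by
  ext i; fin_cases i <;> simp [Rep.e2_c]

theorem rep1_eq (x : Rep P1s V) : x = lift1 (sg P1s K V 0) e1_sg1 x := by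
  rw [lift1_apply]
  ext i; fin_cases i <;> simp [Rep.al_c, Rep.ga_c]
theorem rep2_eq (x : Rep P2s V) : x = lift2 (sg P2s K V 0) e2_sg2 x := by
  rw [lift2_apply]
  ext i; fin_cases i <;> simp [Rep.al_c, Rep.ga_c, Rep.be_c]

theorem hom1_eq (f : Rep P1s V →ₗ[Rg K] M) (x : Rep P1s V) :
  f x = lift1 (f.restrictScalars K ∘ₗ sg P1s K V 0) (fun v => by
    simp only [LinearMap.comp_apply, LinearMap.restrictScalars_apply]; rw [← map_smul, e1_sg1]) x := by
  conv_lhs => rw [rep1_eq (K := K) x]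
  simp [lift1_apply]

theorem hom2_eq (f : Rep P2s V →ₗ[Rg K] M) (x : Rep P2s V) :
  f x = lift2 (f.restrictScalars K ∘ₗ sg P2s K V 0) (fun v => by
    simp only [LinearMap.comp_apply, LinearMap.restrictScalars_apply]; rw [← map_smul, e2_sg2]) x := by
  conv_lhs => rw [rep2_eq (K := K) x]
  simp [lift2_apply]

theorem hom1_ext {f g : Rep P1s V →ₗ[Rg K] M} (h : ∀ v, f (sg P1s K V 0 v) = g (sg P1s K V 0 v)) : f = g := by
  ext x; rw [hom1_eq f, hom1_eq g]; simp [lift1_apply, h]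
theorem hom2_ext {f g : Rep P2s V →ₗ[Rg K] M} (h : ∀ v, f (sg P2s K V 0 v) = g (sg P2s K V 0 v)) : f = g := by
  ext x; rw [hom2_eq f, hom2_eq g]; simp [lift2_apply, h]

@[simp] theorem lift1_sg (φ : V →ₗ[K] M) (h) (v : V) : lift1 φ h (sg P1s K V 0 v) = φ v := by
  simp [lift1_apply]
@[simp] theorem lift2_sg (φ : V →ₗ[K] M) (h) (v : V) : lift2 φ h (sg P2s K V 0 v) = φ v := by
  simp [lift2_apply]

theorem split1 (f : N →ₗ[Rg K] Rep P1s V) (hf : Function.Surjective f) : ∃ h, f ∘ₗ h = LinearMap.id := by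
  obtain ⟨s, hs⟩ := LinearMap.exists_rightInverse_of_surjective (f.restrictScalars K) (LinearMap.range_eq_top.2 hf)
  have hh : ∀ v, e1 K • (actK _ (e1 K) ∘ₗ s ∘ₗ sg P1s K V 0) v = (actK _ (e1 K) ∘ₗ s ∘ₗ sg P1s K V 0) v := fun v => s_e1e1 _
  refine ⟨lift1 _ hh, hom1_ext fun v => ?_⟩
  have : f (s (sg P1s K V 0 v)) = sg P1s K V 0 v := LinearMap.congr_fun hs _
  simp [this, e1_sg1]
instance proj1 : Module.Projective (Rg K) (Rep P1s V) :=
  Module.Projective.of_lifting_property'' (R := Rg K) fun f hf => split1 f hf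

theorem split2 (f : N →ₗ[Rg K] Rep P2s V) (hf : Function.Surjective f) : ∃ h, f ∘ₗ h = LinearMap.id := by
  obtain ⟨s, hs⟩ := LinearMap.exists_rightInverse_of_surjective (f.restrictScalars K) (LinearMap.range_eq_top.2 hf)
  have hh : ∀ v, e2 K • (actK _ (e2 K) ∘ₗ s ∘ₗ sg P2s K V 0) v = (actK _ (e2 K) ∘ₗ s ∘ₗ sg P2s K V 0) v := fun v => s_e2e2 _
  refine ⟨lift2 _ hh, hom2_ext fun v => ?_⟩
  have : f (s (sg P2s K V 0 v)) = sg P2s K V 0 v := LinearMap.congr_fun hs _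
  simp [this, e2_sg2]
instance proj2 : Module.Projective (Rg K) (Rep P2s V) :=
  Module.Projective.of_lifting_property'' (R := Rg K) fun f hf => split2 f hf

instance finRg : Module.Finite K (Rg K) := by
  have hh1 : ∀ v, e1 K • (actK _ (e1 K) ∘ₗ Algebra.linearMap K (Rg K)) v = (actK _ (e1 K) ∘ₗ Algebra.linearMap K (Rg K)) v := fun v => s_e1e1 _
  have hh2 : ∀ v, e2 K • (actK _ (e2 K) ∘ₗ Algebra.linearMap K (Rg K)) v = (actK _ (e2 K) ∘ₗ Algebra.linearMap K (Rg K)) v := fun v => s_e2e2 _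
  let f : Rep P1s K × Rep P2s K →ₗ[Rg K] Rg K :=
    LinearMap.coprod (lift1 _ hh1)
      (lift2 _ hh2)
  refine Module.Finite.of_surjective (f.restrictScalars K) fun r => ?_
  have h : f (sg P1s K K 0 1, sg P2s K K 0 1) = 1 := by
    rw [LinearMap.coprod_apply, lift1_sg, lift2_sg]
    simp [e1_add_e2]
  refine ⟨r • (sg P1s K K 0 1, sg P2s K K 0 1), ?_⟩
  rw [LinearMap.restrictScalars_apply, map_smul, h, smul_eq_mul, mul_one]

instance repFinR [Module.Finite K V] : Module.Finite (Rg K) (Rep S V) :=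
  Module.Finite.of_restrictScalars_finite K (Rg K) _

variable (K) in
theorem finK_of_fin [Module.Finite (Rg K) M] : Module.Finite K M := Module.Finite.trans (Rg K) M

theorem repK_finrank [Module.Finite K V] : Module.finrank K (Rep S V) = n * Module.finrank K V := by
  rw [(repKEquiv S K V).finrank_eq, Module.finrank_pi_fintype]; simp

end gens

section cover
variable {K : Type} [Field K]
  {M : Type} [AddCommGroup M] [Module (Rg K) M]
  {N : Type} [AddCommGroup N] [Module (Rg K) N]

variable (K) in
/-- membership in the radical -/
def inJ (m : M) : Prop := ∃ x y z : M, m = al K • x + ga K • y + be K • z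

theorem inJ_add {m m' : M} (h : inJ K m) (h' : inJ K m') : inJ K (m + m') := by
  obtain ⟨x, y, z, rfl⟩ := h
  obtain ⟨x', y', z', rfl⟩ := h'
  exact ⟨x + x', y + y', z + z', by simp only [smul_add]; abel⟩
theorem inJ_neg {m : M} (h : inJ K m) : inJ K (-m) := by
  obtain ⟨x, y, z, rfl⟩ := h
  exact ⟨-x, -y, -z, by simp only [smul_neg]; abel⟩
theorem inJ_sub {m m' : M} (h : inJ K m) (h' : inJ K m') : inJ K (m - m') := by
  rw [sub_eq_add_neg]; exact inJ_add h (inJ_neg h')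
theorem inJ_map {m : M} (h : inJ K m) (f : M →ₗ[Rg K] N) : inJ K (f m) := by
  obtain ⟨x, y, z, rfl⟩ := h
  exact ⟨f x, f y, f z, by simp⟩
theorem inJ_al (m : M) : inJ K (al K • m) := ⟨m, 0, 0, by simp⟩
theorem inJ_ga (m : M) : inJ K (ga K • m) := ⟨0, m, 0, by simp⟩
theorem inJ_be (m : M) : inJ K (be K • m) := ⟨0, 0, m, by simp⟩
theorem inJ_zero : inJ K (0 : M) := ⟨0, 0, 0, by simp⟩
theorem inJ_e1 {m : M} (h : inJ K m) : inJ K (e1 K • m) := by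
  obtain ⟨x, y, z, rfl⟩ := h
  exact ⟨x, 0, z, by simp⟩
theorem inJ_e2 {m : M} (h : inJ K m) : inJ K (e2 K • m) := by
  obtain ⟨x, y, z, rfl⟩ := h
  exact ⟨0, y, 0, by simp⟩
theorem inJ_e1' {m : M} (h : inJ K m) (hm : e1 K • m = m) : ∃ x z, m = al K • x + be K • z := by
  obtain ⟨x, y, z, h⟩ := h
  exact ⟨x, z, by rw [← hm, h]; simp⟩
theorem inJ_e2' {m : M} (h : inJ K m) (hm : e2 K • m = m) : ∃ y, m = ga K • y := by
  obtain ⟨x, y, z, h⟩ := h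
  exact ⟨y, by rw [← hm, h]; simp⟩

theorem surj_of_J (f : N →ₗ[Rg K] M) (h : ∀ m : M, ∃ n : N, inJ K (m - f n)) : Function.Surjective f := by
  apply surj_of_top
  intro m
  obtain ⟨n, x, y, z, h⟩ := h m
  exact ⟨n, x, y, z, by rw [← h]; abel⟩

variable {V1 V2 W1 W2 : Type} [AddCommGroup V1] [Module K V1] [AddCommGroup V2] [Module K V2]
  [AddCommGroup W1] [Module K W1] [AddCommGroup W2] [Module K W2]

variable (K) in
theorem rep1_J (x : Rep P1s V1) : inJ K (x - sg P1s K V1 0 (x.c 0)) := by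
  have := rep1_eq (K := K) x
  rw [lift1_apply] at this
  have h : x - sg P1s K V1 0 (x.c 0) = _ - _ := congrArg₂ (· - ·) this rfl
  rw [h]
  simp only [add_assoc, add_sub_cancel_left]
  exact inJ_add (inJ_al _) (inJ_add (inJ_al _) (inJ_add (inJ_al _) (inJ_add (inJ_al _) (inJ_add (inJ_ga _) (inJ_add (inJ_ga _) (inJ_ga _))))))

variable (K) in
theorem rep2_J (x : Rep P2s V2) : inJ K (x - sg P2s K V2 0 (x.c 0)) := by
  have := rep2_eq (K := K) x
  rw [lift2_apply] at this
  have h : x - sg P2s K V2 0 (x.c 0) = _ - _ := congrArg₂ (· - ·) this rfl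
  rw [h]
  simp only [add_assoc, add_sub_cancel_left]
  exact inJ_add (inJ_ga _) (inJ_add (inJ_ga _) (inJ_add (inJ_be _) (inJ_add (inJ_al _) (inJ_al _))))

theorem inJ_prod {a : M} {b : N} (h : inJ K a) (h' : inJ K b) : inJ K (a, b) := by
  have := inJ_add (inJ_map h (LinearMap.inl (Rg K) M N)) (inJ_map h' (LinearMap.inr (Rg K) M N))
  simpa using this

variable (K) in
theorem rep_J (x : Rep P1s V1 × Rep P2s V2) : inJ K (x - (sg P1s K V1 0 (x.1.c 0), sg P2s K V2 0 (x.2.c 0))) :=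
  inJ_prod (rep1_J K x.1) (rep2_J K x.2)

theorem J_rep1 {x : Rep P1s V1} (h : inJ K x) : x.c 0 = 0 := by
  obtain ⟨a, b, c, rfl⟩ := h
  simp [Rep.al_c, Rep.ga_c, Rep.be_c]
theorem J_rep2 {x : Rep P2s V1} (h : inJ K x) : x.c 0 = 0 := by
  obtain ⟨a, b, c, rfl⟩ := h
  simp [Rep.al_c, Rep.ga_c, Rep.be_c]

structure IsCover (π : Rep P1s V1 × Rep P2s V2 →ₗ[Rg K] M) : Prop where
  surj : Function.Surjective π
  top : ∀ x, inJ K (π x) → x.1.c 0 = 0 ∧ x.2.c 0 = 0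

theorem IsCover.inJ' {π : Rep P1s V1 × Rep P2s V2 →ₗ[Rg K] M} (h : IsCover π) {x} (hx : inJ K (π x)) : inJ K x := by
  have := rep_J K x
  rw [(h.top x hx).1, (h.top x hx).2, map_zero, map_zero] at this
  rwa [show (0, 0) = (0 : Rep P1s V1 × Rep P2s V2) from rfl, sub_zero] at this

variable [Module K M] [IsScalarTower K (Rg K) M]

variable (K M) in
theorem exists_cover : ∃ (V1 V2 : Submodule K M) (π : Rep P1s V1 × Rep P2s V2 →ₗ[Rg K] M), IsCover π := by
  let J1 : Submodule K M := LinearMap.range (actK M (al K)) ⊔ LinearMap.range (actK M (be K))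
  let J2 : Submodule K M := LinearMap.range (actK M (ga K))
  let E1 : Submodule K M := LinearMap.range (actK M (e1 K))
  let E2 : Submodule K M := LinearMap.range (actK M (e2 K))
  have h1 : J1 ≤ E1 := sup_le (by rintro _ ⟨x, rfl⟩; exact ⟨al K • x, by simp⟩) (by rintro _ ⟨x, rfl⟩; exact ⟨be K • x, by simp⟩)
  have h2 : J2 ≤ E2 := (by rintro _ ⟨x, rfl⟩; exact ⟨ga K • x, by simp⟩)
  obtain ⟨C1, hC1⟩ := Submodule.exists_isCompl J1
  obtain ⟨C2, hC2⟩ := Submodule.exists_isCompl J2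
  have hE1 : J1 ⊔ (C1 ⊓ E1) = E1 := by rw [← sup_inf_assoc_of_le _ h1, hC1.sup_eq_top, top_inf_eq]
  have hE2 : J2 ⊔ (C2 ⊓ E2) = E2 := by rw [← sup_inf_assoc_of_le _ h2, hC2.sup_eq_top, top_inf_eq]
  have hs1 : ∀ v : ↥(C1 ⊓ E1), e1 K • (C1 ⊓ E1).subtype v = (C1 ⊓ E1).subtype v := by
    rintro ⟨_, _, ⟨x, rfl⟩⟩; simp
  have hs2 : ∀ v : ↥(C2 ⊓ E2), e2 K • (C2 ⊓ E2).subtype v = (C2 ⊓ E2).subtype v := by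
    rintro ⟨_, _, ⟨x, rfl⟩⟩; simp
  refine ⟨C1 ⊓ E1, C2 ⊓ E2, LinearMap.coprod (lift1 _ hs1) (lift2 _ hs2), ?_, ?_⟩
  · apply surj_of_J
    intro m
    have m1 : e1 K • m ∈ J1 ⊔ (C1 ⊓ E1) := by rw [hE1]; exact ⟨m, rfl⟩
    have m2 : e2 K • m ∈ J2 ⊔ (C2 ⊓ E2) := by rw [hE2]; exact ⟨m, rfl⟩
    obtain ⟨j1, hj1, v1, hv1, e⟩ := Submodule.mem_sup.1 m1
    obtain ⟨j2, hj2, v2, hv2, e'⟩ := Submodule.mem_sup.1 m2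
    refine ⟨(sg P1s K _ 0 ⟨v1, hv1⟩, sg P2s K _ 0 ⟨v2, hv2⟩), ?_⟩
    rw [LinearMap.coprod_apply, lift1_sg, lift2_sg, ← s_one (K := K) m, ← e, ← e']
    obtain ⟨_, ⟨a, rfl⟩, _, ⟨b, rfl⟩, rfl⟩ := Submodule.mem_sup.1 hj1
    obtain ⟨c, rfl⟩ := hj2
    refine ⟨a, c, b, ?_⟩
    simp only [Submodule.subtype_apply, actK_apply]
    abel
  · intro x hx
    have h3 := inJ_sub hx (inJ_map (rep_J K x) (LinearMap.coprod (lift1 _ hs1) (lift2 _ hs2)))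
    rw [map_sub, sub_sub_cancel, LinearMap.coprod_apply, lift1_sg, lift2_sg] at h3
    constructor
    · have h4 := inJ_e1 h3
      rw [smul_add, hs1, e1_of_e2 (hs2 _), add_zero] at h4
      obtain ⟨y, z, h5⟩ := inJ_e1' h4 (hs1 _)
      have h6 : ((x.1.c 0 : ↥(C1 ⊓ E1)) : M) ∈ J1 ⊓ C1 := by
        refine ⟨?_, (x.1.c 0).2.1⟩
        show (C1 ⊓ E1).subtype (x.1.c 0) ∈ _
        rw [h5]
        exact Submodule.add_mem_sup ⟨y, rfl⟩ ⟨z, rfl⟩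
      rw [hC1.inf_eq_bot] at h6
      exact Subtype.ext h6
    · have h4 := inJ_e2 h3
      rw [smul_add, hs2, e2_of_e1 (hs1 _), zero_add] at h4
      obtain ⟨y, h5⟩ := inJ_e2' h4 (hs2 _)
      have h6 : ((x.2.c 0 : ↥(C2 ⊓ E2)) : M) ∈ J2 ⊓ C2 := by
        refine ⟨?_, (x.2.c 0).2.1⟩
        show (C2 ⊓ E2).subtype (x.2.c 0) ∈ _
        rw [h5]
        exact ⟨y, rfl⟩
      rw [hC2.inf_eq_bot] at h6
      exact Subtype.ext h6

variable (K M) in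
theorem proj_classify [Module.Projective (Rg K) M] :
    ∃ V1 V2 : Submodule K M, Nonempty (M ≃ₗ[Rg K] Rep P1s V1 × Rep P2s V2) := by
  obtain ⟨V1, V2, π, h⟩ := exists_cover K M
  obtain ⟨s, hs⟩ := Module.projective_lifting_property π LinearMap.id h.surj
  have hs' : ∀ x, π (s x) = x := fun x => LinearMap.congr_fun hs x
  refine ⟨V1, V2, ⟨LinearEquiv.ofBijective s ⟨fun a b hab => by rw [← hs' a, hab, hs'], ?_⟩⟩⟩
  apply surj_of_J
  intro x
  refine ⟨π x, h.inJ' ?_⟩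
  rw [map_sub, hs', sub_self]
  exact inJ_zero

end cover

theorem transfer {K : Type} [Field K] {M : Type} [AddCommGroup M] [Module (Rg K) M] {P0 P1 F0 F1 : Type} [AddCommGroup P0] [Module (Rg K) P0] [AddCommGroup P1] [Module (Rg K) P1]
    [AddCommGroup F0] [Module (Rg K) F0] [AddCommGroup F1] [Module (Rg K) F1]
    [Module.Projective (Rg K) P0] [Module.Projective (Rg K) P1] [Module.Projective (Rg K) F0] [Module.Projective (Rg K) F1]
    [IsNoetherian (Rg K) F1] (f : P1 →ₗ[Rg K] P0) (g : P0 →ₗ[Rg K] M) (hg : Function.Surjective g)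
    (hfg : Function.Exact f g) (rig : ∀ h : P1 →ₗ[Rg K] M, ∃ k : P0 →ₗ[Rg K] M, k ∘ₗ f = h)
    (f' : F1 →ₗ[Rg K] F0) (π : F0 →ₗ[Rg K] M) (hπ : Function.Surjective π)
    (hfπ : Function.Exact f' π) (hJ0 : ∀ x, π x = 0 → inJ K x) (hJ1 : ∀ x, f' x = 0 → inJ K x)
    (h : F1 →ₗ[Rg K] M) : ∃ k : F0 →ₗ[Rg K] M, k ∘ₗ f' = h := by
  obtain ⟨φ0, hφ0⟩ := Module.projective_lifting_property g π hg
  obtain ⟨ψ0, hψ0⟩ := Module.projective_lifting_property π g hπ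
  have e1 : ∀ x, g (φ0 x) = π x := fun x => LinearMap.congr_fun hφ0 x
  have e2 : ∀ x, π (ψ0 x) = g x := fun x => LinearMap.congr_fun hψ0 x
  obtain ⟨φ1, hφ1⟩ := Module.projective_lifting_property f.rangeRestrict
    (LinearMap.codRestrict (LinearMap.range f) (φ0 ∘ₗ f') (fun x => (hfg _).1 (by
      rw [LinearMap.comp_apply, e1]; exact (hfπ _).2 ⟨x, rfl⟩))) f.surjective_rangeRestrict
  obtain ⟨ψ1, hψ1⟩ := Module.projective_lifting_property f'.rangeRestrict
    (LinearMap.codRestrict (LinearMap.range f') (ψ0 ∘ₗ f) (fun x => (hfπ _).1 (by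
      rw [LinearMap.comp_apply, e2]; exact (hfg _).2 ⟨x, rfl⟩))) f'.surjective_rangeRestrict
  have e3 : ∀ x, f (φ1 x) = φ0 (f' x) := fun x => congrArg Subtype.val (LinearMap.congr_fun hφ1 x)
  have e4 : ∀ x, f' (ψ1 x) = ψ0 (f x) := fun x => congrArg Subtype.val (LinearMap.congr_fun hψ1 x)
  have hu : Function.Surjective (ψ0 ∘ₗ φ0) := by
    apply surj_of_J
    intro x
    exact ⟨x, hJ0 _ (by rw [map_sub, LinearMap.comp_apply, e2, e1, sub_self])⟩
  have hθ : Function.Surjective (ψ1 ∘ₗ φ1) := by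
    apply surj_of_J
    intro y
    obtain ⟨x, hx⟩ := hu (f' y)
    have : π x = 0 := by
      rw [← e1, ← e2, show ψ0 (φ0 x) = f' y from hx]; exact (hfπ _).2 ⟨y, rfl⟩
    obtain ⟨n, rfl⟩ := (hfπ _).1 this
    refine ⟨n, hJ1 _ ?_⟩
    rw [map_sub, LinearMap.comp_apply, e4, e3, ← hx, LinearMap.comp_apply, sub_self]
  let θ := LinearEquiv.ofBijective _ (IsNoetherian.bijective_of_surjective_endomorphism _ hθ)
  obtain ⟨k, hk⟩ := rig (h ∘ₗ θ.symm.toLinearMap ∘ₗ ψ1)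
  refine ⟨k ∘ₗ φ0, ?_⟩
  ext x
  have := LinearMap.congr_fun hk (φ1 x)
  simp only [LinearMap.comp_apply, LinearEquiv.coe_coe, e3] at this
  rw [LinearMap.comp_apply, LinearMap.comp_apply, this]
  congr 1
  exact θ.symm_apply_apply x

/-- unbundled τ-rigidity -/
def TRL (K : Type) [Field K] (M : Type) [AddCommGroup M] [Module (Rg K) M] : Prop :=
  ∃ (P₁ P₀ : ModuleCat.{0} (Rg K)) (f : P₁ →ₗ[Rg K] P₀) (g : P₀ →ₗ[Rg K] M),
    Module.Projective (Rg K) P₁ ∧ Module.Projective (Rg K) P₀ ∧ Module.Finite (Rg K) P₁ ∧ Module.Finite (Rg K) P₀ ∧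
    Function.Surjective g ∧ Function.Exact f g ∧
    ∀ h : P₁ →ₗ[Rg K] M, ∃ k : P₀ →ₗ[Rg K] M, k ∘ₗ f = h

section mp
variable {K : Type} [Field K]
  {M : Type} [AddCommGroup M] [Module (Rg K) M]

theorem of_cover (K : Type) [Field K] (M : Type) [AddCommGroup M] [Module (Rg K) M] [Module K M] [IsScalarTower K (Rg K) M] [Module.Finite K M] {C : Prop}
    (H : ∀ (V1 V2 : Type) [AddCommGroup V1] [Module K V1] [AddCommGroup V2] [Module K V2]
  [Module.Finite K V1] [Module.Finite K V2]
  (π : Rep P1s V1 × Rep P2s V2 →ₗ[Rg K] M), IsCover π → C) : C := by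
  obtain ⟨V1, V2, π, hπ⟩ := exists_cover K M
  exact H V1 V2 π hπ

theorem of_minpres [Module K M] [IsScalarTower K (Rg K) M] [Module.Finite K M] (h : TRL K M) {C : Prop}
    (H : ∀ (V1 V2 W1 W2 : Type) [AddCommGroup V1] [Module K V1] [AddCommGroup V2] [Module K V2]
  [AddCommGroup W1] [Module K W1] [AddCommGroup W2] [Module K W2]
  [Module.Finite K V1] [Module.Finite K V2] [Module.Finite K W1] [Module.Finite K W2]
  (π : Rep P1s V1 × Rep P2s V2 →ₗ[Rg K] M) (f : Rep P1s W1 × Rep P2s W2 →ₗ[Rg K] Rep P1s V1 × Rep P2s V2),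
  IsCover π → Function.Exact f π → (∀ x, f x = 0 → inJ K x) →
  (∀ h : Rep P1s W1 × Rep P2s W2 →ₗ[Rg K] M, ∃ k : Rep P1s V1 × Rep P2s V2 →ₗ[Rg K] M, k ∘ₗ f = h) → C) : C := by
  obtain ⟨Q1, Q0, f, g, p1, p0, fi1, fi0, hg, hfg, rig⟩ := h
  refine of_cover K M ?_
  intro V1 V2 _ _ _ _ _ _ π hπ
  haveI : Module.Finite K (LinearMap.ker π) :=
    Module.Finite.of_injective ((LinearMap.ker π).subtype.restrictScalars K) Subtype.val_injective
  refine of_cover K (LinearMap.ker π) ?_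
  intro W1 W2 _ _ _ _ _ _ ρ hρ
  have ex : Function.Exact ((LinearMap.ker π).subtype ∘ₗ ρ) π := by
    intro x
    constructor
    · intro hx
      obtain ⟨y, hy⟩ := hρ.surj ⟨x, hx⟩
      exact ⟨y, by rw [LinearMap.comp_apply, hy]; rfl⟩
    · rintro ⟨y, rfl⟩
      exact (ρ y).2
  have hJ0 : ∀ x, π x = 0 → inJ K x := fun x hx => hπ.inJ' (by rw [hx]; exact inJ_zero)
  have hJ1 : ∀ x, ((LinearMap.ker π).subtype ∘ₗ ρ) x = 0 → inJ K x := fun x hx =>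
    hρ.inJ' (by rw [show ρ x = 0 from Subtype.ext hx]; exact inJ_zero)
  haveI : IsNoetherian (Rg K) (Rep P1s W1 × Rep P2s W2) := isNoetherian_of_tower K inferInstance
  exact H V1 V2 W1 W2 π _ hπ ex hJ1
    (fun h => transfer f g hg hfg rig _ π hπ.surj ex hJ0 hJ1 h)

variable {n m : ℕ}
variable (K M) in
def Chamber (S : Shape n) (S' : Shape m) : Prop :=
  ∃ a b : ℕ, Nonempty (M ≃ₗ[Rg K] Rep S (Fin a → K) × Rep S' (Fin b → K))

variable {V V' : Type} [AddCommGroup V] [Module K V] [AddCommGroup V'] [Module K V']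

def finE (K V : Type) [Field K] [AddCommGroup V] [Module K V] [Module.Finite K V] : V ≃ₗ[K] (Fin (Module.finrank K V) → K) :=
  (Module.finBasis K V).equivFun

theorem chamber_of {S : Shape n} {S' : Shape m} [Module.Finite K V] [Module.Finite K V']
    (e : M ≃ₗ[Rg K] Rep S V × Rep S' V') : Chamber K M S S' :=
  ⟨_, _, ⟨e.trans (LinearEquiv.prodCongr (Rep.congr S (finE K V)) (Rep.congr S' (finE K V')))⟩⟩

theorem chamber_of_bij {S : Shape n} {S' : Shape m} [Module.Finite K V] [Module.Finite K V']
    (e : Rep S V × Rep S' V' →ₗ[Rg K] M) (hs : Function.Surjective e) (hi : ∀ x, e x = 0 → x = 0) : Chamber K M S S' :=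
  chamber_of (LinearEquiv.ofBijective e ⟨(injective_iff_map_eq_zero e).2 hi, hs⟩).symm

instance {n : ℕ} {S : Shape n} [Subsingleton V] : Subsingleton (Rep S V) := ⟨fun x y => Rep.ext' fun i => Subsingleton.elim _ _⟩

theorem exists_dual {v : V} (hv : v ≠ 0) : ∃ ξ : V →ₗ[K] K, ξ v = 1 := by
  obtain ⟨ξ, h⟩ := Module.Projective.exists_dual_ne_zero K hv
  exact ⟨(ξ v)⁻¹ • ξ, by simp [h]⟩

end mp

section caseii
variable {K : Type} [Field K] {V W M : Type} [AddCommGroup V] [Module K V] [AddCommGroup W] [Module K W]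
  [AddCommGroup M] [Module (Rg K) M]

/-- coordinate as linear map -/
def crd {n : ℕ} (S : Shape n) (K : Type) [Field K] (V : Type) [AddCommGroup V] [Module K V] (i : Fin n) : Rep S V →ₗ[K] V where
  toFun x := x.c i
  map_add' _ _ := rfl
  map_smul' _ _ := rfl
@[simp] theorem crd_apply {n : ℕ} (S : Shape n) (i : Fin n) (x : Rep S V) : crd S K V i x = x.c i := rfl

theorem f21_coords (f : Rep P2s W →ₗ[Rg K] Rep P1s V) : ∃ F0 F1 F2 : W →ₗ[K] V, ∀ y,
    (f y).c 0 = 0 ∧ (f y).c 1 = 0 ∧ (f y).c 2 = F0 (y.c 3) ∧ (f y).c 3 = F1 (y.c 3) + F0 (y.c 4) ∧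
    (f y).c 4 = F2 (y.c 3) + F1 (y.c 4) + F0 (y.c 5) ∧ (f y).c 5 = F0 (y.c 0) ∧ (f y).c 6 = F1 (y.c 0) ∧
    (f y).c 7 = F2 (y.c 0) + F0 (y.c 1) := by
  refine ⟨crd P1s K V 5 ∘ₗ f.restrictScalars K ∘ₗ sg P2s K W 0, crd P1s K V 6 ∘ₗ f.restrictScalars K ∘ₗ sg P2s K W 0,
    crd P1s K V 7 ∘ₗ f.restrictScalars K ∘ₗ sg P2s K W 0, fun y => ?_⟩
  have h : ∀ w, e1 K • f (sg P2s K W 0 w) = 0 := fun w => by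
    rw [← map_smul, e1_of_e2 (e2_sg2 w), map_zero]
  have h' : ∀ w i, (e1 K • f (sg P2s K W 0 w)).c i = 0 := fun w i => by rw [h]; rfl
  have h0 := fun w => h' w 0
  have h1 := fun w => h' w 1
  have h2 := fun w => h' w 2
  have h3 := fun w => h' w 3
  have h4 := fun w => h' w 4
  simp [Rep.e1_c] at h0 h1 h2 h3 h4
  rw [hom2_eq f y, lift2_apply]
  simp [Rep.al_c, Rep.be_c, Rep.ga_c, h0, h1, h2, h3, h4]

/-- the element with coordinates (a, b, c) at 0,1,2 -/
def uhat (F0 F1 F2 : W →ₗ[K] V) : W →ₗ[K] Rep P1s V :=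
  sg P1s K V 0 ∘ₗ F0 + sg P1s K V 1 ∘ₗ F1 + sg P1s K V 2 ∘ₗ F2

theorem e1_uhat (F0 F1 F2 : W →ₗ[K] V) (w : W) : e1 K • uhat F0 F1 F2 w = uhat F0 F1 F2 w := by
  ext i; fin_cases i <;> simp [Rep.e1_c, uhat]

variable [Module K M] [IsScalarTower K (Rg K) M] [Module.Finite K V] [Module.Finite K W]

set_option maxHeartbeats 4000000 in
theorem case_ii (π : Rep P1s V →ₗ[Rg K] M) (f : Rep P2s W →ₗ[Rg K] Rep P1s V) (hs : Function.Surjective π)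
    (hex : Function.Exact f π) (rig : ∀ h : Rep P2s W →ₗ[Rg K] M, ∃ k : Rep P1s V →ₗ[Rg K] M, k ∘ₗ f = h) :
    Chamber K M P1s Xs ∨ Chamber K M Xs Ys := by
  obtain ⟨F0, F1, F2, hF⟩ := f21_coords f
  have hga : ∀ w, ga K • uhat F0 F1 F2 w = f (sg P2s K W 0 w) := by
    intro w
    have := hF (sg P2s K W 0 w)
    ext i; fin_cases i <;> simp [Rep.ga_c, uhat, this]
  let φ : W →ₗ[K] M := π.restrictScalars K ∘ₗ uhat F0 F1 F2
  have φe : ∀ w, e1 K • φ w = φ w := fun w => by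
    show e1 K • π _ = π _; rw [← map_smul, e1_uhat]
  have φg : ∀ w, ga K • φ w = 0 := fun w => by
    show ga K • π _ = _; rw [← map_smul, hga]; exact (hex _).2 ⟨_, rfl⟩
  by_cases hinj : Function.Injective F0
  · left
    obtain ⟨V', hV'⟩ := Submodule.exists_isCompl (LinearMap.range F0)
    have dis : ∀ w (b : V'), F0 w + b = 0 → w = 0 ∧ b = 0 := by
      intro w b h
      have h1 : (b : V) ∈ LinearMap.range F0 ⊓ V' := ⟨⟨-w, by rw [map_neg]; exact neg_eq_of_add_eq_zero_right h⟩, b.2⟩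
      rw [hV'.inf_eq_bot] at h1
      have hb : (b : V) = 0 := h1
      rw [hb, add_zero] at h
      exact ⟨hinj (by rw [h, map_zero]), Subtype.ext hb⟩
    have dis2 : ∀ w (b : V'), (b : V) = F0 w → w = 0 ∧ b = 0 := by
      intro w b h
      have := dis (-w) b (by rw [h]; simp)
      simpa using this
    refine chamber_of_bij (LinearMap.coprod (π ∘ₗ Rep.map P1s V'.subtype) (liftX φ φe φg)) ?_ ?_
    · apply surj_of_J
      intro m
      obtain ⟨x, rfl⟩ := hs m
      have : x.c 0 ∈ LinearMap.range F0 ⊔ V' := by rw [hV'.sup_eq_top]; trivial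
      obtain ⟨_, ⟨w, rfl⟩, v, hv, e⟩ := Submodule.mem_sup.1 this
      refine ⟨(sg P1s K _ 0 ⟨v, hv⟩, sg Xs K _ 0 w), ?_⟩
      have : LinearMap.coprod (π ∘ₗ Rep.map P1s V'.subtype) (liftX φ φe φg) (sg P1s K _ 0 ⟨v, hv⟩, sg Xs K _ 0 w)
          = π (Rep.map P1s V'.subtype (sg P1s K _ 0 ⟨v, hv⟩) + uhat F0 F1 F2 w) := by
        rw [LinearMap.coprod_apply, liftX_apply]
        simp [φ]
      rw [this, ← map_sub]
      apply inJ_map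
      have := rep1_J K (x - (Rep.map P1s V'.subtype (sg P1s K _ 0 ⟨v, hv⟩) + uhat F0 F1 F2 w))
      simpa [uhat, ← e, add_comm] using this
    · rintro ⟨b, a⟩ h
      have h1 : π (Rep.map P1s V'.subtype b + (uhat F0 F1 F2 (a.c 0) + al K • uhat F0 F1 F2 (a.c 1) + ga K • al K • uhat F0 F1 F2 (a.c 2))) = 0 := by
        rw [← h, LinearMap.coprod_apply, liftX_apply]
        simp [φ]
      obtain ⟨y, hy⟩ := (hex _).1 h1
      have hc := hF y
      rw [hy] at hc
      simp [uhat, Rep.al_c, Rep.ga_c] at hc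
      obtain ⟨c0, c1, c2, c3, c4, c5, c6, c7⟩ := hc
      obtain ⟨a0, b0⟩ := dis (a.c 0) (b.c 0) (by rw [← c0]; abel)
      obtain ⟨a1, b1⟩ := dis (a.c 1) (b.c 1) (by rw [← c1, a0]; simp; abel)
      obtain ⟨y0, b5⟩ := dis2 _ _ c5
      obtain ⟨a2, b6⟩ := dis (a.c 2) (b.c 6) (by rw [y0, map_zero] at c6; rw [← c6]; abel)
      obtain ⟨y1, b7⟩ := dis2 (y.c 1) (b.c 7) (by simpa [y0, a2] using c7)
      obtain ⟨y3, b2⟩ := dis2 (y.c 3) (b.c 2) (by simpa [a0, a1, a2] using c2)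
      obtain ⟨y4, b3⟩ := dis2 (y.c 4) (b.c 3) (by simpa [a0, a1, a2, y3] using c3)
      obtain ⟨y5, b4⟩ := dis2 (y.c 5) (b.c 4) (by simpa [a0, a1, a2, y3, y4] using c4)
      refine Prod.ext (Rep.ext' fun i => ?_) (Rep.ext' fun i => ?_) <;> fin_cases i
      exacts [b0, b1, b2, b3, b4, b5, b6, b7, a0, a1, a2]
  · right
    have hsurj : Function.Surjective F0 := by
      intro v
      by_contra hv
      have : ∃ w, F0 w = 0 ∧ w ≠ 0 := by
        by_contra hc
        push Not at hc
        exact hinj ((injective_iff_map_eq_zero F0).2 hc)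
      obtain ⟨w, hw, hw0⟩ := this
      obtain ⟨ξ, hξ⟩ := exists_dual (K := K) hw0
      have hh : ∀ w', e2 K • (ξ.smulRight (π (ga K • sg P1s K V 0 v))) w' = (ξ.smulRight (π (ga K • sg P1s K V 0 v))) w' := by
        intro w'
        rw [LinearMap.smulRight_apply, smul_comm, ← map_smul, s_e2ga]
      obtain ⟨k, hk⟩ := rig (lift2 _ hh)
      have h1 := LinearMap.congr_fun hk (sg P2s K W 0 w)
      rw [lift2_sg, LinearMap.smulRight_apply, hξ, one_smul, LinearMap.comp_apply] at h1
      have h2 : f (sg P2s K W 0 w) = ga K • al K • (sg P1s K V 0 (F1 w) + sg P1s K V 1 (F2 w)) := by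
        have := hF (sg P2s K W 0 w)
        ext i; fin_cases i <;> simp [Rep.ga_c, Rep.al_c, this, hw]
      rw [h2, map_smul, map_smul] at h1
      obtain ⟨q, hq⟩ := hs (k (sg P1s K V 0 (F1 w) + sg P1s K V 1 (F2 w)))
      rw [← hq, ← map_smul, ← map_smul] at h1
      obtain ⟨y, hy⟩ := (hex (ga K • sg P1s K V 0 v - ga K • al K • q)).1 (by rw [map_sub, h1, sub_self])
      have := (hF y).2.2.2.2.2.1
      rw [hy] at this
      simp [Rep.ga_c, Rep.al_c] at this
      exact hv ⟨_, this.symm⟩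
    obtain ⟨σ, hσ⟩ := LinearMap.exists_rightInverse_of_surjective F0 (LinearMap.range_eq_top.2 hsurj)
    have hσ' : ∀ v, F0 (σ v) = v := fun v => LinearMap.congr_fun hσ v
    let V'' : Submodule K V := (LinearMap.ker F0).map F1
    obtain ⟨V', hV'⟩ := Submodule.exists_isCompl V''
    have dis : ∀ (a : V') (b : V''), (a : V) + b = 0 → a = 0 ∧ b = 0 := by
      intro a b h
      have h1 : (b : V) ∈ V'' ⊓ V' := ⟨b.2, by rw [← neg_eq_of_add_eq_zero_right h]; exact V'.neg_mem a.2⟩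
      rw [hV'.inf_eq_bot] at h1
      have hb : (b : V) = 0 := h1
      rw [hb, add_zero] at h
      exact ⟨Subtype.ext h, Subtype.ext hb⟩
    let φ' : V' →ₗ[K] M := φ ∘ₗ σ ∘ₗ V'.subtype
    let φ'' : V'' →ₗ[K] M := φ ∘ₗ σ ∘ₗ V''.subtype
    have φe' : ∀ w, e1 K • φ' w = φ' w := fun w => φe _
    have φg' : ∀ w, ga K • φ' w = 0 := fun w => φg _
    have φe'' : ∀ w, e1 K • φ'' w = φ'' w := fun w => φe _
    have φg'' : ∀ w, ga K • φ'' w = 0 := fun w => φg _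
    have φga : ∀ w, ga K • al K • φ'' w = 0 := by
      rintro ⟨_, w, hw, rfl⟩
      show ga K • al K • π (uhat F0 F1 F2 (σ (F1 w))) = 0
      rw [← map_smul, ← map_smul]
      obtain ⟨y, hy⟩ : ∃ y : Rep P2s W, ∀ i, y.c i = ![w, -σ (F2 w - F1 (σ (F1 w))), 0, 0, 0, 0] i := ⟨⟨_⟩, fun _ => rfl⟩
      refine (hex _).2 ⟨y, ?_⟩
      have := hF y
      have hw' : F0 w = 0 := hw
      ext i; fin_cases i <;> simp [Rep.ga_c, Rep.al_c, this, hw', uhat, hσ', hy]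
    refine chamber_of_bij (LinearMap.coprod (liftX φ' φe' φg') (liftY φ'' φe'' φg'' φga)) ?_ ?_
    · apply surj_of_J
      intro m
      obtain ⟨x, rfl⟩ := hs m
      have : x.c 0 ∈ V'' ⊔ V' := by rw [hV'.sup_eq_top]; trivial
      obtain ⟨b, hb, a, ha, e⟩ := Submodule.mem_sup.1 this
      refine ⟨(sg Xs K _ 0 ⟨a, ha⟩, sg Ys K _ 0 ⟨b, hb⟩), ?_⟩
      have : LinearMap.coprod (liftX φ' φe' φg') (liftY φ'' φe'' φg'' φga) (sg Xs K _ 0 ⟨a, ha⟩, sg Ys K _ 0 ⟨b, hb⟩)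
          = π (uhat F0 F1 F2 (σ a) + uhat F0 F1 F2 (σ b)) := by
        rw [LinearMap.coprod_apply, liftX_apply, liftY_apply]
        simp [φ, φ', φ'']
      rw [this, ← map_sub]
      apply inJ_map
      have := rep1_J K (x - (uhat F0 F1 F2 (σ a) + uhat F0 F1 F2 (σ b)))
      simpa [uhat, ← e, add_comm, hσ'] using this
    · rintro ⟨a, b⟩ h
      have h1 : π ((uhat F0 F1 F2 (σ (a.c 0)) + al K • uhat F0 F1 F2 (σ (a.c 1)) + ga K • al K • uhat F0 F1 F2 (σ (a.c 2))) + 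
          (uhat F0 F1 F2 (σ (b.c 0)) + al K • uhat F0 F1 F2 (σ (b.c 1)))) = 0 := by
        rw [← h, LinearMap.coprod_apply, liftX_apply, liftY_apply]
        simp [φ, φ', φ'']
      obtain ⟨y, hy⟩ := (hex _).1 h1
      have hc := hF y
      rw [hy] at hc
      simp [uhat, Rep.al_c, Rep.ga_c, hσ'] at hc
      obtain ⟨c0, c1, c2, c3, c4, c5, c6, c7⟩ := hc
      obtain ⟨a0, b0⟩ := dis (a.c 0) (b.c 0) c0
      obtain ⟨a1, b1⟩ := dis (a.c 1) (b.c 1) (by simpa [a0, b0] using c1)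
      have h3 : (a.c 2 : V) ∈ V'' := ⟨y.c 0, by simpa using c5.symm, c6.symm⟩
      obtain ⟨a2, -⟩ := dis (a.c 2) (-⟨_, h3⟩) (by simp)
      refine Prod.ext (Rep.ext' fun i => ?_) (Rep.ext' fun i => ?_) <;> fin_cases i
      exacts [a0, a1, a2, b0, b1]

end caseii

section caseiii
variable {K : Type} [Field K] {V W M : Type} [AddCommGroup V] [Module K V] [AddCommGroup W] [Module K W]
  [AddCommGroup M] [Module (Rg K) M]

theorem f12_coords (f : Rep P1s W →ₗ[Rg K] Rep P2s V) : ∃ F0 F1 F2 : W →ₗ[K] V, ∀ x,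
    (f x).c 0 = 0 ∧ (f x).c 1 = F0 (x.c 5) ∧ (f x).c 2 = F2 (x.c 5) + F1 (x.c 6) + F0 (x.c 7) ∧ (f x).c 3 = F0 (x.c 0) ∧
    (f x).c 4 = F1 (x.c 0) + F0 (x.c 1) ∧ (f x).c 5 = F2 (x.c 0) + F1 (x.c 1) + F0 (x.c 2) := by
  refine ⟨crd P2s K V 3 ∘ₗ f.restrictScalars K ∘ₗ sg P1s K W 0, crd P2s K V 4 ∘ₗ f.restrictScalars K ∘ₗ sg P1s K W 0,
    crd P2s K V 5 ∘ₗ f.restrictScalars K ∘ₗ sg P1s K W 0, fun y => ?_⟩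
  have h : ∀ w, e2 K • f (sg P1s K W 0 w) = 0 := fun w => by
    rw [← map_smul, e2_of_e1 (e1_sg1 w), map_zero]
  have h' : ∀ w i, (e2 K • f (sg P1s K W 0 w)).c i = 0 := fun w i => by rw [h]; rfl
  have h0 := fun w => h' w 0
  have h1 := fun w => h' w 1
  have h2 := fun w => h' w 2
  simp [Rep.e2_c] at h0 h1 h2
  rw [hom1_eq f y, lift1_apply]
  simp [Rep.al_c, Rep.ga_c, h0, h1, h2]

variable [Module K M] [IsScalarTower K (Rg K) M] [Module.Finite K V] [Module.Finite K W]

theorem hom_scal (F : Rep P1s W →ₗ[Rg K] M) (c : K) (x : Rep P1s W) : F (c • x) = c • F x := hom_K_smul F c x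

/-- The element with coordinates (a, b) at positions 0, 1. -/
def what (A B : W →ₗ[K] V) : W →ₗ[K] Rep P2s V := sg P2s K V 0 ∘ₗ A + sg P2s K V 1 ∘ₗ B

theorem e2_what (A B : W →ₗ[K] V) (w : W) : e2 K • what A B w = what A B w := by
  ext i; fin_cases i <;> simp [Rep.e2_c, what]

theorem case_iii_surj (π : Rep P2s V →ₗ[Rg K] M) (f : Rep P1s W →ₗ[Rg K] Rep P2s V) (hs : Function.Surjective π)
    (hex : Function.Exact f π) (rig : ∀ h : Rep P1s W →ₗ[Rg K] M, ∃ k : Rep P2s V →ₗ[Rg K] M, k ∘ₗ f = h)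
    (F0 F1 F2 : W →ₗ[K] V) (hF : ∀ x,
    (f x).c 0 = 0 ∧ (f x).c 1 = F0 (x.c 5) ∧ (f x).c 2 = F2 (x.c 5) + F1 (x.c 6) + F0 (x.c 7) ∧ (f x).c 3 = F0 (x.c 0) ∧
    (f x).c 4 = F1 (x.c 0) + F0 (x.c 1) ∧ (f x).c 5 = F2 (x.c 0) + F1 (x.c 1) + F0 (x.c 2))
    (hinj : ¬ Function.Injective F0) : Chamber K M Vs Us := by
  have hsurj : Function.Surjective F0 := by
    intro v
    by_contra hv
    have : ∃ w, F0 w = 0 ∧ w ≠ 0 := by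
      by_contra hc
      push Not at hc
      exact hinj ((injective_iff_map_eq_zero F0).2 hc)
    obtain ⟨w, hw, hw0⟩ := this
    obtain ⟨ξ, hξ⟩ := exists_dual (K := K) hw0
    have hh : ∀ w', e1 K • (ξ.smulRight (π (be K • sg P2s K V 0 v))) w' = (ξ.smulRight (π (be K • sg P2s K V 0 v))) w' := by
      intro w'
      rw [LinearMap.smulRight_apply, smul_comm, ← map_smul, s_e1be]
    obtain ⟨k, hk⟩ := rig (lift1 _ hh)
    have h1 := LinearMap.congr_fun hk (sg P1s K W 0 w)
    rw [lift1_sg, LinearMap.smulRight_apply, hξ, one_smul, LinearMap.comp_apply] at h1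
    have h2 : f (sg P1s K W 0 w) = al K • (sg P2s K V 3 (F1 w) + sg P2s K V 4 (F2 w)) := by
      have := hF (sg P1s K W 0 w)
      ext i; fin_cases i <;> simp [Rep.al_c, this, hw]
    rw [h2, map_smul] at h1
    obtain ⟨q, hq⟩ := hs (k (sg P2s K V 3 (F1 w) + sg P2s K V 4 (F2 w)))
    rw [← hq, ← map_smul] at h1
    obtain ⟨y, hy⟩ := (hex (be K • sg P2s K V 0 v - al K • q)).1 (by rw [map_sub, h1, sub_self])
    have := (hF y).2.2.2.1
    rw [hy] at this
    simp [Rep.be_c, Rep.al_c] at this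
    exact hv ⟨_, this.symm⟩
  obtain ⟨σ, hσ⟩ := LinearMap.exists_rightInverse_of_surjective F0 (LinearMap.range_eq_top.2 hsurj)
  have hσ' : ∀ v, F0 (σ v) = v := fun v => LinearMap.congr_fun hσ v
  let φ : V →ₗ[K] M := π.restrictScalars K ∘ₗ sg P2s K V 0
  have φe : ∀ v, e2 K • φ v = φ v := fun v => by
    show e2 K • π _ = π _; rw [← map_smul, e2_sg2]
  have φb : ∀ v, be K • φ v = 0 := fun v => by
    show be K • π _ = _
    rw [← map_smul]
    obtain ⟨x, hx⟩ : ∃ x : Rep P1s W, ∀ i, x.c i = ![σ v, -σ (F1 (σ v)), -σ (F2 (σ v) - F1 (σ (F1 (σ v)))), 0, 0, 0, 0, 0] i := ⟨⟨_⟩, fun _ => rfl⟩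
    refine (hex _).2 ⟨x, ?_⟩
    have := hF x
    ext i; fin_cases i <;> simp [Rep.be_c, this, hσ', hx]
    abel
  refine chamber_of_bij (LinearMap.coprod (0 : Rep Vs (Fin 0 → K) →ₗ[Rg K] M) (liftU φ φe φb)) ?_ ?_
  · apply surj_of_J
    intro m
    obtain ⟨x, rfl⟩ := hs m
    refine ⟨(0, sg Us K _ 0 (x.c 0)), ?_⟩
    have : LinearMap.coprod (0 : Rep Vs (Fin 0 → K) →ₗ[Rg K] M) (liftU φ φe φb) (0, sg Us K _ 0 (x.c 0)) = π (sg P2s K V 0 (x.c 0)) := by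
      rw [LinearMap.coprod_apply, liftU_apply]; simp [φ]
    rw [this, ← map_sub]
    exact inJ_map (rep2_J K x) π
  · rintro ⟨b, a⟩ h
    have h1 : π (sg P2s K V 0 (a.c 0)) = 0 := by
      rw [← h, LinearMap.coprod_apply, liftU_apply]; simp [φ]
    obtain ⟨y, hy⟩ := (hex _).1 h1
    have hc := (hF y).1
    rw [hy] at hc
    refine Prod.ext (Subsingleton.elim _ _) (Rep.ext' fun i => ?_)
    fin_cases i
    simpa using hc

set_option maxHeartbeats 4000000 in
theorem case_iii_inj (π : Rep P2s V →ₗ[Rg K] M) (f : Rep P1s W →ₗ[Rg K] Rep P2s V) (hs : Function.Surjective π)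
    (hex : Function.Exact f π) (rig : ∀ h : Rep P1s W →ₗ[Rg K] M, ∃ k : Rep P2s V →ₗ[Rg K] M, k ∘ₗ f = h)
    (F0 F1 F2 : W →ₗ[K] V) (hF : ∀ x,
    (f x).c 0 = 0 ∧ (f x).c 1 = F0 (x.c 5) ∧ (f x).c 2 = F2 (x.c 5) + F1 (x.c 6) + F0 (x.c 7) ∧ (f x).c 3 = F0 (x.c 0) ∧
    (f x).c 4 = F1 (x.c 0) + F0 (x.c 1) ∧ (f x).c 5 = F2 (x.c 0) + F1 (x.c 1) + F0 (x.c 2))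
    (hinj : Function.Injective F0) : Chamber K M P2s Vs ∨ Chamber K M Vs Us := by
  obtain ⟨ρ, hρ⟩ := LinearMap.exists_leftInverse_of_injective F0 (LinearMap.ker_eq_bot.2 hinj)
  have hρ' : ∀ w, ρ (F0 w) = w := fun w => LinearMap.congr_fun hρ w
  let G : W →ₗ[K] V := F1 - F0 ∘ₗ ρ ∘ₗ F1
  have hG : ∀ w, G w = F1 w - F0 (ρ (F1 w)) := fun w => rfl
  have hρG : ∀ w, ρ (G w) = 0 := fun w => by rw [hG, map_sub, hρ', sub_self]
  let H : W →ₗ[K] V := F2 - F1 ∘ₗ ρ ∘ₗ F1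
  have hH : ∀ w, H w = F2 w - F1 (ρ (F1 w)) := fun w => rfl
  have hGle : LinearMap.range G ≤ LinearMap.ker ρ := by rintro _ ⟨w, rfl⟩; exact hρG w
  obtain ⟨C, hC⟩ := Submodule.exists_isCompl (LinearMap.range G)
  let D := C ⊓ LinearMap.ker ρ
  have hD : LinearMap.range G ⊔ D = LinearMap.ker ρ := by
    rw [← sup_inf_assoc_of_le _ hGle, hC.sup_eq_top, top_inf_eq]
  have hρD : ∀ d : D, ρ d = 0 := fun d => d.2.2
  have hGD : ∀ w (d : D), G w + d = 0 → G w = 0 ∧ d = 0 := by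
    intro w d h
    have h1 : (d : V) ∈ LinearMap.range G ⊓ C := ⟨⟨-w, by rw [map_neg]; exact neg_eq_of_add_eq_zero_right h⟩, d.2.1⟩
    rw [hC.inf_eq_bot] at h1
    have hb : (d : V) = 0 := h1
    rw [hb, add_zero] at h
    exact ⟨h, Subtype.ext hb⟩
  let K0 := LinearMap.ker G
  obtain ⟨K1, hK1⟩ := Submodule.exists_isCompl K0
  have hK : ∀ k : K1, G k = 0 → k = 0 := by
    intro k h
    have : (k : W) ∈ K0 ⊓ K1 := ⟨h, k.2⟩
    rw [hK1.inf_eq_bot] at this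
    exact Subtype.ext this
  have hK01 : ∀ (u : K0) (k : K1), (u : W) = k → u = 0 ∧ k = 0 := by
    intro u k h
    have hk : k = 0 := hK k (by rw [← h]; exact u.2)
    exact ⟨Subtype.ext (by rw [h, hk]; rfl), hk⟩
  have dis : ∀ w (k : K1) (d : D), G k + d = F0 w → w = 0 ∧ k = 0 ∧ d = 0 := by
    intro w k d h
    have h1 := congrArg ρ h
    rw [map_add, hρG, hρD, hρ', add_zero] at h1
    rw [← h1, map_zero] at h
    obtain ⟨h2, h3⟩ := hGD _ _ h
    exact ⟨h1.symm, hK k h2, h3⟩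
  have hfw : ∀ w, f (sg P1s K W 0 w - sg P1s K W 1 (ρ (F1 w))) = be K • what F0 H w + al K • be K • sg P2s K V 0 (G w) := by
    intro w
    obtain ⟨x, hx⟩ : ∃ x : Rep P1s W, x = sg P1s K W 0 w - sg P1s K W 1 (ρ (F1 w)) := ⟨_, rfl⟩
    have := hF x
    rw [← hx]
    ext i; fin_cases i <;> simp [Rep.al_c, Rep.be_c, this] <;> simp [hx, what, hG, hH]
    · abel
    · abel
  let φu : K0 →ₗ[K] M := π.restrictScalars K ∘ₗ what F0 H ∘ₗ K0.subtype
  let φ1 : K1 →ₗ[K] M := - (π.restrictScalars K ∘ₗ what F0 H ∘ₗ K1.subtype)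
  let φ2 : K1 →ₗ[K] M := π.restrictScalars K ∘ₗ sg P2s K V 0 ∘ₗ G ∘ₗ K1.subtype
  have φue : ∀ u, e2 K • φu u = φu u := fun v => by
    show e2 K • π (what F0 H (v : W)) = π (what F0 H (v : W)); rw [← map_smul, e2_what]
  have φ1e : ∀ u, e2 K • φ1 u = φ1 u := fun v => by
    show e2 K • -π (what F0 H (v : W)) = -π (what F0 H (v : W)); rw [smul_neg, ← map_smul, e2_what]
  have φ2e : ∀ u, e2 K • φ2 u = φ2 u := fun v => by
    show e2 K • π (sg P2s K V 0 (G (v : W))) = π (sg P2s K V 0 (G (v : W))); rw [← map_smul, e2_sg2]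
  have φub : ∀ u, be K • φu u = 0 := fun u => by
    show be K • π (what F0 H u) = 0
    rw [← map_smul]
    refine (hex _).2 ⟨_, (hfw u).trans ?_⟩
    rw [show G u = 0 from u.2]; simp
  have φ12 : ∀ u, be K • φ1 u = al K • be K • φ2 u := fun u => by
    show be K • - π (what F0 H u) = al K • be K • π (sg P2s K V 0 (G u))
    have h1 : π _ = 0 := (hex _).2 ⟨_, hfw u⟩
    rw [map_add, map_smul, map_smul, map_smul] at h1
    rw [smul_neg]
    exact neg_eq_of_add_eq_zero_right h1
  let Ψ : Rep Us K0 × (Rep Vs K1 × Rep P2s D) →ₗ[Rg K] M :=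
    LinearMap.coprod (liftU φu φue φub) (LinearMap.coprod (liftV φ1 φ2 φ1e φ2e φ12) (π ∘ₗ Rep.map P2s D.subtype))
  have Ψs : Function.Surjective Ψ := by
    apply surj_of_J
    intro m
    obtain ⟨x, rfl⟩ := hs m
    have h1 : x.c 0 - F0 (ρ (x.c 0)) ∈ LinearMap.range G ⊔ D := by
      rw [hD, LinearMap.mem_ker, map_sub, hρ', sub_self]
    obtain ⟨_, ⟨w, rfl⟩, d, hd, e⟩ := Submodule.mem_sup.1 h1
    have h2 : ∀ w, ∃ (u : K0) (k : K1), w = (u : W) + (k : W) := by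
      intro w
      have h2 : w ∈ K0 ⊔ K1 := by rw [hK1.sup_eq_top]; trivial
      obtain ⟨u, hu, k, hk, e⟩ := Submodule.mem_sup.1 h2
      exact ⟨⟨u, hu⟩, ⟨k, hk⟩, e.symm⟩
    obtain ⟨u, k, e2⟩ := h2 (ρ (x.c 0))
    obtain ⟨u', k', e3⟩ := h2 w
    refine ⟨(sg Us K _ 0 u, sg Vs K _ 0 (-k) + sg Vs K _ 1 k', sg P2s K _ 0 ⟨d, hd⟩), ?_⟩
    have : Ψ (sg Us K _ 0 u, sg Vs K _ 0 (-k) + sg Vs K _ 1 k', sg P2s K _ 0 ⟨d, hd⟩) =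
        π (what F0 H u + (what F0 H k + sg P2s K V 0 (G k') + Rep.map P2s D.subtype (sg P2s K _ 0 ⟨d, hd⟩))) := by
      simp only [Ψ]
      rw [LinearMap.coprod_apply, LinearMap.coprod_apply, liftU_apply, liftV_apply]
      simp [φu, φ1, φ2]
    rw [this, ← map_sub]
    apply inJ_map
    have h3 := rep2_J K (x - (what F0 H u + (what F0 H k + sg P2s K V 0 (G k') + Rep.map P2s D.subtype (sg P2s K _ 0 ⟨d, hd⟩))))
    have h4 : (x - (what F0 H u + (what F0 H k + sg P2s K V 0 (G k') + Rep.map P2s D.subtype (sg P2s K _ 0 ⟨d, hd⟩)))).c 0 = 0 := by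
      have h5 : G w = G k' := by rw [e3, map_add, show G u' = 0 from u'.2, zero_add]
      have h6 : x.c 0 = F0 (ρ (x.c 0)) + (G w + d) := by rw [e]; abel
      simp [what]
      rw [h6, e2, h5, map_add]; abel
    rw [h4, map_zero, sub_zero] at h3
    exact h3
  have Ψi : ∀ z, Ψ z = 0 → z = 0 := by
    rintro ⟨u, a, b⟩ h
    have h1 : π (what F0 H (u.c 0) + (-what F0 H (a.c 0) + sg P2s K V 0 (G (a.c 1)) + ga K • be K • sg P2s K V 0 (G (a.c 2))
        + be K • sg P2s K V 0 (G (a.c 3)) + al K • be K • sg P2s K V 0 (G (a.c 4)) + al K • al K • be K • sg P2s K V 0 (G (a.c 5))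
         + Rep.map P2s D.subtype b)) = 0 := by
      rw [← h]
      simp only [Ψ]
      rw [LinearMap.coprod_apply, LinearMap.coprod_apply, liftU_apply, liftV_apply]
      simp [φu, φ1, φ2]
    obtain ⟨x, hx⟩ := (hex _).1 h1
    have hc := hF x
    rw [hx] at hc
    simp [what, Rep.al_c, Rep.ga_c, Rep.be_c] at hc
    obtain ⟨c0, c1, c2, c3, c4, c5⟩ := hc
    obtain ⟨h0, a1, b0⟩ := dis (a.c 0 - u.c 0) (a.c 1) (b.c 0) (by
      rw [map_sub, ← sub_eq_zero, ← c0]; abel)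
    obtain ⟨u0, a0⟩ := hK01 (u.c 0) (a.c 0) (sub_eq_zero.1 h0).symm
    obtain ⟨x5, a2, b1⟩ := dis (x.c 5) (a.c 2) (b.c 1) (by rw [← c1, u0, a0]; simp)
    obtain ⟨x0, a3, b3⟩ := dis _ (a.c 3) (b.c 3) c3
    obtain ⟨x1, a4, b4⟩ := dis (x.c 1) (a.c 4) (b.c 4) (by simpa [x0] using c4)
    obtain ⟨x2, a5, b5⟩ := dis (x.c 2) (a.c 5) (b.c 5) (by simpa [x0, x1] using c5)
    have b2 : b.c 2 = 0 := by
      rw [x5, map_zero, zero_add] at c2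
      have h2 := congrArg ρ c2
      rw [hρD, map_add, hρ'] at h2
      have h3 : G (- x.c 6) + (b.c 2 : V) = 0 := by
        rw [map_neg, hG, c2, eq_neg_of_add_eq_zero_right h2.symm, map_neg]; abel
      exact (hGD _ _ h3).2
    refine Prod.ext (Rep.ext' fun i => ?_) (Prod.ext (Rep.ext' fun i => ?_) (Rep.ext' fun i => ?_)) <;> fin_cases i
    exacts [u0, a0, a1, a2, a3, a4, a5, b0, b1, b2, b3, b4, b5]
  by_cases hK0 : Subsingleton K0
  · left
    refine chamber_of_bij (Ψ ∘ₗ LinearMap.inr _ _ _ ∘ₗ (LinearEquiv.prodComm (Rg K) (Rep P2s D) (Rep Vs K1)).toLinearMap) ?_ ?_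
    · intro m
      obtain ⟨⟨u, a, b⟩, rfl⟩ := Ψs m
      refine ⟨(b, a), ?_⟩
      rw [Subsingleton.elim u 0]; rfl
    · rintro ⟨b, a⟩ h
      have := Ψi (0, a, b) h
      simp only [Prod.mk_eq_zero] at this ⊢
      exact ⟨this.2.2, this.2.1⟩
  by_cases hD0 : Subsingleton D
  · right
    refine chamber_of_bij (LinearMap.coprod (liftV φ1 φ2 φ1e φ2e φ12) (liftU φu φue φub)) ?_ ?_
    · intro m
      obtain ⟨⟨u, a, b⟩, rfl⟩ := Ψs m
      refine ⟨(a, u), ?_⟩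
      rw [Subsingleton.elim b 0]; simp [Ψ, add_comm]
    · rintro ⟨a, u⟩ h
      have := Ψi (u, a, 0) (by rw [← h]; simp [Ψ, add_comm])
      simp only [Prod.mk_eq_zero] at this ⊢
      exact ⟨this.2.1, this.1⟩
  exfalso
  rw [not_subsingleton_iff_nontrivial] at hK0 hD0
  obtain ⟨u, hu⟩ := exists_ne (0 : K0)
  obtain ⟨d, hd⟩ := exists_ne (0 : D)
  obtain ⟨ξ, hξ⟩ := exists_dual (K := K) (v := (u : W)) (fun h => hu (Subtype.ext h))
  have hh : ∀ w', e1 K • (ξ.smulRight (π (al K • be K • sg P2s K V 0 (d : V)))) w' = (ξ.smulRight (π (al K • be K • sg P2s K V 0 (d : V)))) w' := by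
    intro w'
    rw [LinearMap.smulRight_apply, smul_comm, ← map_smul, s_e1al]
  obtain ⟨k, hk⟩ := rig (lift1 _ hh)
  have h1 := LinearMap.congr_fun hk (sg P1s K W 0 u - sg P1s K W 1 (ρ (F1 u)))
  rw [LinearMap.comp_apply, hfw, show G u = 0 from u.2] at h1
  obtain ⟨q, hq⟩ := hs (k (what F0 H u))
  have h2 : π (be K • q) = π (al K • be K • sg P2s K V 0 (d : V) - ξ (ρ (F1 u)) • al K • al K • be K • sg P2s K V 0 (d : V)) := by
    rw [map_smul, hq, ← map_smul]
    rw [map_zero, smul_zero, smul_zero, add_zero] at h1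
    rw [h1, lift1_apply]
    simp [hξ, hom_K_smul, smul_comm (al K), sub_eq_add_neg]
  obtain ⟨x, hx⟩ := (hex _).1 (show π (be K • q - (al K • be K • sg P2s K V 0 (d : V) - ξ (ρ (F1 u)) • al K • al K • be K • sg P2s K V 0 (d : V))) = 0 by
    rw [map_sub, h2, sub_self])
  have hc := (hF x).2.2.2.2.1
  rw [hx] at hc
  simp [Rep.al_c, Rep.be_c] at hc
  have h3 := congrArg ρ hc
  rw [map_neg, hρD, map_add, hρ'] at h3
  have h4 : G (x.c 0) + (d : V) = 0 := by
    rw [hG, ← neg_neg (d : V), hc]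
    rw [neg_zero] at h3
    rw [eq_neg_of_add_eq_zero_right h3.symm, map_neg]; abel
  exact hd (hGD _ _ h4).2

theorem case_iii (π : Rep P2s V →ₗ[Rg K] M) (f : Rep P1s W →ₗ[Rg K] Rep P2s V) (hs : Function.Surjective π)
    (hex : Function.Exact f π) (rig : ∀ h : Rep P1s W →ₗ[Rg K] M, ∃ k : Rep P2s V →ₗ[Rg K] M, k ∘ₗ f = h) :
    Chamber K M P2s Vs ∨ Chamber K M Vs Us := by
  obtain ⟨F0, F1, F2, hF⟩ := f12_coords f
  by_cases hinj : Function.Injective F0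
  · exact case_iii_inj π f hs hex rig F0 F1 F2 hF hinj
  · exact Or.inr (case_iii_surj π f hs hex rig F0 F1 F2 hF hinj)

end caseiii

section classify
variable {K : Type} [Field K] {M : Type} [AddCommGroup M] [Module (Rg K) M]

def Classified (K : Type) [Field K] (M : Type) [AddCommGroup M] [Module (Rg K) M] : Prop :=
  Chamber K M P1s P2s ∨ Chamber K M P1s Xs ∨ Chamber K M Xs Ys ∨ Chamber K M P2s Vs ∨ Chamber K M Vs Us

theorem inJ_K {V : Type} [AddCommGroup V] [Module K V] {n : ℕ} {S : Shape n} (c : K) {x : Rep S V} (h : inJ K x) : inJ K (c • x) := by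
  obtain ⟨a, b, d, rfl⟩ := h
  refine ⟨c • a, c • b, c • d, ?_⟩
  rw [smul_add, smul_add, smul_comm c (al K), smul_comm c (ga K), smul_comm c (be K)]

theorem classify [Module K M] [IsScalarTower K (Rg K) M] [Module.Finite K M] (h : TRL K M) : Classified K M := by
  refine of_minpres h ?_
  intro V1 V2 W1 W2 _ _ _ _ _ _ _ _ _ _ _ _ π f hπ hex hJ rig
  have hcov : ∀ y, inJ K (f y) := fun y => hπ.inJ' (by rw [(hex _).2 ⟨y, rfl⟩]; exact inJ_zero)
  have k1 : Subsingleton W1 ∨ Subsingleton V1 := by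
    by_contra hc
    push Not at hc
    obtain ⟨⟨w, hw⟩, ⟨v, hv⟩⟩ := And.intro (@exists_ne W1 hc.1 0) (@exists_ne V1 hc.2 0)
    obtain ⟨ξ, hξ⟩ := exists_dual (K := K) hw
    have hh : ∀ w', e1 K • (ξ.smulRight (π (sg P1s K V1 0 v, 0))) w' = (ξ.smulRight (π (sg P1s K V1 0 v, 0))) w' := by
      intro w'
      rw [LinearMap.smulRight_apply, smul_comm, ← map_smul, Prod.smul_mk, e1_sg1, smul_zero]
    obtain ⟨k, hk⟩ := rig (LinearMap.coprod (lift1 _ hh) 0)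
    have h1 := LinearMap.congr_fun hk (sg P1s K W1 0 w, 0)
    rw [LinearMap.coprod_apply, lift1_sg, LinearMap.smulRight_apply, hξ, one_smul, LinearMap.comp_apply, map_zero, add_zero] at h1
    have h2 := (hπ.top (sg P1s K V1 0 v, 0) (by rw [← h1]; exact inJ_map (hcov _) k)).1
    simp at h2
    exact hv h2
  have k2 : Subsingleton W2 ∨ Subsingleton V2 := by
    by_contra hc
    push Not at hc
    obtain ⟨⟨w, hw⟩, ⟨v, hv⟩⟩ := And.intro (@exists_ne W2 hc.1 0) (@exists_ne V2 hc.2 0)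
    obtain ⟨ξ, hξ⟩ := exists_dual (K := K) hw
    have hh : ∀ w', e2 K • (ξ.smulRight (π (0, sg P2s K V2 0 v))) w' = (ξ.smulRight (π (0, sg P2s K V2 0 v))) w' := by
      intro w'
      rw [LinearMap.smulRight_apply, smul_comm, ← map_smul, Prod.smul_mk, e2_sg2, smul_zero]
    obtain ⟨k, hk⟩ := rig (LinearMap.coprod 0 (lift2 _ hh))
    have h1 := LinearMap.congr_fun hk (0, sg P2s K W2 0 w)
    rw [LinearMap.coprod_apply, lift2_sg, LinearMap.smulRight_apply, hξ, one_smul, LinearMap.comp_apply, map_zero, zero_add] at h1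
    have h2 := (hπ.top (0, sg P2s K V2 0 v) (by rw [← h1]; exact inJ_map (hcov _) k)).2
    simp at h2
    exact hv h2
  have triv : (∀ y, f y = 0) → Chamber K M P1s P2s := by
    intro h0
    refine chamber_of_bij π hπ.surj fun x hx => ?_
    obtain ⟨y, rfl⟩ := (hex x).1 hx
    exact h0 y
  rcases k1 with a | a <;> rcases k2 with b | b
  · exact Or.inl (triv fun y => by rw [Subsingleton.elim y 0, map_zero])
  · have := case_ii (π ∘ₗ LinearMap.inl _ _ _) (LinearMap.fst _ _ _ ∘ₗ f ∘ₗ LinearMap.inr _ _ _)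
      (by
        intro m
        obtain ⟨⟨x, y⟩, rfl⟩ := hπ.surj m
        exact ⟨x, by rw [Subsingleton.elim y 0]; rfl⟩)
      (by
        intro x
        constructor
        · intro hx
          obtain ⟨⟨y, z⟩, h⟩ := (hex _).1 hx
          refine ⟨z, ?_⟩
          rw [Subsingleton.elim y 0] at h
          show (f (0, z)).1 = x
          rw [h]; rfl
        · rintro ⟨z, rfl⟩
          refine (hex _).2 ⟨(0, z), ?_⟩
          exact Prod.ext rfl (Subsingleton.elim _ _))
      (by
        intro h
        obtain ⟨k, hk⟩ := rig (h ∘ₗ LinearMap.snd _ _ _)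
        refine ⟨k ∘ₗ LinearMap.inl _ _ _, ?_⟩
        ext1 z
        have := LinearMap.congr_fun hk (0, z)
        refine Eq.trans ?_ this
        show k _ = k _
        congr 1
        exact Prod.ext rfl (Subsingleton.elim _ _))
    rcases this with h | h
    · exact Or.inr (Or.inl h)
    · exact Or.inr (Or.inr (Or.inl h))
  · have := case_iii (π ∘ₗ LinearMap.inr _ _ _) (LinearMap.snd _ _ _ ∘ₗ f ∘ₗ LinearMap.inl _ _ _)
      (by
        intro m
        obtain ⟨⟨x, y⟩, rfl⟩ := hπ.surj m
        exact ⟨y, by rw [Subsingleton.elim x 0]; rfl⟩)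
      (by
        intro x
        constructor
        · intro hx
          obtain ⟨⟨y, z⟩, h⟩ := (hex _).1 hx
          refine ⟨y, ?_⟩
          rw [Subsingleton.elim z 0] at h
          show (f (y, 0)).2 = x
          rw [h]; rfl
        · rintro ⟨z, rfl⟩
          refine (hex _).2 ⟨(z, 0), ?_⟩
          exact Prod.ext (Subsingleton.elim _ _) rfl)
      (by
        intro h
        obtain ⟨k, hk⟩ := rig (h ∘ₗ LinearMap.fst _ _ _)
        refine ⟨k ∘ₗ LinearMap.inr _ _ _, ?_⟩
        ext1 z
        have := LinearMap.congr_fun hk (z, 0)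
        refine Eq.trans ?_ this
        show k _ = k _
        congr 1
        exact Prod.ext (Subsingleton.elim _ _) rfl)
    rcases this with h | h
    · exact Or.inr (Or.inr (Or.inr (Or.inl h)))
    · exact Or.inr (Or.inr (Or.inr (Or.inr h)))
  · exact Or.inl (triv fun y => Subsingleton.elim _ _)

end classify

section trl
variable {K : Type} [Field K]
  {N : Type} [AddCommGroup N] [Module (Rg K) N] [Module K N] [IsScalarTower K (Rg K) N]

theorem hom1_ext1 {f g : Rep P1s K →ₗ[Rg K] N} (h : f (sg P1s K K 0 1) = g (sg P1s K K 0 1)) : f = g := by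
  refine hom1_ext fun v => ?_
  rw [← mul_one v, ← smul_eq_mul, map_smul, hom_K_smul, hom_K_smul, h]

theorem hom2_ext1 {f g : Rep P2s K →ₗ[Rg K] N} (h : f (sg P2s K K 0 1) = g (sg P2s K K 0 1)) : f = g := by
  refine hom2_ext fun v => ?_
  rw [← mul_one v, ← smul_eq_mul, map_smul, hom_K_smul, hom_K_smul, h]

theorem exists_hom1 (m : N) (h : e1 K • m = m) : ∃ k : Rep P1s K →ₗ[Rg K] N, k (sg P1s K K 0 1) = m := by
  have hh : ∀ v, e1 K • (LinearMap.toSpanSingleton K N m) v = (LinearMap.toSpanSingleton K N m) v := by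
    intro v
    rw [LinearMap.toSpanSingleton_apply, smul_comm, h]
  exact ⟨lift1 _ hh, by rw [lift1_sg]; simp⟩

theorem exists_hom2 (m : N) (h : e2 K • m = m) : ∃ k : Rep P2s K →ₗ[Rg K] N, k (sg P2s K K 0 1) = m := by
  have hh : ∀ v, e2 K • (LinearMap.toSpanSingleton K N m) v = (LinearMap.toSpanSingleton K N m) v := by
    intro v
    rw [LinearMap.toSpanSingleton_apply, smul_comm, h]
  exact ⟨lift2 _ hh, by rw [lift2_sg]; simp⟩

/-- `M` has a presentation such that maps to modules satisfying `D` factor -/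
def Pr (K : Type) [Field K] (M : Type) [AddCommGroup M] [Module (Rg K) M]
    (D : ∀ (N : Type) [AddCommGroup N] [Module (Rg K) N], Prop) : Prop :=
  ∃ (P₁ P₀ : ModuleCat.{0} (Rg K)) (f : P₁ →ₗ[Rg K] P₀) (g : P₀ →ₗ[Rg K] M),
    Module.Projective (Rg K) P₁ ∧ Module.Projective (Rg K) P₀ ∧ Module.Finite (Rg K) P₁ ∧ Module.Finite (Rg K) P₀ ∧
    Function.Surjective g ∧ Function.Exact f g ∧
    ∀ (N : Type) [AddCommGroup N] [Module (Rg K) N] [Module K N] [IsScalarTower K (Rg K) N], D N →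
    ∀ h : P₁ →ₗ[Rg K] N, ∃ k : P₀ →ₗ[Rg K] N, k ∘ₗ f = h

section
variable {M M' : Type} [AddCommGroup M] [Module (Rg K) M] [Module K M] [IsScalarTower K (Rg K) M]
  [AddCommGroup M'] [Module (Rg K) M'] [Module K M'] [IsScalarTower K (Rg K) M']
  {D D' : ∀ (N : Type) [AddCommGroup N] [Module (Rg K) N], Prop}

theorem Pr.trl (h : Pr K M D) (hD : D M) : TRL K M := by
  obtain ⟨P₁, P₀, f, g, a, b, c, d, e, i, j⟩ := h
  exact ⟨P₁, P₀, f, g, a, b, c, d, e, i, j M hD⟩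

theorem Pr.trl2 (h : Pr K M D) (h' : Pr K M' D') (d1 : D M) (d2 : D M') (d3 : D' M) (d4 : D' M') : TRL K (M × M') := by
  obtain ⟨P₁, P₀, f, g, a, b, c, d, e, i, j⟩ := h
  obtain ⟨P₁', P₀', f', g', a', b', c', d', e', i', j'⟩ := h'
  refine ⟨ModuleCat.of _ (P₁ × P₁'), ModuleCat.of _ (P₀ × P₀'), LinearMap.prodMap f f', LinearMap.prodMap g g',
    inferInstanceAs (Module.Projective (Rg K) (P₁ × P₁')), inferInstanceAs (Module.Projective (Rg K) (P₀ × P₀')),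
    inferInstanceAs (Module.Finite (Rg K) (P₁ × P₁')), inferInstanceAs (Module.Finite (Rg K) (P₀ × P₀')), ?_, ?_, ?_⟩
  · rintro ⟨x, y⟩
    obtain ⟨p, rfl⟩ := e x
    obtain ⟨q, rfl⟩ := e' y
    exact ⟨(p, q), rfl⟩
  · rintro ⟨x, y⟩
    constructor
    · intro hx
      obtain ⟨p, rfl⟩ := (i x).1 (congrArg Prod.fst hx)
      obtain ⟨q, rfl⟩ := (i' y).1 (congrArg Prod.snd hx)
      exact ⟨(p, q), rfl⟩
    · rintro ⟨⟨p, q⟩, hpq⟩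
      obtain ⟨rfl, rfl⟩ := Prod.mk.inj hpq
      exact Prod.ext ((i _).2 ⟨p, rfl⟩) ((i' _).2 ⟨q, rfl⟩)
  · intro h
    obtain ⟨k1, hk1⟩ := j M d1 (LinearMap.fst _ _ _ ∘ₗ h ∘ₗ LinearMap.inl _ _ _)
    obtain ⟨k2, hk2⟩ := j M' d2 (LinearMap.snd _ _ _ ∘ₗ h ∘ₗ LinearMap.inl _ _ _)
    obtain ⟨k3, hk3⟩ := j' M d3 (LinearMap.fst _ _ _ ∘ₗ h ∘ₗ LinearMap.inr _ _ _)
    obtain ⟨k4, hk4⟩ := j' M' d4 (LinearMap.snd _ _ _ ∘ₗ h ∘ₗ LinearMap.inr _ _ _)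
    refine ⟨LinearMap.coprod (LinearMap.prod k1 k2) (LinearMap.prod k3 k4), ?_⟩
    refine LinearMap.ext fun z => ?_
    obtain ⟨p, q⟩ := z
    have : h (p, q) = h (p, 0) + h (0, q) := by rw [← map_add]; simp
    refine Eq.trans ?_ this.symm
    have a1 : (k1 (f p), k2 (f p)) = h (p, 0) := Prod.ext (LinearMap.congr_fun hk1 p) (LinearMap.congr_fun hk2 p)
    have a2 : (k3 (f' q), k4 (f' q)) = h (0, q) := Prod.ext (LinearMap.congr_fun hk3 q) (LinearMap.congr_fun hk4 q)
    rw [← a1, ← a2]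
    rfl
end

def DT : ∀ (N : Type) [AddCommGroup N] [Module (Rg K) N], Prop := fun _ _ _ => True
def DX : ∀ (N : Type) [AddCommGroup N] [Module (Rg K) N], Prop := fun N _ _ => ∀ n : N, ∃ m : N, ga K • m = e2 K • n
def DY : ∀ (N : Type) [AddCommGroup N] [Module (Rg K) N], Prop := fun N _ _ =>
  ∀ n n' : N, ∃ m : N, ga K • m = e2 K • n ∧ ga K • al K • m = e2 K • n'
def DU : ∀ (N : Type) [AddCommGroup N] [Module (Rg K) N], Prop := fun N _ _ => ∀ n : N, ∃ m : N, be K • m = e1 K • n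
def DV : ∀ (N : Type) [AddCommGroup N] [Module (Rg K) N], Prop := fun N _ _ =>
  ∀ n : N, ∃ m m' : N, be K • m + al K • be K • m' = e1 K • n

theorem pr_proj (M : Type) [AddCommGroup M] [Module (Rg K) M] [Module.Projective (Rg K) M] [Module.Finite (Rg K) M] : Pr K M (DT (K := K)) := by
  refine ⟨ModuleCat.of _ PUnit, ModuleCat.of _ M, 0, LinearMap.id,
    inferInstanceAs (Module.Projective (Rg K) PUnit), inferInstanceAs (Module.Projective (Rg K) M),
    inferInstanceAs (Module.Finite (Rg K) PUnit), inferInstanceAs (Module.Finite (Rg K) M), fun x => ⟨x, rfl⟩, ?_, ?_⟩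
  · intro x
    exact ⟨fun h => ⟨PUnit.unit, h.symm⟩, fun ⟨_, h⟩ => h.symm⟩
  · intro N _ _ _ _ _ h
    refine ⟨0, LinearMap.ext fun z => ?_⟩
    rw [Subsingleton.elim z 0, map_zero, map_zero]

theorem pr_X : Pr K (Rep Xs K) (DX (K := K)) := by
  have h5 : ∀ v, e2 K • sg P1s K K 5 v = sg P1s K K 5 v := fun v => by
    ext i; fin_cases i <;> simp [Rep.e2_c]
  have h0 : ∀ v, e1 K • sg Xs K K 0 v = sg Xs K K 0 v := fun v => by
    ext i; fin_cases i <;> simp [Rep.e1_c]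
  have hc : ∀ x i, (lift1 (sg Xs K K 0) h0 x).c i = ![x.c 0, x.c 1, x.c 6] i := fun x i => by
    rw [lift1_apply]
    fin_cases i <;> simp [Rep.al_c, Rep.ga_c]
  have hd : ∀ x i, (lift2 (sg P1s K K 5) h5 x).c i = ![0, 0, x.c 3, x.c 4, x.c 5, x.c 0, 0, x.c 1] i := fun x i => by
    rw [lift2_apply]
    fin_cases i <;> simp [Rep.al_c, Rep.ga_c, Rep.be_c]
  refine ⟨ModuleCat.of _ (Rep P2s K), ModuleCat.of _ (Rep P1s K), lift2 (sg P1s K K 5) h5, lift1 (sg Xs K K 0) h0, proj2, proj1, repFinR _, repFinR _, ?_, ?_, ?_⟩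
  · intro x
    refine ⟨(⟨![x.c 0, x.c 1, 0, 0, 0, 0, x.c 2, 0]⟩ : Rep P1s K), Rep.ext' fun i => (hc _ _).trans ?_⟩
    fin_cases i <;> simp
  · intro x
    change Rep P1s K at x
    constructor
    · intro hx
      have hx' : ∀ i, ![x.c 0, x.c 1, x.c 6] i = 0 := fun i => by rw [← hc, hx]; rfl
      refine ⟨(⟨![x.c 5, x.c 7, 0, x.c 2, x.c 3, x.c 4]⟩ : Rep P2s K), Rep.ext' fun i => (hd _ _).trans ?_⟩
      have a0 := hx' 0
      have a1 := hx' 1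
      have a2 := hx' 2
      simp at a0 a1 a2
      fin_cases i <;> simp [a0, a1, a2]
    · rintro ⟨y, rfl⟩
      refine Rep.ext' fun i => (hc _ _).trans ?_
      rw [hd, hd, hd]
      fin_cases i <;> rfl
  · intro N _ _ _ _ hD h
    change Rep P2s K →ₗ[Rg K] N at h
    obtain ⟨m, hm⟩ := hD (h (sg P2s K K 0 1))
    obtain ⟨k, hk⟩ := exists_hom1 (e1 K • m) (s_e1e1 _)
    refine ⟨k, hom2_ext1 ?_⟩
    have : sg P1s K K 5 1 = ga K • sg P1s K K 0 1 := by
      ext i; fin_cases i <;> simp [Rep.ga_c]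
    rw [LinearMap.comp_apply, lift2_sg, this, map_smul, hk, s_gae1, hm, ← map_smul, e2_sg2]

theorem pr_U : Pr K (Rep Us K) (DU (K := K)) := by
  have h5 : ∀ v, e1 K • sg P2s K K 3 v = sg P2s K K 3 v := fun v => by
    ext i; fin_cases i <;> simp [Rep.e1_c]
  have h0 : ∀ v, e2 K • sg Us K K 0 v = sg Us K K 0 v := fun v => by
    ext i; fin_cases i <;> simp [Rep.e2_c]
  have hc : ∀ x i, (lift2 (sg Us K K 0) h0 x).c i = ![x.c 0] i := fun x i => by
    rw [lift2_apply]
    fin_cases i <;> simp [Rep.al_c, Rep.ga_c, Rep.be_c]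
  have hd : ∀ x i, (lift1 (sg P2s K K 3) h5 x).c i = ![0, x.c 5, x.c 7, x.c 0, x.c 1, x.c 2] i := fun x i => by
    rw [lift1_apply]
    fin_cases i <;> simp [Rep.al_c, Rep.ga_c, Rep.be_c]
  refine ⟨ModuleCat.of _ (Rep P1s K), ModuleCat.of _ (Rep P2s K), lift1 (sg P2s K K 3) h5, lift2 (sg Us K K 0) h0, proj1, proj2, repFinR _, repFinR _, ?_, ?_, ?_⟩
  · intro x
    refine ⟨(⟨![x.c 0, 0, 0, 0, 0, 0]⟩ : Rep P2s K), Rep.ext' fun i => (hc _ _).trans ?_⟩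
    fin_cases i <;> simp
  · intro x
    change Rep P2s K at x
    constructor
    · intro hx
      have hx' : ∀ i, ![x.c 0] i = 0 := fun i => by rw [← hc, hx]; rfl
      refine ⟨(⟨![x.c 3, x.c 4, x.c 5, 0, 0, x.c 1, 0, x.c 2]⟩ : Rep P1s K), Rep.ext' fun i => (hd _ _).trans ?_⟩
      have a0 := hx' 0
      simp at a0
      fin_cases i <;> simp [a0]
    · rintro ⟨y, rfl⟩
      refine Rep.ext' fun i => (hc _ _).trans ?_
      rw [hd]
      fin_cases i <;> rfl
  · intro N _ _ _ _ hD h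
    change Rep P1s K →ₗ[Rg K] N at h
    obtain ⟨m, hm⟩ := hD (h (sg P1s K K 0 1))
    obtain ⟨k, hk⟩ := exists_hom2 (e2 K • m) (s_e2e2 _)
    refine ⟨k, hom1_ext1 ?_⟩
    have : sg P2s K K 3 1 = be K • sg P2s K K 0 1 := by
      ext i; fin_cases i <;> simp [Rep.be_c]
    rw [LinearMap.comp_apply, lift1_sg, this, map_smul, hk, s_bee2, hm, ← map_smul, e1_sg1]

theorem pr_Y : Pr K (Rep Ys K) (DY (K := K)) := by
  have h5 : ∀ v, e2 K • sg P1s K K 5 v = sg P1s K K 5 v := fun v => by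
    ext i; fin_cases i <;> simp [Rep.e2_c]
  have h6 : ∀ v, e2 K • sg P1s K K 6 v = sg P1s K K 6 v := fun v => by
    ext i; fin_cases i <;> simp [Rep.e2_c]
  have h0 : ∀ v, e1 K • sg Ys K K 0 v = sg Ys K K 0 v := fun v => by
    ext i; fin_cases i <;> simp [Rep.e1_c]
  have hc : ∀ x i, (lift1 (sg Ys K K 0) h0 x).c i = ![x.c 0, x.c 1] i := fun x i => by
    rw [lift1_apply]
    fin_cases i <;> simp [Rep.al_c, Rep.ga_c]
  have hd : ∀ x y i, (LinearMap.coprod (lift2 (sg P1s K K 5) h5) (lift2 (sg P1s K K 6) h6) (x, y)).c i =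
      ![0, 0, x.c 3, x.c 4 + y.c 3, x.c 5 + y.c 4, x.c 0, y.c 0, x.c 1] i := fun x y i => by
    rw [LinearMap.coprod_apply, lift2_apply, lift2_apply]
    fin_cases i <;> simp [Rep.al_c, Rep.ga_c, Rep.be_c]
  refine ⟨ModuleCat.of _ (Rep P2s K × Rep P2s K), ModuleCat.of _ (Rep P1s K), LinearMap.coprod (lift2 (sg P1s K K 5) h5) (lift2 (sg P1s K K 6) h6),
    lift1 (sg Ys K K 0) h0, inferInstanceAs (Module.Projective (Rg K) (Rep P2s K × Rep P2s K)), proj1,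
      inferInstanceAs (Module.Finite (Rg K) (Rep P2s K × Rep P2s K)), repFinR _, ?_, ?_, ?_⟩
  · intro x
    refine ⟨(⟨![x.c 0, x.c 1, 0, 0, 0, 0, 0, 0]⟩ : Rep P1s K), Rep.ext' fun i => (hc _ _).trans ?_⟩
    fin_cases i <;> simp
  · intro x
    change Rep P1s K at x
    constructor
    · intro hx
      have hx' : ∀ i, ![x.c 0, x.c 1] i = 0 := fun i => by rw [← hc, hx]; rfl
      refine ⟨((⟨![x.c 5, x.c 7, 0, x.c 2, x.c 3, x.c 4]⟩ : Rep P2s K), (⟨![x.c 6, 0, 0, 0, 0, 0]⟩ : Rep P2s K)), Rep.ext' fun i => (hd _ _ _).trans ?_⟩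
      have a0 := hx' 0
      have a1 := hx' 1
      simp at a0 a1
      fin_cases i <;> simp [a0, a1]
    · rintro ⟨⟨y, z⟩, rfl⟩
      refine Rep.ext' fun i => (hc _ _).trans ?_
      rw [hd, hd]
      fin_cases i <;> rfl
  · intro N _ _ _ _ hD h
    change Rep P2s K × Rep P2s K →ₗ[Rg K] N at h
    obtain ⟨m, hm, hm'⟩ := hD (h (sg P2s K K 0 1, 0)) (h (0, sg P2s K K 0 1))
    obtain ⟨k, hk⟩ := exists_hom1 (e1 K • m) (s_e1e1 _)
    refine ⟨k, ?_⟩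
    have t5 : sg P1s K K 5 1 = ga K • sg P1s K K 0 1 := by
      ext i; fin_cases i <;> simp [Rep.ga_c]
    have t6 : sg P1s K K 6 1 = ga K • al K • sg P1s K K 0 1 := by
      ext i; fin_cases i <;> simp [Rep.ga_c, Rep.al_c]
    have q1 : k ∘ₗ (lift2 (sg P1s K K 5) h5) = h ∘ₗ LinearMap.inl _ _ _ := by
      refine hom2_ext1 ?_
      rw [LinearMap.comp_apply, lift2_sg, t5, map_smul, hk, s_gae1, hm, ← map_smul, Prod.smul_mk, e2_sg2, smul_zero]; rfl
    have q2 : k ∘ₗ (lift2 (sg P1s K K 6) h6) = h ∘ₗ LinearMap.inr _ _ _ := by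
      refine hom2_ext1 ?_
      rw [LinearMap.comp_apply, lift2_sg, t6, map_smul, map_smul, hk, s_ale1, hm', ← map_smul, Prod.smul_mk, e2_sg2, smul_zero]; rfl
    show k ∘ₗ LinearMap.coprod _ _ = h
    rw [LinearMap.comp_coprod, q1, q2, ← LinearMap.comp_coprod, LinearMap.coprod_inl_inr, LinearMap.comp_id]

set_option maxHeartbeats 4000000 in
theorem pr_V : Pr K (Rep Vs K) (DV (K := K)) := by
  have h3 : ∀ v, e1 K • sg P2s K K 3 v = sg P2s K K 3 v := fun v => by
    ext i; fin_cases i <;> simp [Rep.e1_c]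
  have h4 : ∀ v, e1 K • sg P2s K K 4 v = sg P2s K K 4 v := fun v => by
    ext i; fin_cases i <;> simp [Rep.e1_c]
  have h0 : ∀ v, e2 K • sg Vs K K 0 v = sg Vs K K 0 v := fun v => by
    ext i; fin_cases i <;> simp [Rep.e2_c]
  have h1 : ∀ v, e2 K • sg Vs K K 1 v = sg Vs K K 1 v := fun v => by
    ext i; fin_cases i <;> simp [Rep.e2_c]
  have hc : ∀ x y i, (LinearMap.coprod (lift2 (sg Vs K K 0) h0) (lift2 (sg Vs K K 1) h1) (x, y)).c i =
      ![x.c 0, y.c 0, y.c 1, y.c 3, x.c 3 + y.c 4, x.c 4 + y.c 5] i := fun x y i => by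
    rw [LinearMap.coprod_apply, lift2_apply, lift2_apply]
    fin_cases i <;> simp [Rep.al_c, Rep.ga_c, Rep.be_c]
  have hd : ∀ x i, (lift1 (sg P2s K K 3) h3 x).c i = ![0, x.c 5, x.c 7, x.c 0, x.c 1, x.c 2] i := fun x i => by
    rw [lift1_apply]
    fin_cases i <;> simp [Rep.al_c, Rep.ga_c, Rep.be_c]
  have hd' : ∀ x i, (-lift1 (sg P2s K K 4) h4 x).c i = ![0, 0, -x.c 6, 0, -x.c 0, -x.c 1] i := fun x i => by
    rw [lift1_apply]
    fin_cases i <;> simp [Rep.al_c, Rep.ga_c, Rep.be_c]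
  refine ⟨ModuleCat.of _ (Rep P1s K), ModuleCat.of _ (Rep P2s K × Rep P2s K), LinearMap.prod (lift1 (sg P2s K K 3) h3) (-lift1 (sg P2s K K 4) h4),
    LinearMap.coprod (lift2 (sg Vs K K 0) h0) (lift2 (sg Vs K K 1) h1), proj1, inferInstanceAs (Module.Projective (Rg K) (Rep P2s K × Rep P2s K)), repFinR _,
      inferInstanceAs (Module.Finite (Rg K) (Rep P2s K × Rep P2s K)), ?_, ?_, ?_⟩
  · intro x
    refine ⟨((⟨![x.c 0, 0, 0, 0, 0, 0]⟩ : Rep P2s K), (⟨![x.c 1, x.c 2, 0, x.c 3, x.c 4, x.c 5]⟩ : Rep P2s K)), Rep.ext' fun i => (hc _ _ _).trans ?_⟩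
    fin_cases i <;> simp
  · rintro ⟨x, y⟩
    constructor
    · intro hx
      have hx' : ∀ i, ![x.c 0, y.c 0, y.c 1, y.c 3, x.c 3 + y.c 4, x.c 4 + y.c 5] i = 0 := fun i => by rw [← hc, hx]; rfl
      have a0 := hx' 0
      have a1 := hx' 1
      have a2 := hx' 2
      have a3 := hx' 3
      have a4 := hx' 4
      have a5 := hx' 5
      simp at a0 a1 a2 a3 a4 a5
      refine ⟨(⟨![x.c 3, x.c 4, x.c 5, 0, 0, x.c 1, -y.c 2, x.c 2]⟩ : Rep P1s K), Prod.ext (Rep.ext' fun i => (hd _ _).trans ?_) (Rep.ext' fun i => (hd' _ _).trans ?_)⟩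
      · fin_cases i <;> simp [a0]
      · fin_cases i <;> simp [a1, a2, a3]
        · exact (eq_neg_of_add_eq_zero_right a4).symm
        · exact (eq_neg_of_add_eq_zero_right a5).symm
    · rintro ⟨z, hz⟩
      obtain ⟨rfl, rfl⟩ := Prod.mk.inj hz
      refine Rep.ext' fun i => (hc _ _ _).trans ?_
      rw [LinearMap.neg_apply, hd, hd, hd, hd', hd', hd', hd', hd']
      fin_cases i
      · rfl
      · rfl
      · rfl
      · rfl
      · exact add_neg_cancel _
      · exact add_neg_cancel _
  · intro N _ _ _ _ hD h
    change Rep P1s K →ₗ[Rg K] N at h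
    obtain ⟨m, m', hm⟩ := hD (h (sg P1s K K 0 1))
    obtain ⟨k, hk⟩ := exists_hom2 (e2 K • m) (s_e2e2 _)
    obtain ⟨k', hk'⟩ := exists_hom2 (K := K) (-(e2 K • m')) (by rw [smul_neg, s_e2e2])
    refine ⟨LinearMap.coprod k k', hom1_ext1 ?_⟩
    have t3 : sg P2s K K 3 1 = be K • sg P2s K K 0 1 := by
      ext i; fin_cases i <;> simp [Rep.be_c]
    have t4 : sg P2s K K 4 1 = al K • be K • sg P2s K K 0 1 := by
      ext i; fin_cases i <;> simp [Rep.be_c, Rep.al_c]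
    rw [LinearMap.comp_apply, LinearMap.prod_apply, Function.prod, LinearMap.coprod_apply, LinearMap.neg_apply, lift1_sg, lift1_sg, t3, t4, map_smul, map_neg,
      map_smul, map_smul, hk, hk', smul_neg, smul_neg, neg_neg, s_bee2, s_bee2, hm, ← map_smul, e1_sg1]

theorem exists_rep {n : ℕ} {S : Shape n} (c : Fin n → K) : ∃ x : Rep S K, ∀ i, x.c i = c i := ⟨⟨c⟩, fun _ => rfl⟩

theorem dx_P1 : DX (K := K) (Rep P1s K) := fun n => by
  obtain ⟨x, hx⟩ := exists_rep (S := P1s) ![n.c 5, n.c 6, n.c 7, 0, 0, 0, 0, 0]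
  exact ⟨x, by ext i; fin_cases i <;> simp [Rep.ga_c, Rep.e2_c, hx]⟩
theorem dx_X : DX (K := K) (Rep Xs K) := fun n => by
  obtain ⟨x, hx⟩ := exists_rep (S := Xs) ![0, n.c 2, 0]
  exact ⟨x, by ext i; fin_cases i <;> simp [Rep.ga_c, Rep.e2_c, hx]⟩
theorem dx_Y : DX (K := K) (Rep Ys K) := fun n => ⟨0, by ext i; fin_cases i <;> simp [Rep.ga_c, Rep.e2_c]⟩
theorem dy_X : DY (K := K) (Rep Xs K) := fun n n' => by
  obtain ⟨x, hx⟩ := exists_rep (S := Xs) ![n'.c 2, n.c 2, 0]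
  exact ⟨x, by ext i; fin_cases i <;> simp [Rep.ga_c, Rep.e2_c, hx],
    by ext i; fin_cases i <;> simp [Rep.ga_c, Rep.e2_c, Rep.al_c, hx]⟩
theorem dy_Y : DY (K := K) (Rep Ys K) := fun n n' => ⟨0, by ext i; fin_cases i <;> simp [Rep.ga_c, Rep.e2_c],
    by ext i; fin_cases i <;> simp [Rep.ga_c, Rep.e2_c, Rep.al_c]⟩
theorem dv_P2 : DV (K := K) (Rep P2s K) := fun n => by
  obtain ⟨x, hx⟩ := exists_rep (S := P2s) ![n.c 3, n.c 5, 0, 0, 0, 0]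
  obtain ⟨y, hy⟩ := exists_rep (S := P2s) ![n.c 4, 0, 0, 0, 0, 0]
  exact ⟨x, y, by ext i; fin_cases i <;> simp [Rep.al_c, Rep.be_c, Rep.e1_c, hx, hy]⟩
theorem du_V : DU (K := K) (Rep Vs K) := fun n => by
  obtain ⟨x, hx⟩ := exists_rep (S := Vs) ![n.c 4, n.c 3, n.c 5, 0, 0, 0]
  exact ⟨x, by ext i; fin_cases i <;> simp [Rep.al_c, Rep.be_c, Rep.e1_c, hx]⟩
theorem du_U : DU (K := K) (Rep Us K) := fun n => ⟨0, by ext i; fin_cases i <;> simp [Rep.be_c, Rep.e1_c]⟩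
theorem DU.dv {M : Type} [AddCommGroup M] [Module (Rg K) M] (h : DU (K := K) M) : DV (K := K) M := fun n => by
  obtain ⟨m, hm⟩ := h n
  exact ⟨m, 0, by simp [hm]⟩

theorem trl_P1P2 : TRL K (Rep P1s K × Rep P2s K) :=
  (pr_proj _).trl2 (pr_proj _) trivial trivial trivial trivial
theorem trl_P1X : TRL K (Rep P1s K × Rep Xs K) := (pr_proj _).trl2 pr_X trivial trivial dx_P1 dx_X
theorem trl_XY : TRL K (Rep Xs K × Rep Ys K) := pr_X.trl2 pr_Y dx_X dx_Y dy_X dy_Y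
theorem trl_Y : TRL K (Rep Ys K) := pr_Y.trl dy_Y
theorem trl_P2V : TRL K (Rep P2s K × Rep Vs K) := (pr_proj _).trl2 pr_V trivial trivial dv_P2 du_V.dv
theorem trl_VU : TRL K (Rep Vs K × Rep Us K) := pr_V.trl2 pr_U du_V.dv du_U.dv du_V du_U
theorem trl_U : TRL K (Rep Us K) := pr_U.trl du_U
theorem trl_0 : TRL K PUnit := by
  letI : Module K PUnit := PUnit.module
  haveI : IsScalarTower K (Rg K) PUnit := ⟨fun _ _ _ => rfl⟩
  exact (pr_proj (K := K) PUnit).trl trivial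

end trl

section goodp
variable {K : Type} [Field K]

structure Good (Q : ∀ (N : Type) [AddCommGroup N] [Module (Rg K) N], Prop) : Prop where
  prod : ∀ (M N : Type) [AddCommGroup M] [Module (Rg K) M] [AddCommGroup N] [Module (Rg K) N], Q M → Q N → Q (M × N)
  retr : ∀ {M N : Type} [AddCommGroup M] [Module (Rg K) M] [AddCommGroup N] [Module (Rg K) N] (i : N →ₗ[Rg K] M) (p : M →ₗ[Rg K] N),
    (∀ x, p (i x) = x) → Q M → Q N

def AddL (K : Type) [Field K] (N M : Type) [AddCommGroup M] [Module (Rg K) M] [AddCommGroup N] [Module (Rg K) N] : Prop :=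
  ∃ (ι : Type) (_ : Finite ι) (g : N →ₗ[Rg K] (ι → M)) (h : (ι → M) →ₗ[Rg K] N), ∀ x, h (g x) = x

section addl
variable {M N N' : Type} [AddCommGroup M] [Module (Rg K) M] [AddCommGroup N] [Module (Rg K) N] [AddCommGroup N'] [Module (Rg K) N']

theorem AddL.retr (i : N →ₗ[Rg K] N') (p : N' →ₗ[Rg K] N) (hp : ∀ x, p (i x) = x) (h : AddL K N' M) : AddL K N M := by
  obtain ⟨ι, hι, g, h, hh⟩ := h
  exact ⟨ι, hι, g ∘ₗ i, p ∘ₗ h, fun x => by simp [hh, hp]⟩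

theorem AddL.pi {ι : Type} [Finite ι] (i : N →ₗ[Rg K] M) (p : M →ₗ[Rg K] N) (hp : ∀ x, p (i x) = x) : AddL K (ι → N) M :=
  ⟨ι, inferInstance, LinearMap.compLeft i ι, LinearMap.compLeft p ι, fun x => by ext j; simp [hp]⟩

theorem AddL.prod (h : AddL K N M) (h' : AddL K N' M) : AddL K (N × N') M := by
  obtain ⟨ι, hι, g, h, hh⟩ := h
  obtain ⟨ι', hι', g', h', hh'⟩ := h'
  refine ⟨ι ⊕ ι', inferInstance, (LinearEquiv.sumArrowLequivProdArrow ι ι' (Rg K) M).symm.toLinearMap ∘ₗ LinearMap.prodMap g g',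
    LinearMap.prodMap h h' ∘ₗ (LinearEquiv.sumArrowLequivProdArrow ι ι' (Rg K) M).toLinearMap, fun x => ?_⟩
  simp only [LinearMap.comp_apply, LinearEquiv.coe_coe, LinearEquiv.apply_symm_apply]
  exact Prod.ext (hh _) (hh' _)

theorem AddL.of_sub [Subsingleton N] : AddL K N M :=
  ⟨Fin 0, inferInstance, 0, 0, fun _ => Subsingleton.elim _ _⟩

theorem Good.pi {Q : ∀ (N : Type) [AddCommGroup N] [Module (Rg K) N], Prop} (hQ : Good Q) (h : Q M) (k : ℕ) : Q (Fin k → M) := by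
  induction k with
  | zero => exact hQ.retr (0 : (Fin 0 → M) →ₗ[Rg K] M) 0 (fun x => Subsingleton.elim _ _) h
  | succ k ih =>
    refine hQ.retr (LinearMap.prod (LinearMap.proj 0) (LinearMap.pi fun j => LinearMap.proj (Fin.succ j)))
      (LinearMap.pi (Fin.cons (LinearMap.fst (Rg K) M (Fin k → M)) fun j => LinearMap.proj j ∘ₗ LinearMap.snd (Rg K) M (Fin k → M))) ?_ (hQ.prod M (Fin k → M) h ih)
    intro x
    funext j
    refine Fin.cases ?_ (fun j => ?_) j <;> simp

theorem Good.addL {Q : ∀ (N : Type) [AddCommGroup N] [Module (Rg K) N], Prop} (hQ : Good Q) (h : AddL K N M) (hM : Q M) : Q N := by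
  obtain ⟨ι, hι, g, h, hh⟩ := h
  obtain ⟨k, ⟨e⟩⟩ := Finite.exists_equiv_fin ι
  exact hQ.retr ((LinearEquiv.funCongrLeft (Rg K) M e.symm).toLinearMap ∘ₗ g) (h ∘ₗ (LinearEquiv.funCongrLeft (Rg K) M e).toLinearMap)
    (fun x => by
      have : (LinearEquiv.funCongrLeft (Rg K) M e) ((LinearEquiv.funCongrLeft (Rg K) M e.symm) (g x)) = g x := by
        ext j; simp [LinearEquiv.funCongrLeft]
      simp only [LinearMap.comp_apply, LinearEquiv.coe_coe]
      rw [this, hh]) (hQ.pi hM k)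
end addl

def repPi {n : ℕ} (S : Shape n) (a : ℕ) : Rep S (Fin a → K) ≃ₗ[Rg K] (Fin a → Rep S K) :=
  LinearEquiv.ofBijective (LinearMap.pi fun j => Rep.map S (LinearMap.proj j : (Fin a → K) →ₗ[K] K)) (by
    constructor
    · intro x y h
      refine Rep.ext' fun i => funext fun j => ?_
      exact congrArg (fun z => (z j).c i) h
    · intro y
      exact ⟨⟨fun i j => (y j).c i⟩, rfl⟩)

theorem rep_addL {n : ℕ} (S : Shape n) (a : ℕ) : AddL K (Rep S (Fin a → K)) (Rep S K) :=
  AddL.retr (repPi S a).toLinearMap (repPi S a).symm.toLinearMap (by simp) (AddL.pi LinearMap.id LinearMap.id fun _ => rfl)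

def QA : ∀ (N : Type) [AddCommGroup N] [Module (Rg K) N], Prop := fun N _ _ => ∀ n : N, al K • al K • n = 0
def QB : ∀ (N : Type) [AddCommGroup N] [Module (Rg K) N], Prop := fun N _ _ => ∀ n : N, ga K • be K • ga K • be K • n = 0
def QX : ∀ (N : Type) [AddCommGroup N] [Module (Rg K) N], Prop := fun N _ _ => ∀ n : N, ga K • n = 0 → ∃ m : N, ga K • al K • n = ga K • be K • m
def QY : ∀ (N : Type) [AddCommGroup N] [Module (Rg K) N], Prop := fun N _ _ => ∀ n : N, ga K • n = 0 → ga K • al K • n = 0 → ∃ m : N, e1 K • n = al K • al K • al K • m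
def QV : ∀ (N : Type) [AddCommGroup N] [Module (Rg K) N], Prop := fun N _ _ => ∀ n n' : N, be K • n = al K • be K • n' → ∃ m : N, e2 K • n = ga K • m
def QU : ∀ (N : Type) [AddCommGroup N] [Module (Rg K) N], Prop := fun N _ _ => ∀ n : N, be K • n = 0 → ∃ m : N, e2 K • n = ga K • be K • m

theorem good_DX : Good (K := K) DX where
  prod M N _ _ _ _ h h' := fun ⟨x, y⟩ => by
    obtain ⟨a, ha⟩ := h x
    obtain ⟨b, hb⟩ := h' y
    exact ⟨(a, b), Prod.ext ha hb⟩
  retr i p hp h := fun x => by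
    obtain ⟨a, ha⟩ := h (i x)
    exact ⟨p a, by rw [← map_smul, ha, map_smul, hp]⟩
theorem good_DV : Good (K := K) DV where
  prod M N _ _ _ _ h h' := fun ⟨x, y⟩ => by
    obtain ⟨a, a', ha⟩ := h x
    obtain ⟨b, b', hb⟩ := h' y
    exact ⟨(a, b), (a', b'), Prod.ext ha hb⟩
  retr i p hp h := fun x => by
    obtain ⟨a, a', ha⟩ := h (i x)
    exact ⟨p a, p a', by rw [← map_smul, ← map_smul, ← map_smul, ← map_add, ha, map_smul, hp]⟩
theorem good_QA : Good (K := K) QA where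
  prod M N _ _ _ _ h h' := fun ⟨x, y⟩ => Prod.ext (h x) (h' y)
  retr i p hp h := fun x => by rw [← hp x, ← map_smul, ← map_smul, h, map_zero]
theorem good_QB : Good (K := K) QB where
  prod M N _ _ _ _ h h' := fun ⟨x, y⟩ => Prod.ext (h x) (h' y)
  retr i p hp h := fun x => by rw [← hp x, ← map_smul, ← map_smul, ← map_smul, ← map_smul, h, map_zero]
theorem good_QX : Good (K := K) QX where
  prod M N _ _ _ _ h h' := fun ⟨x, y⟩ hx => by
    obtain ⟨a, ha⟩ := h x (congrArg Prod.fst hx)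
    obtain ⟨b, hb⟩ := h' y (congrArg Prod.snd hx)
    exact ⟨(a, b), Prod.ext ha hb⟩
  retr i p hp h := fun x hx => by
    obtain ⟨a, ha⟩ := h (i x) (by rw [← map_smul, hx, map_zero])
    exact ⟨p a, by rw [← map_smul, ← map_smul, ← ha, map_smul, map_smul, hp]⟩
theorem good_QY : Good (K := K) QY where
  prod M N _ _ _ _ h h' := fun ⟨x, y⟩ hx hx' => by
    obtain ⟨a, ha⟩ := h x (congrArg Prod.fst hx) (congrArg Prod.fst hx')
    obtain ⟨b, hb⟩ := h' y (congrArg Prod.snd hx) (congrArg Prod.snd hx')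
    exact ⟨(a, b), Prod.ext ha hb⟩
  retr i p hp h := fun x hx hx' => by
    obtain ⟨a, ha⟩ := h (i x) (by rw [← map_smul, hx, map_zero]) (by rw [← map_smul, ← map_smul, hx', map_zero])
    exact ⟨p a, by rw [← map_smul, ← map_smul, ← map_smul, ← ha, map_smul, hp]⟩
theorem good_QV : Good (K := K) QV where
  prod M N _ _ _ _ h h' := fun ⟨x, y⟩ ⟨x', y'⟩ hx => by
    obtain ⟨a, ha⟩ := h x x' (congrArg Prod.fst hx)
    obtain ⟨b, hb⟩ := h' y y' (congrArg Prod.snd hx)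
    exact ⟨(a, b), Prod.ext ha hb⟩
  retr i p hp h := fun x x' hx => by
    obtain ⟨a, ha⟩ := h (i x) (i x') (by rw [← map_smul, hx, map_smul, map_smul])
    exact ⟨p a, by rw [← map_smul, ← ha, map_smul, hp]⟩
theorem good_QU : Good (K := K) QU where
  prod M N _ _ _ _ h h' := fun ⟨x, y⟩ hx => by
    obtain ⟨a, ha⟩ := h x (congrArg Prod.fst hx)
    obtain ⟨b, hb⟩ := h' y (congrArg Prod.snd hx)
    exact ⟨(a, b), Prod.ext ha hb⟩
  retr i p hp h := fun x hx => by
    obtain ⟨a, ha⟩ := h (i x) (by rw [← map_smul, hx, map_zero])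
    exact ⟨p a, by rw [← map_smul, ← map_smul, ← ha, map_smul, hp]⟩

theorem cong_c {n : ℕ} {S : Shape n} {x y : Rep S K} (h : x = y) (i : Fin n) : x.c i = y.c i := by rw [h]

theorem dx_P2 : ¬ DX (K := K) (Rep P2s K) := fun h => by
  obtain ⟨m, hm⟩ := h (sg P2s K K 0 1)
  simpa [Rep.ga_c, Rep.e2_c] using cong_c hm 0
theorem dx_V : ¬ DX (K := K) (Rep Vs K) := fun h => by
  obtain ⟨m, hm⟩ := h (sg Vs K K 0 1)
  simpa [Rep.ga_c, Rep.e2_c] using cong_c hm 0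
theorem dv_P1 : ¬ DV (K := K) (Rep P1s K) := fun h => by
  obtain ⟨m, m', hm⟩ := h (sg P1s K K 0 1)
  simpa [Rep.be_c, Rep.al_c, Rep.e1_c] using cong_c hm 0
theorem dv_X : ¬ DV (K := K) (Rep Xs K) := fun h => by
  obtain ⟨m, m', hm⟩ := h (sg Xs K K 0 1)
  simpa [Rep.be_c, Rep.al_c, Rep.e1_c] using cong_c hm 0
theorem qa_X : QA (K := K) (Rep Xs K) := fun n => by ext i; fin_cases i <;> simp [Rep.al_c]
theorem qa_Y : QA (K := K) (Rep Ys K) := fun n => by ext i; fin_cases i <;> simp [Rep.al_c]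
theorem qa_P1 : ¬ QA (K := K) (Rep P1s K) := fun h => by
  simpa [Rep.al_c] using cong_c (h (sg P1s K K 0 1)) 2
theorem qb_V : QB (K := K) (Rep Vs K) := fun n => by ext i; fin_cases i <;> simp [Rep.be_c, Rep.ga_c, Rep.al_c]
theorem qb_U : QB (K := K) (Rep Us K) := fun n => by ext i; fin_cases i <;> simp [Rep.be_c, Rep.ga_c, Rep.al_c]
theorem qb_P2 : ¬ QB (K := K) (Rep P2s K) := fun h => by
  simpa [Rep.be_c, Rep.ga_c, Rep.al_c] using cong_c (h (sg P2s K K 0 1)) 2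
theorem qx_P1 : QX (K := K) (Rep P1s K) := fun n h => by
  have h5 := cong_c h 5
  have h6 := cong_c h 6
  simp [Rep.ga_c] at h5 h6
  exact ⟨0, by ext i; fin_cases i <;> simp [Rep.ga_c, Rep.al_c, h5, h6]⟩
theorem qx_P2 : QX (K := K) (Rep P2s K) := fun n h => by
  obtain ⟨x, hx⟩ := exists_rep (S := P2s) ![0, n.c 4, 0, 0, 0, 0]
  exact ⟨x, by ext i; fin_cases i <;> simp [Rep.ga_c, Rep.al_c, Rep.be_c, hx]⟩
theorem qx_X : ¬ QX (K := K) (Rep Xs K) := fun h => by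
  obtain ⟨m, hm⟩ := h (sg Xs K K 0 1) (by ext i; fin_cases i <;> simp [Rep.ga_c])
  simpa [Rep.ga_c, Rep.al_c, Rep.be_c] using cong_c hm 2
theorem qy_P1 : QY (K := K) (Rep P1s K) := fun n h _ => by
  have h5 := cong_c h 5
  have h6 := cong_c h 6
  have h7 := cong_c h 7
  simp [Rep.ga_c] at h5 h6 h7
  obtain ⟨x, hx⟩ := exists_rep (S := P1s) ![n.c 3, n.c 4, 0, 0, 0, 0, 0, 0]
  exact ⟨x, by ext i; fin_cases i <;> simp [Rep.al_c, Rep.e1_c, h5, h6, h7, hx]⟩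
theorem qy_X : QY (K := K) (Rep Xs K) := fun n h h' => by
  have h5 := cong_c h 2
  have h6 := cong_c h' 2
  simp [Rep.ga_c, Rep.al_c] at h5 h6
  exact ⟨0, by ext i; fin_cases i <;> simp [Rep.al_c, Rep.e1_c, h5, h6]⟩
theorem qy_Y : ¬ QY (K := K) (Rep Ys K) := fun h => by
  obtain ⟨m, hm⟩ := h (sg Ys K K 0 1) (by ext i; fin_cases i <;> simp [Rep.ga_c]) (by ext i; fin_cases i <;> simp [Rep.ga_c])
  simpa [Rep.e1_c, Rep.al_c] using cong_c hm 0
theorem qv_P1 : QV (K := K) (Rep P1s K) := fun n _ _ => by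
  obtain ⟨m, hm⟩ := dx_P1 n
  exact ⟨m, hm.symm⟩
theorem qv_P2 : QV (K := K) (Rep P2s K) := fun n n' h => by
  have h3 := cong_c h 3
  simp [Rep.be_c, Rep.al_c] at h3
  obtain ⟨x, hx⟩ := exists_rep (S := P2s) ![0, 0, 0, n.c 1, 0, n.c 2]
  exact ⟨x, by ext i; fin_cases i <;> simp [Rep.ga_c, Rep.e2_c, h3, hx]⟩
theorem qv_V : ¬ QV (K := K) (Rep Vs K) := fun h => by
  obtain ⟨m, hm⟩ := h (sg Vs K K 0 1) (sg Vs K K 1 1) (by ext i; fin_cases i <;> simp [Rep.be_c, Rep.al_c])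
  simpa [Rep.e2_c, Rep.ga_c] using cong_c hm 0
theorem qu_P2 : QU (K := K) (Rep P2s K) := fun n h => by
  have h3 := cong_c h 3
  have h5 := cong_c h 5
  simp [Rep.be_c] at h3 h5
  obtain ⟨x, hx⟩ := exists_rep (S := P2s) ![0, n.c 2, 0, 0, 0, 0]
  exact ⟨x, by ext i; fin_cases i <;> simp [Rep.ga_c, Rep.be_c, Rep.e2_c, h3, h5, hx]⟩
theorem qu_V : QU (K := K) (Rep Vs K) := fun n h => by
  have h3 := cong_c h 3
  have h4 := cong_c h 4
  have h5 := cong_c h 5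
  simp [Rep.be_c] at h3 h4 h5
  exact ⟨0, by ext i; fin_cases i <;> simp [Rep.e2_c, h3, h4, h5]⟩
theorem qu_U : ¬ QU (K := K) (Rep Us K) := fun h => by
  obtain ⟨m, hm⟩ := h (sg Us K K 0 1) (by ext i; fin_cases i <;> simp [Rep.be_c])
  simpa [Rep.e2_c, Rep.ga_c] using cong_c hm 0

end goodp

section sttl
variable {K : Type} [Field K]

def PairL (K : Type) [Field K] (M P : Type) [AddCommGroup M] [Module (Rg K) M] [AddCommGroup P] [Module (Rg K) P] : Prop :=
  Module.Finite (Rg K) M ∧ TRL K M ∧ Module.Finite (Rg K) P ∧ Module.Projective (Rg K) P ∧ ∀ f : P →ₗ[Rg K] M, f = 0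

def SttL (K : Type) [Field K] (M : Type) [AddCommGroup M] [Module (Rg K) M] : Prop :=
  ∃ P : ModuleCat.{0} (Rg K), PairL K M P ∧ ∀ N Q : ModuleCat.{0} (Rg K), PairL K (M × N) (P × Q) → AddL K N M ∧ AddL K Q P

def BasicL (K : Type) [Field K] (M : Type) [AddCommGroup M] [Module (Rg K) M] : Prop :=
  ∀ N X : ModuleCat.{0} (Rg K), Nonempty (M ≃ₗ[Rg K] (N × N) × X) → Subsingleton N

theorem withK (N : Type) [AddCommGroup N] [Module (Rg K) N] {C : Prop}
    (H : ∀ [Module K N] [IsScalarTower K (Rg K) N], C) : C := by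
  letI : Module K N := Module.compHom N (algebraMap K (Rg K))
  haveI : IsScalarTower K (Rg K) N := ⟨fun c r n => by
    change (c • r) • n = (algebraMap K (Rg K) c) • r • n
    rw [Algebra.smul_def, mul_smul]⟩
  exact H

section a
variable {M M' N T : Type} [AddCommGroup M] [Module (Rg K) M] [AddCommGroup M'] [Module (Rg K) M']
  [AddCommGroup N] [Module (Rg K) N] [AddCommGroup T] [Module (Rg K) T]

theorem TRL.congr (e : M ≃ₗ[Rg K] M') (h : TRL K M) : TRL K M' := by
  obtain ⟨P₁, P₀, f, g, a, b, c, d, hs, he, hr⟩ := h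
  refine ⟨P₁, P₀, f, e.toLinearMap ∘ₗ g, a, b, c, d, e.surjective.comp hs, ?_, ?_⟩
  · intro x
    rw [← he x]
    simp
  · intro h
    obtain ⟨k, hk⟩ := hr (e.symm.toLinearMap ∘ₗ h)
    refine ⟨e.toLinearMap ∘ₗ k, ?_⟩
    rw [LinearMap.comp_assoc, hk]
    ext x; simp

theorem PairL.congr {P P' : Type} [AddCommGroup P] [Module (Rg K) P] [AddCommGroup P'] [Module (Rg K) P']
    (e : M ≃ₗ[Rg K] M') (e' : P ≃ₗ[Rg K] P') (h : PairL K M P) : PairL K M' P' := by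
  obtain ⟨a, b, c, d, h⟩ := h
  refine ⟨Module.Finite.equiv e, b.congr e, Module.Finite.equiv e', Module.Projective.of_equiv e', fun f => ?_⟩
  have := h (e.symm.toLinearMap ∘ₗ f ∘ₗ e'.toLinearMap)
  ext x
  have := LinearMap.congr_fun this (e'.symm x)
  simpa using this

theorem AddL.congr_right (e : M ≃ₗ[Rg K] M') (h : AddL K N M) : AddL K N M' := by
  obtain ⟨ι, hι, g, h, hh⟩ := h
  exact ⟨ι, hι, LinearMap.compLeft e.toLinearMap ι ∘ₗ g, h ∘ₗ LinearMap.compLeft e.symm.toLinearMap ι, fun x => by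
    have : LinearMap.compLeft e.symm.toLinearMap ι (LinearMap.compLeft e.toLinearMap ι (g x)) = g x := by
      ext j; simp
    simp only [LinearMap.comp_apply]
    rw [this, hh]⟩

theorem SttL.congr (e : M ≃ₗ[Rg K] M') (h : SttL K M) : SttL K M' := by
  obtain ⟨P, hP, h⟩ := h
  refine ⟨P, hP.congr e (LinearEquiv.refl _ _), fun N Q hNQ => ?_⟩
  have := h N Q (hNQ.congr (LinearEquiv.prodCongr e.symm (LinearEquiv.refl _ _)) (LinearEquiv.refl _ _))
  exact ⟨this.1.congr_right e, this.2⟩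

theorem BasicL.congr (e : M ≃ₗ[Rg K] M') (h : BasicL K M) : BasicL K M' := fun N X ⟨f⟩ => h N X ⟨e.trans f⟩

/-- projective part -/
theorem kill1 {V1 V2 Q : Type} [AddCommGroup V1] [Module K V1] [AddCommGroup V2] [Module K V2] [AddCommGroup Q] [Module (Rg K) Q]
    (e : Q ≃ₗ[Rg K] Rep P1s V1 × Rep P2s V2) (h : ∀ f : Q →ₗ[Rg K] T, f = 0) (t : T) (ht : e1 K • t ≠ 0) : Subsingleton V1 := by
  refine withK (K := K) T ?_
  intro _ _
  by_contra hc
  rw [not_subsingleton_iff_nontrivial] at hc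
  obtain ⟨v, hv⟩ := exists_ne (0 : V1)
  obtain ⟨ξ, hξ⟩ := exists_dual (K := K) hv
  have hh : ∀ v, e1 K • (ξ.smulRight (e1 K • t)) v = (ξ.smulRight (e1 K • t)) v := by
    intro v
    simp [smul_comm (e1 K)]
  have := LinearMap.congr_fun (h (lift1 _ hh ∘ₗ LinearMap.fst (Rg K) _ _ ∘ₗ e.toLinearMap)) (e.symm (sg P1s K V1 0 v, 0))
  simp [lift1_sg, hξ] at this
  exact ht this

theorem kill2 {V1 V2 Q : Type} [AddCommGroup V1] [Module K V1] [AddCommGroup V2] [Module K V2] [AddCommGroup Q] [Module (Rg K) Q]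
    (e : Q ≃ₗ[Rg K] Rep P1s V1 × Rep P2s V2) (h : ∀ f : Q →ₗ[Rg K] T, f = 0) (t : T) (ht : e2 K • t ≠ 0) : Subsingleton V2 := by
  refine withK (K := K) T ?_
  intro _ _
  by_contra hc
  rw [not_subsingleton_iff_nontrivial] at hc
  obtain ⟨v, hv⟩ := exists_ne (0 : V2)
  obtain ⟨ξ, hξ⟩ := exists_dual (K := K) hv
  have hh : ∀ v, e2 K • (ξ.smulRight (e2 K • t)) v = (ξ.smulRight (e2 K • t)) v := by
    intro v
    simp [smul_comm (e2 K)]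
  have := LinearMap.congr_fun (h (lift2 _ hh ∘ₗ LinearMap.snd (Rg K) _ _ ∘ₗ e.toLinearMap)) (e.symm (0, sg P2s K V2 0 v))
  simp [lift2_sg, hξ] at this
  exact ht this

/-- classification of projectives, with finite-dimensional labels -/
theorem proj_classify' (Q : Type) [AddCommGroup Q] [Module (Rg K) Q] [Module.Finite (Rg K) Q] [Module.Projective (Rg K) Q] :
    Chamber K Q P1s P2s := by
  refine withK (K := K) Q ?_
  intro _ _
  haveI := finK_of_fin K (M := Q)
  obtain ⟨V1, V2, ⟨e⟩⟩ := proj_classify K Q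
  exact chamber_of e

def Sincere (K : Type) [Field K] (T : Type) [AddCommGroup T] [Module (Rg K) T] : Prop :=
  (∃ t : T, e1 K • t ≠ 0) ∧ ∃ t : T, e2 K • t ≠ 0

theorem Sincere.sub (hT : Sincere K T) (Q : Type) [AddCommGroup Q] [Module (Rg K) Q] [Module.Finite (Rg K) Q] [Module.Projective (Rg K) Q]
    (h : ∀ f : Q →ₗ[Rg K] T, f = 0) : Subsingleton Q := by
  obtain ⟨a, b, ⟨e⟩⟩ := proj_classify' (K := K) Q
  obtain ⟨⟨t, ht⟩, ⟨t', ht'⟩⟩ := hT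
  haveI := kill1 e h t ht
  haveI := kill2 e h t' ht'
  exact e.injective.subsingleton

theorem finR_prod_right (h : Module.Finite (Rg K) (M × N)) : Module.Finite (Rg K) N :=
  Module.Finite.of_surjective (LinearMap.snd (Rg K) M N) LinearMap.snd_surjective

theorem proj_prod_right (h : Module.Projective (Rg K) (M × N)) : Module.Projective (Rg K) N :=
  Module.Projective.of_split (LinearMap.inr (Rg K) M N) (LinearMap.snd (Rg K) M N) (by ext x; rfl)

theorem stt_of (P : ModuleCat.{0} (Rg K)) (hp : PairL K T P)
    (hm : ∀ (N : Type) [AddCommGroup N] [Module (Rg K) N], Classified K (T × N) → (∀ f : P →ₗ[Rg K] N, f = 0) → AddL K N T)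
    (hq : ∀ (Q : Type) [AddCommGroup Q] [Module (Rg K) Q] [Module.Finite (Rg K) Q] [Module.Projective (Rg K) Q],
      (∀ f : Q →ₗ[Rg K] T, f = 0) → AddL K Q P) : SttL K T := by
  refine ⟨P, hp, fun N Q ⟨h1, h2, h3, h4, h5⟩ => ⟨?_, ?_⟩⟩
  · refine hm N ?_ ?_
    · refine withK (K := K) (T × N) ?_
      intro _ _
      haveI := finK_of_fin K (M := T × N)
      exact classify h2
    · intro f
      have := h5 (LinearMap.inr (Rg K) T N ∘ₗ f ∘ₗ LinearMap.fst (Rg K) P Q)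
      ext x
      simpa using LinearMap.congr_fun this (x, 0)
  · haveI := finR_prod_right (K := K) h3
    haveI := proj_prod_right (K := K) h4
    refine hq Q fun f => ?_
    have := h5 (LinearMap.inl (Rg K) T N ∘ₗ f ∘ₗ LinearMap.snd (Rg K) P Q)
    ext x
    simpa using LinearMap.congr_fun this (0, x)

theorem stt_sincere [Module.Finite (Rg K) T] (ht : TRL K T) (hs : Sincere K T)
    (hm : ∀ (N : Type) [AddCommGroup N] [Module (Rg K) N], Classified K (T × N) → AddL K N T) : SttL K T := by
  refine stt_of (ModuleCat.of (Rg K) PUnit) ⟨inferInstance, ht, ?_, ?_, ?_⟩ ?_ ?_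
  · exact inferInstanceAs (Module.Finite (Rg K) PUnit)
  · exact inferInstanceAs (Module.Projective (Rg K) PUnit)
  · intro f; ext x; have : x = 0 := Subsingleton.elim (α := PUnit) _ _
    rw [this]; simp
  · intro N _ _ h _; exact hm N h
  · intro Q _ _ _ _ h
    haveI := hs.sub Q h
    exact AddL.of_sub

theorem not_stt {U : Type} [AddCommGroup U] [Module (Rg K) U] [Module.Finite (Rg K) U] [Module.Finite (Rg K) T]
    {Q : ∀ (N : Type) [AddCommGroup N] [Module (Rg K) N], Prop} (hQ : Good Q) (hs : Sincere K T) (ht : TRL K (T × U)) (hT : Q T) (hU : ¬ Q U) : ¬ SttL K T := by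
  rintro ⟨P, ⟨h1, h2, h3, h4, h5⟩, h⟩
  haveI := hs.sub P h5
  refine hU (hQ.addL (h (ModuleCat.of (Rg K) U) P ⟨?_, ht, inferInstance, inferInstance, fun f => ?_⟩).1 hT)
  · exact inferInstanceAs (Module.Finite (Rg K) (T × U))
  · refine LinearMap.ext fun x => ?_
    rw [Subsingleton.elim x 0, map_zero, map_zero]

variable {n m : ℕ} {S : Shape n} {S' : Shape m}
  {Q : ∀ (N : Type) [AddCommGroup N] [Module (Rg K) N], Prop}

theorem Good.rep (hQ : Good Q) (h : Q (Rep S K)) (a : ℕ) : Q (Rep S (Fin a → K)) := hQ.addL (rep_addL S a) h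

theorem excl (hQ : Good Q) (h1 : Q (Rep S K)) (h2 : Q (Rep S' K)) (hc : Chamber K (T × N) S S') : Q T := by
  obtain ⟨a, b, ⟨e⟩⟩ := hc
  exact hQ.retr (e.toLinearMap ∘ₗ LinearMap.inl (Rg K) T N) (LinearMap.fst (Rg K) T N ∘ₗ e.symm.toLinearMap) (by simp)
    (hQ.prod _ _ (hQ.rep h1 a) (hQ.rep h2 b))

theorem Good.fst (hQ : Good Q) (h : Q (M × N)) : Q M :=
  hQ.retr (LinearMap.inl (Rg K) M N) (LinearMap.fst (Rg K) M N) (by simp) h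
theorem Good.snd (hQ : Good Q) (h : Q (M × N)) : Q N :=
  hQ.retr (LinearMap.inr (Rg K) M N) (LinearMap.snd (Rg K) M N) (by simp) h

theorem memb (hc : Chamber K ((Rep S K × Rep S' K) × N) S S') : AddL K N (Rep S K × Rep S' K) := by
  obtain ⟨a, b, ⟨e⟩⟩ := hc
  refine AddL.retr (e.toLinearMap ∘ₗ LinearMap.inr (Rg K) _ N) (LinearMap.snd (Rg K) _ N ∘ₗ e.symm.toLinearMap) (by simp) ?_
  exact AddL.prod
    (AddL.retr (repPi S a).toLinearMap (repPi S a).symm.toLinearMap (by simp) (AddL.pi (LinearMap.inl (Rg K) _ _) (LinearMap.fst (Rg K) _ _) fun _ => rfl))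
    (AddL.retr (repPi S' b).toLinearMap (repPi S' b).symm.toLinearMap (by simp) (AddL.pi (LinearMap.inr (Rg K) _ _) (LinearMap.snd (Rg K) _ _) fun _ => rfl))

theorem rep_zero (hQ : Good Q) {a : ℕ} (h : Q (Rep S (Fin a → K))) (hn : ¬ Q (Rep S K)) : a = 0 := by
  by_contra hc
  obtain ⟨c, rfl⟩ := Nat.exists_eq_succ_of_ne_zero hc
  refine hn (hQ.retr (Rep.map S (LinearMap.single K (fun _ => K) 0)) (Rep.map S (LinearMap.proj 0)) ?_ h)
  intro x
  refine Rep.ext' fun i => ?_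
  simp [Rep.map_c]

theorem chamber_q (hQ : Good Q) (hM : Q M) (hc : Chamber K M S S') (h1 : ¬ Q (Rep S K)) : ∃ b, Nonempty (M ≃ₗ[Rg K] Rep S' (Fin b → K)) := by
  obtain ⟨a, b, ⟨e⟩⟩ := hc
  have := hQ.retr e.symm.toLinearMap e.toLinearMap (by simp) hM
  have h0 := rep_zero hQ (hQ.fst this) h1
  subst h0
  refine ⟨b, ⟨e.trans (LinearEquiv.ofBijective (LinearMap.snd (Rg K) _ _) ⟨?_, LinearMap.snd_surjective⟩)⟩⟩
  rintro ⟨x, y⟩ ⟨x', y'⟩ h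
  exact Prod.ext (Subsingleton.elim _ _) h

theorem chamber_q2 (hQ : Good Q) (hM : Q M) (hc : Chamber K M S S') (h1 : ¬ Q (Rep S K)) (h2 : ¬ Q (Rep S' K)) : Subsingleton M := by
  obtain ⟨b, ⟨e⟩⟩ := chamber_q hQ hM hc h1
  have := hQ.retr e.symm.toLinearMap e.toLinearMap (by simp) hM
  have h0 := rep_zero hQ this h2
  subst h0
  exact e.injective.subsingleton

theorem memb1 {b : ℕ} (e : (Rep S K × N) ≃ₗ[Rg K] Rep S (Fin b → K)) : AddL K N (Rep S K) :=
  AddL.retr (e.toLinearMap ∘ₗ LinearMap.inr (Rg K) _ N) (LinearMap.snd (Rg K) _ N ∘ₗ e.symm.toLinearMap) (by simp) (rep_addL S b)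

theorem rep_nontriv (S : Shape (n+1)) : Nontrivial (Rep S K) :=
  ⟨sg S K K 0 1, 0, fun h => by simpa using cong_c h 0⟩

def splitE (S : Shape n) (c : ℕ) : Rep S (Fin (c+2) → K) ≃ₗ[Rg K] (Rep S K × Rep S K) × (Fin c → Rep S K) :=
  (repPi S (c+2)).trans (((Fin.consLinearEquiv (Rg K) (fun _ : Fin (c+2) => Rep S K)).symm.trans
    (LinearEquiv.prodCongr (LinearEquiv.refl _ _) (Fin.consLinearEquiv (Rg K) (fun _ : Fin (c+1) => Rep S K)).symm)).trans
    (LinearEquiv.prodAssoc (Rg K) _ _ _).symm)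

theorem basic_le {S : Shape (n+1)} {B : Type} [AddCommGroup B] [Module (Rg K) B] {a : ℕ} (h : BasicL K (Rep S (Fin a → K) × B)) : a ≤ 1 := by
  by_contra hc
  obtain ⟨c, rfl⟩ := Nat.exists_eq_add_of_le' (show 2 ≤ a by omega)
  have := h (ModuleCat.of (Rg K) (Rep S K)) (ModuleCat.of (Rg K) ((Fin c → Rep S K) × B))
    ⟨(LinearEquiv.prodCongr (splitE S c) (LinearEquiv.refl _ _)).trans (LinearEquiv.prodAssoc (Rg K) _ _ _)⟩
  haveI hnt := rep_nontriv (K := K) S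
  exact not_subsingleton (Rep S K) this

def rep1E (S : Shape n) : Rep S (Fin 1 → K) ≃ₗ[Rg K] Rep S K := Rep.congr S (LinearEquiv.funUnique (Fin 1) K K)

def prodUniqueE (M B : Type) [AddCommGroup M] [Module (Rg K) M] [AddCommGroup B] [Module (Rg K) B] [Subsingleton B] : (M × B) ≃ₗ[Rg K] M :=
  LinearEquiv.ofBijective (LinearMap.fst (Rg K) _ _) ⟨fun ⟨x, y⟩ ⟨x', y'⟩ h => Prod.ext h (Subsingleton.elim _ _), LinearMap.fst_surjective⟩
def uniqueProdE (M B : Type) [AddCommGroup M] [Module (Rg K) M] [AddCommGroup B] [Module (Rg K) B] [Subsingleton M] : (M × B) ≃ₗ[Rg K] B :=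
  LinearEquiv.ofBijective (LinearMap.snd (Rg K) _ _) ⟨fun ⟨x, y⟩ ⟨x', y'⟩ h => Prod.ext (Subsingleton.elim _ _) h, LinearMap.snd_surjective⟩

theorem chamber_basic {S : Shape (n+1)} {S' : Shape (m+1)} (hc : Chamber K M S S') (hb : BasicL K M) :
    Nonempty (M ≃ₗ[Rg K] PUnit) ∨ Nonempty (M ≃ₗ[Rg K] Rep S K) ∨ Nonempty (M ≃ₗ[Rg K] Rep S' K) ∨
    Nonempty (M ≃ₗ[Rg K] Rep S K × Rep S' K) := by
  obtain ⟨a, b, ⟨e⟩⟩ := hc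
  have ha := basic_le (hb.congr e)
  have hb' := basic_le (hb.congr (e.trans (LinearEquiv.prodComm _ _ _)))
  interval_cases a <;> interval_cases b
  · left
    haveI : Subsingleton M := e.injective.subsingleton
    exact ⟨LinearEquiv.ofBijective (0 : M →ₗ[Rg K] PUnit) ⟨fun x y _ => Subsingleton.elim _ _, fun y => ⟨0, Subsingleton.elim _ _⟩⟩⟩
  · right; right; left
    exact ⟨e.trans ((uniqueProdE _ _).trans (rep1E S'))⟩
  · right; left
    exact ⟨e.trans ((prodUniqueE _ _).trans (rep1E S))⟩
  · right; right; right
    exact ⟨e.trans (LinearEquiv.prodCongr (rep1E S) (rep1E S'))⟩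

end a
end sttl

section list
variable {K : Type} [Field K]

section s
variable {M N : Type} [AddCommGroup M] [Module (Rg K) M] [AddCommGroup N] [Module (Rg K) N]

theorem Sincere.prod_left (h : Sincere K M) : Sincere K (M × N) := by
  obtain ⟨⟨t, ht⟩, ⟨t', ht'⟩⟩ := h
  exact ⟨⟨(t, 0), fun h => ht (congrArg Prod.fst h)⟩, ⟨(t', 0), fun h => ht' (congrArg Prod.fst h)⟩⟩
end s

theorem sinc_P1 : Sincere K (Rep P1s K) :=
  ⟨⟨sg P1s K K 0 1, fun h => by simpa [Rep.e1_c] using cong_c h 0⟩, ⟨sg P1s K K 5 1, fun h => by simpa [Rep.e2_c] using cong_c h 5⟩⟩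
theorem sinc_P2 : Sincere K (Rep P2s K) :=
  ⟨⟨sg P2s K K 3 1, fun h => by simpa [Rep.e1_c] using cong_c h 3⟩, ⟨sg P2s K K 0 1, fun h => by simpa [Rep.e2_c] using cong_c h 0⟩⟩
theorem sinc_X : Sincere K (Rep Xs K) :=
  ⟨⟨sg Xs K K 0 1, fun h => by simpa [Rep.e1_c] using cong_c h 0⟩, ⟨sg Xs K K 2 1, fun h => by simpa [Rep.e2_c] using cong_c h 2⟩⟩
theorem sinc_V : Sincere K (Rep Vs K) :=
  ⟨⟨sg Vs K K 3 1, fun h => by simpa [Rep.e1_c] using cong_c h 3⟩, ⟨sg Vs K K 0 1, fun h => by simpa [Rep.e2_c] using cong_c h 0⟩⟩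

theorem stt_P1P2 : SttL K (Rep P1s K × Rep P2s K) := by
  refine stt_sincere trl_P1P2 sinc_P1.prod_left ?_
  rintro N _ _ (h | h | h | h | h)
  · exact memb h
  · exact absurd (good_DX.snd (excl good_DX dx_P1 dx_X h)) dx_P2
  · exact absurd (good_DX.snd (excl good_DX dx_X dx_Y h)) dx_P2
  · exact absurd (good_DV.fst (excl good_DV dv_P2 du_V.dv h)) dv_P1
  · exact absurd (good_DV.fst (excl good_DV du_V.dv du_U.dv h)) dv_P1

theorem stt_P1X : SttL K (Rep P1s K × Rep Xs K) := by
  refine stt_sincere trl_P1X sinc_P1.prod_left ?_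
  rintro N _ _ (h | h | h | h | h)
  · exact absurd (good_QX.snd (excl good_QX qx_P1 qx_P2 h)) qx_X
  · exact memb h
  · exact absurd (good_QA.fst (excl good_QA qa_X qa_Y h)) qa_P1
  · exact absurd (good_DV.fst (excl good_DV dv_P2 du_V.dv h)) dv_P1
  · exact absurd (good_DV.fst (excl good_DV du_V.dv du_U.dv h)) dv_P1

theorem stt_XY : SttL K (Rep Xs K × Rep Ys K) := by
  refine stt_sincere trl_XY sinc_X.prod_left ?_
  rintro N _ _ (h | h | h | h | h)
  · exact absurd (good_QX.fst (excl good_QX qx_P1 qx_P2 h)) qx_X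
  · exact absurd (good_QY.snd (excl good_QY qy_P1 qy_X h)) qy_Y
  · exact memb h
  · exact absurd (good_DV.fst (excl good_DV dv_P2 du_V.dv h)) dv_X
  · exact absurd (good_DV.fst (excl good_DV du_V.dv du_U.dv h)) dv_X

theorem stt_P2V : SttL K (Rep P2s K × Rep Vs K) := by
  refine stt_sincere trl_P2V sinc_P2.prod_left ?_
  rintro N _ _ (h | h | h | h | h)
  · exact absurd (good_QV.snd (excl good_QV qv_P1 qv_P2 h)) qv_V
  · exact absurd (good_DX.fst (excl good_DX dx_P1 dx_X h)) dx_P2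
  · exact absurd (good_DX.fst (excl good_DX dx_X dx_Y h)) dx_P2
  · exact memb h
  · exact absurd (good_QB.fst (excl good_QB qb_V qb_U h)) qb_P2

theorem stt_VU : SttL K (Rep Vs K × Rep Us K) := by
  refine stt_sincere trl_VU sinc_V.prod_left ?_
  rintro N _ _ (h | h | h | h | h)
  · exact absurd (good_QV.fst (excl good_QV qv_P1 qv_P2 h)) qv_V
  · exact absurd (good_DX.fst (excl good_DX dx_P1 dx_X h)) dx_V
  · exact absurd (good_DX.fst (excl good_DX dx_X dx_Y h)) dx_V
  · exact absurd (good_QU.snd (excl good_QU qu_P2 qu_V h)) qu_U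
  · exact memb h

def E1 : ∀ (N : Type) [AddCommGroup N] [Module (Rg K) N], Prop := fun N _ _ => ∀ n : N, e1 K • n = 0
def E2 : ∀ (N : Type) [AddCommGroup N] [Module (Rg K) N], Prop := fun N _ _ => ∀ n : N, e2 K • n = 0
theorem good_E1 : Good (K := K) E1 where
  prod M N _ _ _ _ h h' := fun ⟨x, y⟩ => Prod.ext (h x) (h' y)
  retr i p hp h := fun x => by rw [← hp x, ← map_smul, h, map_zero]
theorem good_E2 : Good (K := K) E2 where
  prod M N _ _ _ _ h h' := fun ⟨x, y⟩ => Prod.ext (h x) (h' y)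
  retr i p hp h := fun x => by rw [← hp x, ← map_smul, h, map_zero]

theorem Sincere.nE1 {M : Type} [AddCommGroup M] [Module (Rg K) M] (h : Sincere K M) : ¬ E1 (K := K) M := by
  obtain ⟨⟨t, ht⟩, _⟩ := h
  exact fun h => ht (h t)
theorem Sincere.nE2 {M : Type} [AddCommGroup M] [Module (Rg K) M] (h : Sincere K M) : ¬ E2 (K := K) M := by
  obtain ⟨_, ⟨t, ht⟩⟩ := h
  exact fun h => ht (h t)
theorem e2_Y : E2 (K := K) (Rep Ys K) := fun n => by ext i; fin_cases i <;> simp [Rep.e2_c]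
theorem e1_U : E1 (K := K) (Rep Us K) := fun n => by ext i; fin_cases i <;> simp [Rep.e1_c]
theorem e1_Y : ∃ t : Rep Ys K, e1 K • t ≠ 0 := ⟨sg Ys K K 0 1, fun h => by simpa [Rep.e1_c] using cong_c h 0⟩
theorem e2_U : ∃ t : Rep Us K, e2 K • t ≠ 0 := ⟨sg Us K K 0 1, fun h => by simpa [Rep.e2_c] using cong_c h 0⟩

theorem e2_of_hom {N : Type} [AddCommGroup N] [Module (Rg K) N] (h : ∀ f : Rep P2s K →ₗ[Rg K] N, f = 0) : E2 (K := K) N := by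
  intro n
  refine withK (K := K) N ?_
  intro _ _
  obtain ⟨k, hk⟩ := exists_hom2 (K := K) (e2 K • n) (by simp)
  rw [← hk, h k]; rfl
theorem e1_of_hom {N : Type} [AddCommGroup N] [Module (Rg K) N] (h : ∀ f : Rep P1s K →ₗ[Rg K] N, f = 0) : E1 (K := K) N := by
  intro n
  refine withK (K := K) N ?_
  intro _ _
  obtain ⟨k, hk⟩ := exists_hom1 (K := K) (e1 K • n) (by simp)
  rw [← hk, h k]; rfl

theorem hom_e2 {N : Type} [AddCommGroup N] [Module (Rg K) N] (h : E2 (K := K) N) (f : Rep P2s K →ₗ[Rg K] N) : f = 0 := by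
  refine withK (K := K) N ?_
  intro _ _
  refine hom2_ext1 ?_
  rw [LinearMap.zero_apply, ← e2_sg2, map_smul, h]
theorem hom_e1 {N : Type} [AddCommGroup N] [Module (Rg K) N] (h : E1 (K := K) N) (f : Rep P1s K →ₗ[Rg K] N) : f = 0 := by
  refine withK (K := K) N ?_
  intro _ _
  refine hom1_ext1 ?_
  rw [LinearMap.zero_apply, ← e1_sg1, map_smul, h]

theorem not_sub_left {n : ℕ} {S : Shape (n+1)} {N : Type} (h : Subsingleton (Rep S K × N)) (x : N) : False := by
  haveI hnt := rep_nontriv (K := K) S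
  exact not_subsingleton (Rep S K) ⟨fun a b => congrArg Prod.fst (h.elim (a, x) (b, x))⟩

theorem stt_Y : SttL K (Rep Ys K) := by
  refine stt_of (ModuleCat.of (Rg K) (Rep P2s K)) ⟨inferInstance, trl_Y, ?_, ?_, ?_⟩ ?_ ?_
  · exact inferInstanceAs (Module.Finite (Rg K) (Rep P2s K))
  · exact inferInstanceAs (Module.Projective (Rg K) (Rep P2s K))
  · exact hom_e2 e2_Y
  · intro N _ _ h hf
    have hE : E2 (K := K) (Rep Ys K × N) := good_E2.prod _ _ e2_Y (e2_of_hom hf)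
    rcases h with (h | h | h | h | h)
    · exact (not_sub_left (chamber_q2 good_E2 hE h sinc_P1.nE2 sinc_P2.nE2) 0).elim
    · exact (not_sub_left (chamber_q2 good_E2 hE h sinc_P1.nE2 sinc_X.nE2) 0).elim
    · obtain ⟨b, ⟨e⟩⟩ := chamber_q good_E2 hE h sinc_X.nE2
      exact memb1 e
    · exact (not_sub_left (chamber_q2 good_E2 hE h sinc_P2.nE2 sinc_V.nE2) 0).elim
    · refine (not_sub_left (chamber_q2 good_E2 hE h sinc_V.nE2 ?_) 0).elim
      obtain ⟨t, ht⟩ := e2_U (K := K)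
      exact fun h => ht (h t)
  · intro Q _ _ _ _ h
    obtain ⟨a, b, ⟨e⟩⟩ := proj_classify' (K := K) Q
    obtain ⟨t, ht⟩ := e1_Y (K := K)
    haveI := kill1 e h t ht
    exact AddL.retr e.toLinearMap e.symm.toLinearMap (by simp) (AddL.prod AddL.of_sub (rep_addL P2s b))

theorem stt_U : SttL K (Rep Us K) := by
  refine stt_of (ModuleCat.of (Rg K) (Rep P1s K)) ⟨inferInstance, trl_U, ?_, ?_, ?_⟩ ?_ ?_
  · exact inferInstanceAs (Module.Finite (Rg K) (Rep P1s K))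
  · exact inferInstanceAs (Module.Projective (Rg K) (Rep P1s K))
  · exact hom_e1 e1_U
  · intro N _ _ h hf
    have hE : E1 (K := K) (Rep Us K × N) := good_E1.prod _ _ e1_U (e1_of_hom hf)
    rcases h with (h | h | h | h | h)
    · exact (not_sub_left (chamber_q2 good_E1 hE h sinc_P1.nE1 sinc_P2.nE1) 0).elim
    · exact (not_sub_left (chamber_q2 good_E1 hE h sinc_P1.nE1 sinc_X.nE1) 0).elim
    · refine (not_sub_left (chamber_q2 good_E1 hE h sinc_X.nE1 ?_) 0).elim
      obtain ⟨t, ht⟩ := e1_Y (K := K)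
      exact fun h => ht (h t)
    · exact (not_sub_left (chamber_q2 good_E1 hE h sinc_P2.nE1 sinc_V.nE1) 0).elim
    · obtain ⟨b, ⟨e⟩⟩ := chamber_q good_E1 hE h sinc_V.nE1
      exact memb1 e
  · intro Q _ _ _ _ h
    obtain ⟨a, b, ⟨e⟩⟩ := proj_classify' (K := K) Q
    obtain ⟨t, ht⟩ := e2_U (K := K)
    haveI := kill2 e h t ht
    exact AddL.retr e.toLinearMap e.symm.toLinearMap (by simp) (AddL.prod (rep_addL P1s a) AddL.of_sub)

theorem stt_0 : SttL K PUnit := by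
  refine stt_of (ModuleCat.of (Rg K) (Rep P1s K × Rep P2s K)) ⟨inferInstance, trl_0, ?_, ?_, ?_⟩ ?_ ?_
  · exact inferInstanceAs (Module.Finite (Rg K) (Rep P1s K × Rep P2s K))
  · exact inferInstanceAs (Module.Projective (Rg K) (Rep P1s K × Rep P2s K))
  · exact fun f => LinearMap.ext fun x => Subsingleton.elim _ _
  · intro N _ _ h hf
    have h1 : E1 (K := K) N := e1_of_hom fun f => by
      have := hf (f ∘ₗ LinearMap.fst (Rg K) (Rep P1s K) (Rep P2s K))
      refine LinearMap.ext fun x => ?_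
      exact LinearMap.congr_fun this (x, 0)
    have h2 : E2 (K := K) N := e2_of_hom fun f => by
      have := hf (f ∘ₗ LinearMap.snd (Rg K) (Rep P1s K) (Rep P2s K))
      refine LinearMap.ext fun x => ?_
      exact LinearMap.congr_fun this (0, x)
    haveI : Subsingleton N := ⟨fun x y => by
      rw [← s_one (K := K) x, ← s_one (K := K) y, h1, h2, h1, h2]⟩
    exact AddL.of_sub
  · intro Q _ _ _ _ h
    obtain ⟨a, b, ⟨e⟩⟩ := proj_classify' (K := K) Q
    exact AddL.retr e.toLinearMap e.symm.toLinearMap (by simp) (AddL.prod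
    (AddL.retr (repPi P1s a).toLinearMap (repPi P1s a).symm.toLinearMap (by simp) (AddL.pi (LinearMap.inl (Rg K) _ _) (LinearMap.fst (Rg K) _ _) fun _ => rfl))
    (AddL.retr (repPi P2s b).toLinearMap (repPi P2s b).symm.toLinearMap (by simp) (AddL.pi (LinearMap.inr (Rg K) _ _) (LinearMap.snd (Rg K) _ _) fun _ => rfl)))

theorem not_P1 : ¬ SttL K (Rep P1s K) := not_stt good_QX sinc_P1 trl_P1X qx_P1 qx_X
theorem not_P2 : ¬ SttL K (Rep P2s K) := not_stt good_QV sinc_P2 trl_P2V qv_P2 qv_V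
theorem not_X : ¬ SttL K (Rep Xs K) := not_stt good_QY sinc_X trl_XY qy_X qy_Y
theorem not_V : ¬ SttL K (Rep Vs K) := not_stt good_QU sinc_V trl_VU qu_V qu_U

variable (K) in
def lst : Fin 8 → ModuleCat.{0} (Rg K) := ![ModuleCat.of (Rg K) (Rep P1s K × Rep P2s K), ModuleCat.of (Rg K) (Rep P1s K × Rep Xs K),
  ModuleCat.of (Rg K) (Rep Xs K × Rep Ys K), ModuleCat.of (Rg K) (Rep Ys K), ModuleCat.of (Rg K) (Rep P2s K × Rep Vs K),
  ModuleCat.of (Rg K) (Rep Vs K × Rep Us K), ModuleCat.of (Rg K) (Rep Us K), ModuleCat.of (Rg K) PUnit]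

theorem complete (M : Type) [AddCommGroup M] [Module (Rg K) M] (hM : SttL K M) (hb : BasicL K M) :
    ∃ i, Nonempty (M ≃ₗ[Rg K] lst K i) := by
  have hc : Classified K M := by
    obtain ⟨P, ⟨h1, h2, _⟩, _⟩ := hM
    refine withK (K := K) M ?_
    intro _ _
    haveI := finK_of_fin K (M := M)
    exact classify h2
  rcases hc with (h | h | h | h | h)
  · rcases chamber_basic h hb with h | ⟨⟨e⟩⟩ | ⟨⟨e⟩⟩ | h
    · exact ⟨7, h⟩
    · exact (not_P1 (hM.congr e)).elim
    · exact (not_P2 (hM.congr e)).elim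
    · exact ⟨0, h⟩
  · rcases chamber_basic h hb with h | ⟨⟨e⟩⟩ | ⟨⟨e⟩⟩ | h
    · exact ⟨7, h⟩
    · exact (not_P1 (hM.congr e)).elim
    · exact (not_X (hM.congr e)).elim
    · exact ⟨1, h⟩
  · rcases chamber_basic h hb with h | ⟨⟨e⟩⟩ | h | h
    · exact ⟨7, h⟩
    · exact (not_X (hM.congr e)).elim
    · exact ⟨3, h⟩
    · exact ⟨2, h⟩
  · rcases chamber_basic h hb with h | ⟨⟨e⟩⟩ | ⟨⟨e⟩⟩ | h
    · exact ⟨7, h⟩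
    · exact (not_P2 (hM.congr e)).elim
    · exact (not_V (hM.congr e)).elim
    · exact ⟨4, h⟩
  · rcases chamber_basic h hb with h | ⟨⟨e⟩⟩ | h | h
    · exact ⟨7, h⟩
    · exact (not_V (hM.congr e)).elim
    · exact ⟨6, h⟩
    · exact ⟨5, h⟩

theorem stt_lst (i : Fin 8) : SttL K (lst K i) := by
  fin_cases i
  exacts [stt_P1P2, stt_P1X, stt_XY, stt_Y, stt_P2V, stt_VU, stt_U, stt_0]

theorem lst_dim (i : Fin 8) (N : Type) [AddCommGroup N] [Module (Rg K) N] [Module K N] [IsScalarTower K (Rg K) N]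
    (e : N ≃ₗ[Rg K] lst K i) : Module.finrank K N = ![14, 11, 5, 2, 12, 7, 1, 0] i := by
  have key2 : ∀ {n m : ℕ} (S : Shape n) (S' : Shape m), (N ≃ₗ[Rg K] Rep S K × Rep S' K) → Module.finrank K N = n + m := by
    intro n m S S' e
    rw [LinearEquiv.finrank_eq (e.restrictScalars K), Module.finrank_prod, repK_finrank, repK_finrank]
    simp
  have key1 : ∀ {n : ℕ} (S : Shape n), (N ≃ₗ[Rg K] Rep S K) → Module.finrank K N = n := by
    intro n S e
    rw [LinearEquiv.finrank_eq (e.restrictScalars K), repK_finrank]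
    simp
  fin_cases i
  · exact key2 P1s P2s e
  · exact key2 P1s Xs e
  · exact key2 Xs Ys e
  · exact key1 Ys e
  · exact key2 P2s Vs e
  · exact key2 Vs Us e
  · exact key1 Us e
  · haveI : Subsingleton N := Function.Injective.subsingleton (β := PUnit) e.injective
    exact Module.finrank_zero_of_subsingleton

theorem lst_inj (i j : Fin 8) (h : Nonempty (lst K i ≃ₗ[Rg K] lst K j)) : i = j := by
  obtain ⟨e⟩ := h
  refine withK (K := K) (lst K i) ?_
  intro _ _
  have h1 := lst_dim i (lst K i) (LinearEquiv.refl _ _)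
  have h2 := lst_dim j (lst K i) e
  rw [h1] at h2
  exact (by decide : ∀ i j : Fin 8, (![14, 11, 5, 2, 12, 7, 1, 0] : Fin 8 → ℕ) i = (![14, 11, 5, 2, 12, 7, 1, 0] : Fin 8 → ℕ) j → i = j) i j h2
end list

section basic
variable {K : Type} [Field K]

theorem comb {T : Type} [AddCommGroup T] [Module K T] (l : T →ₗ[K] K) (a b : T) :
    ∃ c c' : K, (c ≠ 0 ∨ c' ≠ 0) ∧ l (c • a + c' • b) = 0 := by
  by_cases h : l b = 0
  · exact ⟨0, 1, Or.inr one_ne_zero, by simp [h]⟩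
  · exact ⟨l b, - l a, Or.inl h, by simp [mul_comm]⟩

theorem inJ_Ksmul {N : Type} [AddCommGroup N] [Module (Rg K) N] [Module K N] [IsScalarTower K (Rg K) N] (c : K) {x : N} (h : inJ K x) : inJ K (c • x) := by
  obtain ⟨a, b, d, rfl⟩ := h
  refine ⟨c • a, c • b, c • d, ?_⟩
  rw [smul_add, smul_add, smul_comm c (al K), smul_comm c (ga K), smul_comm c (be K)]

/-- functorial subsets -/
structure Fun (H : ∀ (N : Type) [AddCommGroup N] [Module (Rg K) N], N → Prop) : Prop where
  map : ∀ {M N : Type} [AddCommGroup M] [Module (Rg K) M] [AddCommGroup N] [Module (Rg K) N] (f : M →ₗ[Rg K] N) (m : M), H M m → H N (f m)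
  sm : ∀ {M : Type} [AddCommGroup M] [Module (Rg K) M] [Module K M] [IsScalarTower K (Rg K) M] (c : K) (m : M), H M m → H M (c • m)

theorem Fun.step {H : ∀ (N : Type) [AddCommGroup N] [Module (Rg K) N], N → Prop} (hH : Fun H)
    {T N X : Type} [AddCommGroup T] [Module (Rg K) T] [Module K T] [IsScalarTower K (Rg K) T]
    [AddCommGroup N] [Module (Rg K) N] [Module K N] [IsScalarTower K (Rg K) N] [AddCommGroup X] [Module (Rg K) X]
    (e : T ≃ₗ[Rg K] (N × N) × X) (l : T →ₗ[K] K) (x : Rg K) (h : ∀ m : T, l m = 0 → x • m = 0 → H T m) (n : N) (hn : x • n = 0) : H N n := by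
  obtain ⟨c, c', hc, h0⟩ := comb l (e.symm ((n, 0), 0)) (e.symm ((0, n), 0))
  have h1 := h _ h0 (by
    have ha : x • e.symm ((n, 0), 0) = 0 := by rw [← map_smul]; simp [hn]
    have hb : x • e.symm ((0, n), 0) = 0 := by rw [← map_smul]; simp [hn]
    rw [smul_add, smul_comm x, smul_comm x, ha, hb, smul_zero, smul_zero, add_zero])
  rcases hc with hc | hc
  · have h2 := hH.sm c⁻¹ _ (hH.map (LinearMap.fst (Rg K) N N ∘ₗ LinearMap.fst (Rg K) (N × N) X ∘ₗ e.toLinearMap) _ h1)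
    rw [map_add, hom_K_smul, hom_K_smul] at h2
    simpa [hc] using h2
  · have h2 := hH.sm c'⁻¹ _ (hH.map (LinearMap.snd (Rg K) N N ∘ₗ LinearMap.fst (Rg K) (N × N) X ∘ₗ e.toLinearMap) _ h1)
    rw [map_add, hom_K_smul, hom_K_smul] at h2
    simpa [hc] using h2

theorem fun_J : Fun (K := K) (fun N _ _ n => inJ K n) where
  map f m h := inJ_map h f
  sm c m h := inJ_Ksmul c h

theorem fun_H (x : Rg K) : Fun (K := K) (fun N _ _ n => ∃ j : N, inJ K j ∧ x • (n - j) = 0) where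
  map f m := fun ⟨j, hj, h⟩ => ⟨f j, inJ_map hj f, by rw [← map_sub, ← map_smul, h, map_zero]⟩
  sm c m := fun ⟨j, hj, h⟩ => ⟨c • j, inJ_Ksmul c hj, by rw [← smul_sub, smul_comm, h, smul_zero]⟩

theorem basic3 {T : Type} [AddCommGroup T] [Module (Rg K) T] [Module K T] [IsScalarTower K (Rg K) T]
    (x y : Rg K) (l1 l2 l3 : T →ₗ[K] K)
    (h1 : ∀ m : T, l1 m = 0 → ∃ j : T, inJ K j ∧ x • (m - j) = 0)
    (h2 : ∀ m : T, l2 m = 0 → x • m = 0 → ∃ j : T, inJ K j ∧ y • (m - j) = 0)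
    (h3 : ∀ m : T, l3 m = 0 → y • m = 0 → inJ K m) : BasicL K T := by
  rintro N X ⟨e⟩
  refine withK (K := K) N ?_
  intro _ _
  have hJ : ∀ n : N, inJ K n := by
    intro n
    obtain ⟨j, hj, hn⟩ := (fun_H x).step e l1 0 (fun m h _ => h1 m h) n (by simp)
    obtain ⟨j', hj', hn'⟩ := (fun_H y).step e l2 x h2 (n - j) hn
    have := fun_J.step e l3 y h3 (n - j - j') hn'
    have := inJ_add (inJ_add this hj') hj
    simpa using this
  exact ⟨fun a b => by rw [nakayama K hJ a, nakayama K hJ b]⟩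

theorem basic2 {T : Type} [AddCommGroup T] [Module (Rg K) T] [Module K T] [IsScalarTower K (Rg K) T]
    (x : Rg K) (l1 l3 : T →ₗ[K] K)
    (h1 : ∀ m : T, l1 m = 0 → ∃ j : T, inJ K j ∧ x • (m - j) = 0)
    (h3 : ∀ m : T, l3 m = 0 → x • m = 0 → inJ K m) : BasicL K T :=
  basic3 x x l1 0 l3 h1 (fun m _ h => ⟨0, inJ_zero, by simpa using h⟩) h3

theorem basic1 {T : Type} [AddCommGroup T] [Module (Rg K) T] [Module K T] [IsScalarTower K (Rg K) T]
    (l : T →ₗ[K] K) (h : ∀ m : T, l m = 0 → inJ K m) : BasicL K T :=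
  basic2 0 0 l (fun m _ => ⟨0, inJ_zero, by simp⟩) (fun m h' _ => h m h')

def cf {n : ℕ} (S : Shape n) (i : Fin n) : Rep S K →ₗ[K] K := LinearMap.proj i ∘ₗ (repKEquiv S K K).toLinearMap
@[simp] theorem cf_apply {n : ℕ} (S : Shape n) (i : Fin n) (x : Rep S K) : cf S i x = x.c i := rfl

theorem j_P1 {x : Rep P1s K} (h : x.c 0 = 0) : inJ K x := by
  have := rep1_J K x
  rwa [h, map_zero, sub_zero] at this
theorem j_P2 {x : Rep P2s K} (h : x.c 0 = 0) : inJ K x := by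
  have := rep2_J K x
  rwa [h, map_zero, sub_zero] at this
theorem j_X {x : Rep Xs K} (h : x.c 0 = 0) : inJ K x := by
  obtain ⟨u, hu⟩ := exists_rep (S := Xs) ![x.c 1, 0, 0]
  obtain ⟨v, hv⟩ := exists_rep (S := Xs) ![0, x.c 2, 0]
  refine ⟨u, v, 0, ?_⟩
  ext i; fin_cases i <;> simp [Rep.al_c, Rep.ga_c, hu, hv, h]
theorem j_Y {x : Rep Ys K} (h : x.c 0 = 0) : inJ K x := by
  obtain ⟨u, hu⟩ := exists_rep (S := Ys) ![x.c 1, 0]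
  refine ⟨u, 0, 0, ?_⟩
  ext i; fin_cases i <;> simp [Rep.al_c, hu, h]
theorem j_U {x : Rep Us K} (h : x.c 0 = 0) : inJ K x := by
  refine ⟨0, 0, 0, ?_⟩
  ext i; fin_cases i; simp [h]
theorem j_V {x : Rep Vs K} (h : x.c 0 = 0) (h' : x.c 1 = 0) : inJ K x := by
  obtain ⟨u, hu⟩ := exists_rep (S := Vs) ![0, 0, 0, 0, x.c 5, 0]
  obtain ⟨v, hv⟩ := exists_rep (S := Vs) ![0, 0, 0, x.c 2, 0, 0]
  obtain ⟨w, hw⟩ := exists_rep (S := Vs) ![x.c 4, x.c 3, 0, 0, 0, 0]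
  refine ⟨u, v, w, ?_⟩
  ext i; fin_cases i <;> simp [Rep.al_c, Rep.ga_c, Rep.be_c, hu, hv, hw, h, h']

theorem bas_P1P2 : BasicL K (Rep P1s K × Rep P2s K) := by
  refine basic2 (e1 K) (cf P1s 0 ∘ₗ LinearMap.fst K _ _) (cf P2s 0 ∘ₗ LinearMap.snd K _ _) ?_ ?_
  · rintro ⟨p, q⟩ h
    simp at h
    refine ⟨(p, e1 K • q), inJ_prod (j_P1 h) (j_P2 (by simp [Rep.e1_c])), ?_⟩
    exact Prod.ext (by simp) (by simp [smul_sub])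
  · rintro ⟨p, q⟩ h h'
    simp at h
    have := cong_c (congrArg Prod.fst h') 0
    simp [Rep.e1_c] at this
    exact inJ_prod (j_P1 this) (j_P2 h)

theorem bas_P1X : BasicL K (Rep P1s K × Rep Xs K) := by
  refine basic2 (ga K) (cf P1s 0 ∘ₗ LinearMap.fst K _ _) (cf Xs 0 ∘ₗ LinearMap.snd K _ _) ?_ ?_
  · rintro ⟨p, q⟩ h
    simp at h
    refine ⟨(p, q - sg Xs K K 0 (q.c 0)), inJ_prod (j_P1 h) (j_X (by simp)), ?_⟩
    refine Prod.ext (by simp) ?_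
    ext i; fin_cases i <;> simp [Rep.ga_c]
  · rintro ⟨p, q⟩ h h'
    simp at h
    have := cong_c (congrArg Prod.fst h') 5
    simp [Rep.ga_c] at this
    exact inJ_prod (j_P1 this) (j_X h)

theorem bas_XY : BasicL K (Rep Xs K × Rep Ys K) := by
  refine basic2 (ga K * al K) (cf Xs 0 ∘ₗ LinearMap.fst K _ _) (cf Ys 0 ∘ₗ LinearMap.snd K _ _) ?_ ?_
  · rintro ⟨p, q⟩ h
    simp at h
    refine ⟨(p, q - sg Ys K K 0 (q.c 0)), inJ_prod (j_X h) (j_Y (by simp)), ?_⟩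
    refine Prod.ext (by simp) ?_
    ext i; fin_cases i <;> simp [mul_smul, Rep.ga_c, Rep.al_c]
  · rintro ⟨p, q⟩ h h'
    simp at h
    have := cong_c (congrArg Prod.fst h') 2
    simp [mul_smul, Rep.ga_c, Rep.al_c] at this
    exact inJ_prod (j_X this) (j_Y h)

theorem bas_Y : BasicL K (Rep Ys K) := basic1 (cf Ys 0) fun m h => j_Y h
theorem bas_U : BasicL K (Rep Us K) := basic1 (cf Us 0) fun m h => j_U h
theorem bas_0 : BasicL K PUnit := fun N X ⟨e⟩ =>
  ⟨fun a b => congrArg (fun z => z.1.1) (e.symm.injective (Subsingleton.elim (e.symm ((a, 0), 0)) (e.symm ((b, 0), 0))))⟩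

theorem bas_P2V : BasicL K (Rep P2s K × Rep Vs K) := by
  refine basic3 (ga K * be K * ga K * be K) (ga K * be K) (cf P2s 0 ∘ₗ LinearMap.fst K _ _) (cf Vs 1 ∘ₗ LinearMap.snd K _ _) (cf Vs 0 ∘ₗ LinearMap.snd K _ _) ?_ ?_ ?_
  · rintro ⟨p, q⟩ h
    simp at h
    refine ⟨(p, 0), inJ_prod (j_P2 h) inJ_zero, ?_⟩
    refine Prod.ext (by simp) ?_
    simp only [Prod.smul_snd, Prod.snd_sub, Prod.snd_zero, mul_smul, sub_zero]
    exact qb_V q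
  · rintro ⟨p, q⟩ h h'
    simp at h
    have := cong_c (congrArg Prod.fst h') 2
    simp [mul_smul, Rep.ga_c, Rep.be_c, Rep.al_c] at this
    refine ⟨(p, 0), inJ_prod (j_P2 this) inJ_zero, ?_⟩
    refine Prod.ext (by simp) ?_
    ext i; fin_cases i <;> simp [mul_smul, Rep.ga_c, Rep.be_c, h]
  · rintro ⟨p, q⟩ h h'
    simp at h
    have h1 := cong_c (congrArg Prod.fst h') 1
    have h2 := cong_c (congrArg Prod.snd h') 2
    simp [mul_smul, Rep.ga_c, Rep.be_c] at h1 h2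
    exact inJ_prod (j_P2 h1) (j_V h h2)

theorem bas_VU : BasicL K (Rep Vs K × Rep Us K) := by
  refine basic3 (ga K * be K) (be K) (cf Vs 1 ∘ₗ LinearMap.fst K _ _) (cf Vs 0 ∘ₗ LinearMap.fst K _ _) (cf Us 0 ∘ₗ LinearMap.snd K _ _) ?_ ?_ ?_
  · rintro ⟨p, q⟩ h
    simp at h
    refine ⟨0, inJ_zero, Prod.ext ?_ ?_⟩
    · ext i; fin_cases i <;> simp [mul_smul, Rep.ga_c, Rep.be_c, h]
    · ext i; fin_cases i; simp [mul_smul, Rep.ga_c, Rep.be_c]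
  · rintro ⟨p, q⟩ h h'
    simp at h
    have h2 := cong_c (congrArg Prod.fst h') 2
    simp [mul_smul, Rep.ga_c, Rep.be_c] at h2
    refine ⟨(p, 0), inJ_prod (j_V h h2) inJ_zero, Prod.ext (by simp) ?_⟩
    ext i; fin_cases i; simp [Rep.be_c]
  · rintro ⟨p, q⟩ h h'
    simp at h
    have h3 := cong_c (congrArg Prod.fst h') 3
    have h4 := cong_c (congrArg Prod.fst h') 4
    simp [Rep.be_c] at h3 h4
    exact inJ_prod (j_V h4 h3) (j_U h)

theorem bas_lst (i : Fin 8) : BasicL K (lst K i) := by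
  fin_cases i
  exacts [bas_P1P2, bas_P1X, bas_XY, bas_Y, bas_P2V, bas_VU, bas_U, bas_0]
end basic

section bridge
variable {K : Type} [Field K]

theorem trl_iff (M : ModCat (Rg K)) : IsTauRigidMod M ↔ TRL K M := by
  constructor
  · rintro ⟨P₁, P₀, f, g, a, b, c, d, hs, he, hr⟩
    refine ⟨P₁, P₀, f.hom, g.hom, (IsProjective.iff_projective P₁).2 a, (IsProjective.iff_projective P₀).2 b, c, d, hs, he, fun h => ?_⟩
    obtain ⟨k, hk⟩ := hr (ModuleCat.ofHom h)
    exact ⟨k.hom, by rw [← ModuleCat.hom_comp, hk]; rfl⟩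
  · rintro ⟨P₁, P₀, f, g, a, b, c, d, hs, he, hr⟩
    refine ⟨P₁, P₀, ModuleCat.ofHom f, ModuleCat.ofHom g, (IsProjective.iff_projective P₁).1 a, (IsProjective.iff_projective P₀).1 b, c, d, hs, he, fun h => ?_⟩
    obtain ⟨k, hk⟩ := hr h.hom
    exact ⟨ModuleCat.ofHom k, by rw [← ModuleCat.ofHom_hom h, ← hk]; rfl⟩

theorem pair_iff (M P : ModCat (Rg K)) : IsTauRigidPairMod M P ↔ PairL K M P := by
  unfold IsTauRigidPairMod PairL
  rw [trl_iff, ← IsProjective.iff_projective P]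
  refine and_congr Iff.rfl (and_congr Iff.rfl (and_congr Iff.rfl (and_congr Iff.rfl ⟨fun h f => ?_, fun h f => ?_⟩)))
  · have := h (ModuleCat.ofHom f)
    exact congrArg ModuleCat.Hom.hom this
  · exact ModuleCat.hom_ext (h f.hom)

theorem add_iff (N M : ModCat (Rg K)) : MemAddMod N M ↔ AddL K N M := by
  constructor
  · rintro ⟨k, g, h, hh⟩
    let e := (ModuleCat.biproductIsoPi (fun _ : Fin k => M)).toLinearEquiv
    refine ⟨Fin k, inferInstance, e.toLinearMap ∘ₗ g.hom, h.hom ∘ₗ e.symm.toLinearMap, fun x => ?_⟩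
    have := LinearMap.congr_fun (congrArg ModuleCat.Hom.hom hh) x
    simpa using this
  · rintro ⟨ι, hι, g, h, hh⟩
    obtain ⟨k, ⟨q⟩⟩ := Finite.exists_equiv_fin ι
    let e := (ModuleCat.biproductIsoPi (fun _ : Fin k => M)).toLinearEquiv
    let e' : (ι → M) ≃ₗ[Rg K] (Fin k → M) := LinearEquiv.funCongrLeft (Rg K) M q.symm
    refine ⟨k, ModuleCat.ofHom (e.symm.toLinearMap ∘ₗ e'.toLinearMap ∘ₗ g), ModuleCat.ofHom (h ∘ₗ e'.symm.toLinearMap ∘ₗ e.toLinearMap), ?_⟩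
    ext x
    simp [hh]

def biE (M N : ModCat (Rg K)) : (M ⊞ N : ModCat (Rg K)) ≃ₗ[Rg K] M × N := (ModuleCat.biprodIsoProd M N).toLinearEquiv

theorem stt_iff (M : ModCat (Rg K)) : IsSupportTauTiltingMod M ↔ SttL K M := by
  unfold IsSupportTauTiltingMod SttL
  refine exists_congr fun P => and_congr (pair_iff M P) (forall_congr' fun N => forall_congr' fun Q => ?_)
  rw [pair_iff, add_iff, add_iff]
  refine imp_congr ⟨fun h => h.congr (biE _ _) (biE _ _), fun h => h.congr (biE _ _).symm (biE _ _).symm⟩ Iff.rfl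

theorem basic_iff (M : ModCat (Rg K)) : IsBasicMod M ↔ BasicL K M := by
  unfold IsBasicMod BasicL
  refine forall_congr' fun N => forall_congr' fun X => ?_
  let e : ((N ⊞ N) ⊞ X : ModCat (Rg K)) ≃ₗ[Rg K] (N × N) × X :=
    (biE (N ⊞ N) X).trans (LinearEquiv.prodCongr (biE N N) (LinearEquiv.refl _ _))
  refine imp_congr ⟨fun ⟨f⟩ => ⟨f.toLinearEquiv.trans e⟩, fun ⟨f⟩ => ⟨(f.trans e.symm).toModuleIso⟩⟩ ?_
  exact ⟨fun h => ModuleCat.subsingleton_of_isZero h, fun h => ModuleCat.isZero_of_subsingleton N⟩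

theorem main_count (K : Type) [Field K] : SupportTauTiltingCount (A5 K)ᵐᵒᵖ 8 :=
  ⟨lst K, fun i => ⟨(stt_iff _).2 (stt_lst i), (basic_iff _).2 (bas_lst i)⟩,
    fun i j ⟨e⟩ => lst_inj i j ⟨e.toLinearEquiv⟩,
    fun M h1 h2 => by
      obtain ⟨i, ⟨e⟩⟩ := complete (K := K) M ((stt_iff M).1 h1) ((basic_iff M).1 h2)
      exact ⟨i, ⟨e.toModuleIso⟩⟩⟩
end bridge

/-- appendix of the paper.  The weakly symmetric algebra
`A₅` of tubular type (quiver with vertices `1, 2`, a loop `α` at `1`, arrows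
`γ : 1 → 2` and `β : 2 → 1`, bound by `α² = γβ` and `βαγ = 0`) has exactly `8`
isomorphism classes of basic support τ-tilting (right) modules. -/
theorem A5_has_exactly_eight_support_tau_tilting_modules
    (K : Type) [Field K] [IsAlgClosed K] (l : K) (hl0 : l ≠ 0) (hl1 : l ≠ 1) :
    SupportTauTiltingCount (A5 K)ᵐᵒᵖ 8 := by
  exact main_count K

end PaperSilting
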